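/- arXiv:2002.02128 — 2 statements merged into one kernel-verified Lean document; each statement's English description precedes it below -/
import Mathlib

section
/- Let D be a principal ideal domain, R a polynomial ring in finitely many variables over D, A an 𝔸ⁿ-fibration over R, and W = (W₁,…,W_m) an m-tuple residual variable of A over R. Then A is a stably polynomial algebra over R[W]; that is, there exist r, s ∈ ℕ and an R[W]-algebra isomorphism between the polynomial ring in r variables over A and the polynomial ring in s variables over R[W]. -/
open TensorProduct

noncomputable section

/-- The residue field `κ(P) = R_P / P R_P` of a commutative ring `R` at a prime ideal `P`. -/
abbrev ResidueFieldAt (R : Type*) [CommRing R] (P : Ideal R) [P.IsPrime] : Type _ :=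
  IsLocalRing.ResidueField (Localization.AtPrime P)

/-- `A ⊗_R κ(P)` is a polynomial ring in `n` variables over `B ⊗_R κ(P)`
for every prime ideal `P` of `R`. -/
def FibersPolynomialOver (R B A : Type*) [CommRing R] [CommRing B] [CommRing A]
    [Algebra R B] [Algebra R A] [Algebra B A] [IsScalarTower R B A] (n : ℕ) : Prop :=
  ∀ (P : Ideal R) (_ : P.IsPrime),
    letI : Algebra (ResidueFieldAt R P ⊗[R] B) (ResidueFieldAt R P ⊗[R] A) :=
      (Algebra.TensorProduct.map (AlgHom.id R (ResidueFieldAt R P))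
        (IsScalarTower.toAlgHom R B A)).toRingHom.toAlgebra
    Nonempty ((ResidueFieldAt R P ⊗[R] A) ≃ₐ[ResidueFieldAt R P ⊗[R] B]
      MvPolynomial (Fin n) (ResidueFieldAt R P ⊗[R] B))

/-- `A` is an `𝔸ⁿ`-fibration over `R`: a finitely generated flat `R`-algebra all of whose
fibres are polynomial rings in `n` variables. -/
def IsAffineFibration (R A : Type*) [CommRing R] [CommRing A] [Algebra R A] (n : ℕ) : Prop :=
  Algebra.FiniteType R A ∧ Module.Flat R A ∧
  ∀ (P : Ideal R) (_ : P.IsPrime),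
    Nonempty ((ResidueFieldAt R P ⊗[R] A) ≃ₐ[ResidueFieldAt R P]
      MvPolynomial (Fin n) (ResidueFieldAt R P))

/-- `W` is an `m`-tuple residual variable of the `𝔸ⁿ`-fibration `A` over `R`. -/
def IsResidualVariable (R A : Type*) [CommRing R] [CommRing A] [Algebra R A]
    (n m : ℕ) (W : Fin m → A) : Prop :=
  AlgebraicIndependent R W ∧
  FibersPolynomialOver R (Algebra.adjoin R (Set.range W)) A (n - m)

/-- A module `M` over `A` is stably free if `M ⊕ Aˢ ≅ Aᵗ` for some `s, t`. -/
def IsStablyFree (A M : Type*) [CommRing A] [AddCommGroup M] [Module A M] : Prop :=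
  ∃ s t : ℕ, Nonempty ((M × (Fin s → A)) ≃ₗ[A] (Fin t → A))

end

namespace FFRsec

/-- submodules of `A^k` having a finite free resolution of length `n` -/
def FFRS (A : Type*) [CommRing A] : ℕ → ∀ (k : ℕ), Submodule A (Fin k → A) → Prop
  | 0, _, K => Subsingleton K
  | n + 1, _, K => ∃ (j : ℕ) (f : (Fin j → A) →ₗ[A] K), Function.Surjective f ∧
      FFRS A n j (LinearMap.ker f)

/-- modules having a finite free resolution of length `n` -/
def FFR (A : Type*) [CommRing A] (n : ℕ) (M : Type*) [AddCommGroup M] [Module A M] : Prop :=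
  match n with
  | 0 => Subsingleton M
  | n + 1 => ∃ (k : ℕ) (f : (Fin k → A) →ₗ[A] M), Function.Surjective f ∧
      FFRS A n k (LinearMap.ker f)

theorem FFRS_iff {A : Type*} [CommRing A] (n k : ℕ) (K : Submodule A (Fin k → A)) :
    FFRS A n k K ↔ FFR A n K := by
  cases n <;> rfl

theorem FFR_zero {A : Type*} [CommRing A] {M : Type*} [AddCommGroup M] [Module A M] :
    FFR A 0 M ↔ Subsingleton M := Iff.rfl

theorem FFR_succ {A : Type*} [CommRing A] {n : ℕ} {M : Type*} [AddCommGroup M] [Module A M] :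
    FFR A (n + 1) M ↔ ∃ (k : ℕ) (f : (Fin k → A) →ₗ[A] M), Function.Surjective f ∧
      FFR A n (LinearMap.ker f) := by
  simp only [← FFRS_iff]; rfl

theorem FFR.equiv {A : Type*} [CommRing A] {n : ℕ} {M N : Type*} [AddCommGroup M] [Module A M]
    [AddCommGroup N] [Module A N] (e : M ≃ₗ[A] N) (h : FFR A n M) : FFR A n N := by
  cases n with
  | zero => exact (e.symm.toEquiv.subsingleton_congr).2 h
  | succ n =>
    rw [FFR_succ] at h ⊢
    obtain ⟨k, f, hf, h⟩ := h
    refine ⟨k, e.toLinearMap ∘ₗ f, e.surjective.comp hf, ?_⟩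
    rwa [LinearEquiv.ker_comp]

theorem FFR.succ {A : Type*} [CommRing A] {n : ℕ} : ∀ {M : Type*} [AddCommGroup M] [Module A M]
    (_ : FFR A n M), FFR A (n + 1) M := by
  have aux : ∀ n k (K : Submodule A (Fin k → A)), FFR A n K → FFR A (n+1) K := by
    intro n
    induction n with
    | zero =>
      intro k K h
      have : Subsingleton K := h
      rw [FFR_succ]
      exact ⟨0, 0, fun x => ⟨0, Subsingleton.elim _ _⟩, FFR_zero.2 inferInstance⟩
    | succ n ih =>
      intro k K h
      rw [FFR_succ] at h ⊢
      obtain ⟨k, f, hf, h⟩ := h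
      exact ⟨k, f, hf, ih _ _ h⟩
  intro M _ _ h
  cases n with
  | zero =>
    have : Subsingleton M := h
    rw [FFR_succ]
    exact ⟨0, 0, fun x => ⟨0, Subsingleton.elim _ _⟩, FFR_zero.2 inferInstance⟩
  | succ n =>
    rw [FFR_succ] at h ⊢
    obtain ⟨k, f, hf, h⟩ := h
    exact ⟨k, f, hf, aux _ _ _ h⟩

theorem FFR.mono {A : Type*} [CommRing A] {n m : ℕ} (hnm : n ≤ m) {M : Type*} [AddCommGroup M]
    [Module A M] (h : FFR A n M) : FFR A m M := by
  induction hnm with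
  | refl => exact h
  | step _ ih => exact ih.succ

/-- a surjection from any module isomorphic to `A^k` is fine. -/
theorem FFR.of_surj {A : Type*} [CommRing A] {n k : ℕ} {M F : Type*} [AddCommGroup M] [Module A M]
    [AddCommGroup F] [Module A F] (e : F ≃ₗ[A] (Fin k → A)) (f : F →ₗ[A] M)
    (hf : Function.Surjective f) (h : FFR A n (LinearMap.ker f)) : FFR A (n + 1) M := by
  rw [FFR_succ]
  refine ⟨k, f ∘ₗ e.symm.toLinearMap, hf.comp e.symm.surjective, h.equiv ?_⟩
  refine LinearEquiv.ofSubmodules e _ _ ?_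
  ext x
  simp

/-- `A^a × A^b ≃ A^(a+b)` -/
noncomputable def prodFin (A : Type*) [CommRing A] (a b : ℕ) :
    ((Fin a → A) × (Fin b → A)) ≃ₗ[A] (Fin (a + b) → A) :=
  (LinearEquiv.sumArrowLequivProdArrow (Fin a) (Fin b) A A).symm.trans
    (LinearEquiv.funCongrLeft A A finSumFinEquiv.symm)

universe u

theorem FFR.ext_step {A : Type u} [CommRing A] (n : ℕ)
    (IH : ∀ {M' M M'' : Type u}
      [AddCommGroup M'] [Module A M'] [AddCommGroup M] [Module A M] [AddCommGroup M'']
      [Module A M'']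
      (i : M' →ₗ[A] M) (p : M →ₗ[A] M'') (_ : Function.Injective i) (_ : Function.Surjective p)
      (_ : Function.Exact i p) (_ : FFR A n M') (_ : FFR A n M''), FFR A n M)
    {M' M M'' : Type*}
    [AddCommGroup M'] [Module A M'] [AddCommGroup M] [Module A M] [AddCommGroup M''] [Module A M'']
    (i : M' →ₗ[A] M) (p : M →ₗ[A] M'') (hi : Function.Injective i) (hp : Function.Surjective p)
    (hip : Function.Exact i p) (h' : FFR A (n+1) M') (h'' : FFR A (n+1) M'') :
    FFR A (n+1) M := by
  rw [FFR_succ] at h' h''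
  obtain ⟨a, f', hf', h'⟩ := h'
  obtain ⟨b, f'', hf'', h''⟩ := h''
  obtain ⟨g, hg⟩ := Module.projective_lifting_property p f'' hp
  have hg' : ∀ y, p (g y) = f'' y := fun y => by rw [← hg]; rfl
  have hpi : ∀ y, p (i y) = 0 := fun y => (hip _).2 ⟨y, rfl⟩
  let F : ((Fin a → A) × (Fin b → A)) →ₗ[A] M := (i ∘ₗ f').coprod g
  have hF : ∀ x, F x = i (f' x.1) + g x.2 := fun x => by simp [F]
  refine FFR.of_surj (prodFin A a b) F ?_ ?_
  · intro m
    obtain ⟨y, hy⟩ := hf'' (p m)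
    obtain ⟨x, hx⟩ := (hip (m - g y)).1 (by simp [hg', hy])
    obtain ⟨z, rfl⟩ := hf' x
    exact ⟨(z, y), by simp [hF, hx]⟩
  · let j : LinearMap.ker f' →ₗ[A] LinearMap.ker F :=
      LinearMap.codRestrict _ ((LinearMap.inl A _ _) ∘ₗ (LinearMap.ker f').subtype) (by
        intro x; have := x.2; simp only [LinearMap.mem_ker] at this; simp [hF, this])
    let q : LinearMap.ker F →ₗ[A] LinearMap.ker f'' :=
      LinearMap.codRestrict _ ((LinearMap.snd A _ _) ∘ₗ (LinearMap.ker F).subtype) (by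
        intro x; have := x.2; rw [LinearMap.mem_ker, hF] at this
        have := congrArg p this; simpa [hpi, hg'] using this)
    refine IH j q ?_ ?_ ?_ h' h''
    · intro x y hxy
      have := congrArg (fun z : LinearMap.ker F => (z : (Fin a → A) × (Fin b → A)).1) hxy
      exact Subtype.ext this
    · rintro ⟨y, hy⟩
      obtain ⟨x, hx⟩ := (hip (- g y)).1 (by simpa [hg'] using hy)
      obtain ⟨z, rfl⟩ := hf' x
      exact ⟨⟨(z, y), by simp [hF, hx]⟩, rfl⟩
    · rintro ⟨⟨x, y⟩, hxy⟩
      constructor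
      · intro h
        have h0 : y = 0 := congrArg Subtype.val h
        subst h0
        have : f' x = 0 := by
          rw [LinearMap.mem_ker, hF] at hxy
          apply hi; simpa using hxy
        exact ⟨⟨x, this⟩, rfl⟩
      · rintro ⟨z, hz⟩
        have := congrArg (fun z : LinearMap.ker F => (z : (Fin a → A) × (Fin b → A)).2) hz
        exact Subtype.ext this.symm

theorem FFR.ext_zero {A : Type u} [CommRing A]
    {M' M M'' : Type*}
    [AddCommGroup M'] [Module A M'] [AddCommGroup M] [Module A M] [AddCommGroup M''] [Module A M'']
    (i : M' →ₗ[A] M) (p : M →ₗ[A] M'')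
    (hip : Function.Exact i p) (h' : FFR A 0 M') (h'' : FFR A 0 M'') :
    FFR A 0 M := by
  rw [FFR_zero] at *
  refine ⟨fun x y => ?_⟩
  obtain ⟨z, hz⟩ := (hip (x - y)).1 (Subsingleton.elim _ _)
  rw [Subsingleton.elim z 0, map_zero] at hz
  exact (sub_eq_zero.1 hz.symm)

theorem FFR.ext_u {A : Type u} [CommRing A] (n : ℕ) :
    ∀ {M' M M'' : Type u}
      [AddCommGroup M'] [Module A M'] [AddCommGroup M] [Module A M] [AddCommGroup M'']
      [Module A M'']
      (i : M' →ₗ[A] M) (p : M →ₗ[A] M'') (_ : Function.Injective i) (_ : Function.Surjective p)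
      (_ : Function.Exact i p) (_ : FFR A n M') (_ : FFR A n M''), FFR A n M := by
  induction n with
  | zero => intro _ _ _ _ _ _ _ _ _ i p _ _ h3 h4 h5; exact FFR.ext_zero i p h3 h4 h5
  | succ n ih =>
    intro _ _ _ _ _ _ _ _ _ i p h1 h2 h3 h4 h5; exact FFR.ext_step n ih i p h1 h2 h3 h4 h5

theorem FFR.ext {A : Type u} [CommRing A] {n : ℕ} {M' M M'' : Type*}
    [AddCommGroup M'] [Module A M'] [AddCommGroup M] [Module A M] [AddCommGroup M''] [Module A M'']
    (i : M' →ₗ[A] M) (p : M →ₗ[A] M'') (hi : Function.Injective i) (hp : Function.Surjective p)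
    (hip : Function.Exact i p) (h' : FFR A n M') (h'' : FFR A n M'') : FFR A n M := by
  cases n with
  | zero => exact FFR.ext_zero i p hip h' h''
  | succ n => exact FFR.ext_step n (FFR.ext_u n) i p hi hp hip h' h''

theorem FFR.quot {A : Type u} [CommRing A] {n : ℕ} {M' M M'' : Type*}
    [AddCommGroup M'] [Module A M'] [AddCommGroup M] [Module A M] [AddCommGroup M''] [Module A M'']
    (i : M' →ₗ[A] M) (p : M →ₗ[A] M'') (hi : Function.Injective i) (hp : Function.Surjective p)
    (hip : Function.Exact i p) (h' : FFR A n M') (h : FFR A n M) : FFR A (n + 1) M'' := by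
  cases n with
  | zero =>
    apply FFR.succ
    rw [FFR_zero] at *
    exact hp.subsingleton
  | succ n =>
    have hpi : ∀ y, p (i y) = 0 := fun y => (hip _).2 ⟨y, rfl⟩
    have h0 := h
    rw [FFR_succ] at h
    obtain ⟨k, f, hf, h⟩ := h
    rw [FFR_succ]
    refine ⟨k, p ∘ₗ f, hp.comp hf, ?_⟩
    -- kernel of p ∘ f is an extension of M' by ker f
    let j : LinearMap.ker f →ₗ[A] LinearMap.ker (p ∘ₗ f) :=
      Submodule.inclusion (by intro x hx; simp only [LinearMap.mem_ker] at hx; simp [hx])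
    have hrange : ∀ x : LinearMap.ker (p ∘ₗ f), f x ∈ LinearMap.range i :=
      fun x => (hip _).1 x.2
    let e : M' ≃ₗ[A] LinearMap.range i := LinearEquiv.ofInjective i hi
    let q : LinearMap.ker (p ∘ₗ f) →ₗ[A] LinearMap.range i :=
      LinearMap.codRestrict _ (f ∘ₗ (LinearMap.ker (p ∘ₗ f)).subtype) hrange
    refine FFR.ext j q (Submodule.inclusion_injective _) ?_ ?_ (FFR.succ h) (h'.equiv e)
    · rintro ⟨_, ⟨y, rfl⟩⟩
      obtain ⟨x, hx⟩ := hf (i y)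
      exact ⟨⟨x, by simp [hx, hpi]⟩, Subtype.ext hx⟩
    · rintro ⟨x, hx⟩
      constructor
      · intro h
        exact ⟨⟨x, congrArg Subtype.val h⟩, rfl⟩
      · rintro ⟨z, hz⟩
        apply Subtype.ext
        have : (z : Fin k → A) = x := congrArg Subtype.val hz
        change f x = 0
        rw [← this]; exact z.2

/-- having some finite free resolution -/
def HasFFR (A : Type*) [CommRing A] (M : Type*) [AddCommGroup M] [Module A M] : Prop :=
  ∃ n, FFR A n M

theorem HasFFR.equiv {A : Type*} [CommRing A] {M N : Type*} [AddCommGroup M] [Module A M]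
    [AddCommGroup N] [Module A N] (e : M ≃ₗ[A] N) (h : HasFFR A M) : HasFFR A N :=
  let ⟨n, h⟩ := h; ⟨n, h.equiv e⟩

theorem HasFFR.ext {A : Type u} [CommRing A] {M' M M'' : Type*}
    [AddCommGroup M'] [Module A M'] [AddCommGroup M] [Module A M] [AddCommGroup M''] [Module A M'']
    (i : M' →ₗ[A] M) (p : M →ₗ[A] M'') (hi : Function.Injective i) (hp : Function.Surjective p)
    (hip : Function.Exact i p) (h' : HasFFR A M') (h'' : HasFFR A M'') : HasFFR A M := by
  obtain ⟨n, h'⟩ := h'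
  obtain ⟨m, h''⟩ := h''
  exact ⟨max n m, FFR.ext i p hi hp hip (h'.mono (le_max_left _ _)) (h''.mono (le_max_right _ _))⟩

theorem HasFFR.quot {A : Type u} [CommRing A] {M' M M'' : Type*}
    [AddCommGroup M'] [Module A M'] [AddCommGroup M] [Module A M] [AddCommGroup M''] [Module A M'']
    (i : M' →ₗ[A] M) (p : M →ₗ[A] M'') (hi : Function.Injective i) (hp : Function.Surjective p)
    (hip : Function.Exact i p) (h' : HasFFR A M') (h'' : HasFFR A M) : HasFFR A M'' := by
  obtain ⟨n, h'⟩ := h'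
  obtain ⟨m, h''⟩ := h''
  exact ⟨_, FFR.quot i p hi hp hip (h'.mono (le_max_left n m)) (h''.mono (le_max_right n m))⟩

theorem HasFFR.sub_ext {A : Type u} [CommRing A] {M : Type*} [AddCommGroup M] [Module A M]
    (N : Submodule A M) (h' : HasFFR A N) (h'' : HasFFR A (M ⧸ N)) : HasFFR A M :=
  HasFFR.ext N.subtype N.mkQ N.injective_subtype N.mkQ_surjective
    (by rw [LinearMap.exact_iff]; simp) h' h''

theorem FFR.free {A : Type*} [CommRing A] {M : Type*} [AddCommGroup M] [Module A M] {k : ℕ}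
    (e : M ≃ₗ[A] (Fin k → A)) : FFR A 1 M := by
  rw [FFR_succ]
  refine ⟨k, e.symm.toLinearMap, e.symm.surjective, ?_⟩
  rw [LinearEquiv.ker, FFR_zero]
  infer_instance

theorem FFR.finite {A : Type*} [CommRing A] {n : ℕ} {M : Type*} [AddCommGroup M] [Module A M]
    (h : FFR A n M) : Module.Finite A M := by
  cases n with
  | zero => rw [FFR_zero] at h; infer_instance
  | succ n =>
    rw [FFR_succ] at h
    obtain ⟨k, f, hf, _⟩ := h
    exact Module.Finite.of_surjective f hf

theorem FFR.projective {A : Type u} [CommRing A] : ∀ (n : ℕ) {M : Type u} [AddCommGroup M]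
    [Module A M] [Module.Projective A M], FFR A n M →
      ∃ s t : ℕ, Nonempty ((M × (Fin s → A)) ≃ₗ[A] (Fin t → A)) := by
  intro n
  induction n with
  | zero =>
    intro M _ _ _ h
    rw [FFR_zero] at h
    exact ⟨0, 0, ⟨LinearEquiv.ofSubsingleton _ _⟩⟩
  | succ n ih =>
    intro M _ _ _ h
    rw [FFR_succ] at h
    obtain ⟨k, f, hf, h⟩ := h
    obtain ⟨g, hg⟩ := Module.projective_lifting_property f LinearMap.id hf
    have hg' : ∀ x, f (g x) = x := fun x => congrArg (fun h => h x) hg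
    let e : (Fin k → A) ≃ₗ[A] (M × LinearMap.ker f) :=
      LinearEquiv.ofBijective (f.prod (LinearMap.codRestrict (LinearMap.ker f)
        (LinearMap.id - g ∘ₗ f) (fun x => by simp [hg']))) (by
        constructor
        · rw [injective_iff_map_eq_zero]
          intro x hx
          have h1 : f x = 0 := congrArg Prod.fst hx
          have h2 : x - g (f x) = 0 := congrArg (fun z => (z.2 : Fin k → A)) hx
          simpa [h1] using h2
        · rintro ⟨m, ⟨y, hy⟩⟩
          refine ⟨g m + y, ?_⟩
          have hy' : f y = 0 := hy
          refine Prod.ext ?_ (Subtype.ext ?_)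
          · simp [hg', hy']
          · simp [hg', hy'])
    have : Module.Projective A (LinearMap.ker f) :=
      Module.Projective.of_split ((e.symm.toLinearMap) ∘ₗ LinearMap.inr A M _)
        (LinearMap.snd A M _ ∘ₗ e.toLinearMap) (by ext x; simp)
    obtain ⟨s, t, ⟨e2⟩⟩ := ih h
    -- M × A^t ≃ M × (K × A^s) ≃ A^k × A^s
    refine ⟨t, k + s, ⟨?_⟩⟩
    exact ((LinearEquiv.refl A M).prodCongr e2.symm).trans
      ((LinearEquiv.prodAssoc A M _ _).symm.trans
        ((e.symm.prodCongr (LinearEquiv.refl A _)).trans (prodFin A k s)))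

end FFRsec

namespace FFRsec
universe u v w

theorem FFR.baseChange_step {A : Type u} [CommRing A] (A' : Type v) [CommRing A'] [Algebra A A']
    [Module.Flat A A'] (n : ℕ)
    (IH : ∀ {M : Type u} [AddCommGroup M] [Module A M], FFR A n M → FFR A' n (A' ⊗[A] M))
    {M : Type*} [AddCommGroup M] [Module A M] (h : FFR A (n+1) M) : FFR A' (n+1) (A' ⊗[A] M) := by
  rw [FFR_succ] at h
  obtain ⟨k, f, hf, h⟩ := h
  refine FFR.of_surj (TensorProduct.piScalarRight A A' A' (Fin k))
    (AlgebraTensorModule.lTensor A' A' f) ?_ ?_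
  · exact LinearMap.lTensor_surjective A' hf
  · exact (IH h).equiv (LinearMap.tensorKerEquiv A' A' f)

theorem FFR.baseChange_zero {A : Type u} [CommRing A] (A' : Type v) [CommRing A'] [Algebra A A']
    {M : Type*} [AddCommGroup M] [Module A M] (h : FFR A 0 M) : FFR A' 0 (A' ⊗[A] M) := by
  rw [FFR_zero] at *
  infer_instance

theorem FFR.baseChange_u {A : Type u} [CommRing A] (A' : Type v) [CommRing A'] [Algebra A A']
    [Module.Flat A A'] (n : ℕ) :
    ∀ {M : Type u} [AddCommGroup M] [Module A M], FFR A n M → FFR A' n (A' ⊗[A] M) := by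
  induction n with
  | zero => intro M _ _ h; exact FFR.baseChange_zero A' h
  | succ n ih => intro M _ _ h; exact FFR.baseChange_step A' n ih h

theorem FFR.baseChange {A : Type u} [CommRing A] (A' : Type v) [CommRing A'] [Algebra A A']
    [Module.Flat A A'] {n : ℕ} {M : Type*} [AddCommGroup M] [Module A M] (h : FFR A n M) :
    FFR A' n (A' ⊗[A] M) := by
  cases n with
  | zero => exact FFR.baseChange_zero A' h
  | succ n => exact FFR.baseChange_step A' n (FFR.baseChange_u A' n) h

/-- rings all of whose finite modules have finite free resolutions -/
def FFRRing (A : Type*) [CommRing A] : Prop :=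
  ∀ (k : ℕ) (K : Submodule A (Fin k → A)), HasFFR A K

theorem FFRRing.hasFFR {A : Type*} [CommRing A] (h : FFRRing A) (M : Type*) [AddCommGroup M]
    [Module A M] [Module.Finite A M] : HasFFR A M := by
  obtain ⟨k, f, hf⟩ := Module.Finite.exists_fin' A M
  obtain ⟨n, hn⟩ := h k (LinearMap.ker f)
  exact ⟨n + 1, FFR_succ.2 ⟨k, f, hf, hn⟩⟩

theorem FFRRing.of_finite {A : Type u} [CommRing A] [IsNoetherianRing A]
    (h : ∀ (M : Type u) [AddCommGroup M] [Module A M] [Module.Finite A M], HasFFR A M) :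
    FFRRing A := fun _ K => h K

theorem FFRRing.of_ringEquiv {A : Type*} {A' : Type*} [CommRing A] [CommRing A']
    [IsNoetherianRing A] (e : A ≃+* A') (h : FFRRing A) : FFRRing A' := by
  let _ : Algebra A A' := e.toRingHom.toAlgebra
  have hsurj : Function.Surjective (algebraMap A A') := e.surjective
  have : IsNoetherianRing A' := isNoetherianRing_of_surjective A A' (algebraMap A A') hsurj
  have : Module.Flat A A' := by
    let el : A ≃ₗ[A] A' := LinearEquiv.ofBijective (Algebra.linearMap A A') e.bijective
    exact Module.Flat.of_linearEquiv el.symm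
  intro k K
  have hfin : Module.Finite A A' := Module.Finite.of_surjective (Algebra.linearMap A A') hsurj
  have : Module.Finite A K := Module.Finite.trans A' K
  obtain ⟨n, hn⟩ := h.hasFFR K
  have : TensorProduct.CompatibleSMul A A' A' K := ⟨fun r m x => by
    obtain ⟨r, rfl⟩ := hsurj r
    rw [algebraMap_smul, algebraMap_smul, TensorProduct.smul_tmul]⟩
  exact ⟨n, (hn.baseChange A').equiv (TensorProduct.lidOfCompatibleSMul A A' K)⟩

theorem FFRRing.of_pid {D : Type*} [CommRing D] [IsDomain D] [IsPrincipalIdealRing D] :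
    FFRRing D := by
  intro k K
  obtain ⟨n, b⟩ := Submodule.basisOfPid (Pi.basisFun D (Fin k)) K
  exact ⟨1, FFR.free b.equivFun⟩

theorem fin_kill {A : Type*} [CommRing A] (S : Submonoid A) {M : Type*} [AddCommGroup M]
    [Module A M] [Module.Finite A M] (h : ∀ m : M, ∃ d ∈ S, d • m = 0) :
    ∃ d ∈ S, ∀ m : M, d • m = 0 := by
  classical
  obtain ⟨s, hs⟩ := (Module.Finite.fg_top : (⊤ : Submodule A M).FG)
  choose d hd hdm using h
  refine ⟨∏ x ∈ s, d x, S.prod_mem (fun x _ => hd x), ?_⟩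
  have : (⊤ : Submodule A M) ≤ LinearMap.ker (LinearMap.lsmul A M (∏ x ∈ s, d x)) := by
    rw [← hs, Submodule.span_le]
    intro x hx
    simp only [SetLike.mem_coe, LinearMap.mem_ker, LinearMap.lsmul_apply]
    rw [← Finset.prod_erase_mul s d hx, mul_smul, hdm, smul_zero]
  intro m
  simpa using this (Submodule.mem_top (x := m))

end FFRsec

namespace FFRsec
universe u v w

theorem loc_zero {A0 F : Type*} [CommRing A0] [CommRing F] [Algebra A0 F]
    (S0 : Submonoid A0) [IsLocalization S0 F] {M : Type*} [AddCommGroup M] [Module A0 M]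
    {m : M} (h : (1 : F) ⊗ₜ[A0] m = 0) : ∃ d ∈ S0, d • m = 0 := by
  have hL : IsLocalizedModule S0 (TensorProduct.mk A0 F M 1) :=
    (isLocalizedModule_iff_isBaseChange S0 F _).2 (TensorProduct.isBaseChange A0 M F)
  obtain ⟨c, hc⟩ := (IsLocalizedModule.eq_zero_iff S0 (TensorProduct.mk A0 F M 1)).1 h
  exact ⟨c, c.2, hc⟩

theorem loc_surj {A0 F : Type*} [CommRing A0] [CommRing F] [Algebra A0 F]
    (S0 : Submonoid A0) [IsLocalization S0 F] {M : Type*} [AddCommGroup M] [Module A0 M]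
    (x : F ⊗[A0] M) : ∃ d ∈ S0, ∃ m : M, d • x = (1 : F) ⊗ₜ[A0] m := by
  have hL : IsLocalizedModule S0 (TensorProduct.mk A0 F M 1) :=
    (isLocalizedModule_iff_isBaseChange S0 F _).2 (TensorProduct.isBaseChange A0 M F)
  obtain ⟨⟨m, d⟩, hc⟩ := IsLocalizedModule.surj S0 (TensorProduct.mk A0 F M 1) x
  exact ⟨d, d.2, m, hc⟩

theorem loc_dev {A A0 : Type u} {F : Type v} [CommRing A] [CommRing A0] [CommRing F]
    [Algebra A A0] [IsNoetherianRing A0] [Algebra A0 F]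
    (S0 : Submonoid A0) [IsLocalization S0 F] (h1 : ∀ k : ℕ, HasFFR A (Fin k → A0))
    (h2 : ∀ (M : Type u) [AddCommGroup M] [Module A M] [Module A0 M] [IsScalarTower A A0 M]
      [Module.Finite A0 M], (∃ d ∈ S0, ∀ m : M, d • m = 0) → HasFFR A M) (n : ℕ) :
    ∀ (M : Type u) [AddCommGroup M] [Module A M] [Module A0 M] [IsScalarTower A A0 M]
      [Module.Finite A0 M], FFR F n (F ⊗[A0] M) → HasFFR A M := by
  have : Module.Flat A0 F := IsLocalization.flat F S0
  induction n with
  | zero =>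
    intro M _ _ _ _ _ h
    rw [FFR_zero] at h
    exact h2 M (fin_kill S0 fun m => loc_zero S0 (F := F) (Subsingleton.elim _ _))
  | succ n ih =>
    intro M _ _ _ _ _ h
    rw [FFR_succ] at h
    obtain ⟨k, f, hf, h⟩ := h
    choose d hd m hm using fun i => loc_surj S0 (f (Pi.single i 1))
    let f0 : (Fin k → A0) →ₗ[A0] M := Fintype.linearCombination A0 m
    have hunit : ∀ i, IsUnit (algebraMap A0 F (d i)) :=
      fun i => IsLocalization.map_units F ⟨d i, hd i⟩
    let ed : (Fin k → F) ≃ₗ[F] (Fin k → F) :=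
      LinearEquiv.piCongrRight fun i => LinearEquiv.smulOfUnit (hunit i).unit
    let E : (F ⊗[A0] (Fin k → A0)) ≃ₗ[F] (Fin k → F) :=
      (TensorProduct.piScalarRight A0 F F (Fin k)).trans ed
    have hE : AlgebraTensorModule.lTensor F F f0 = f ∘ₗ E.toLinearMap := by
      apply TensorProduct.AlgebraTensorModule.ext
      intro x y
      rw [← mul_one x, ← smul_eq_mul, ← TensorProduct.smul_tmul', map_smul, map_smul]
      congr 1
      refine LinearMap.congr_fun (f := (AlgebraTensorModule.lTensor F F f0).restrictScalars A0 ∘ₗ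
        TensorProduct.mk A0 F _ 1) (g := (f ∘ₗ E.toLinearMap).restrictScalars A0 ∘ₗ
        TensorProduct.mk A0 F _ 1) ?_ y
      refine LinearMap.pi_ext' fun i => LinearMap.ext_ring ?_
      have : E ((1 : F) ⊗ₜ[A0] (Pi.single i (1 : A0))) = d i • (Pi.single i 1 : Fin k → F) := by
        ext j
        by_cases hij : j = i
        · subst hij
          simp [E, ed, Algebra.smul_def, LinearEquiv.smulOfUnit, Units.smul_def]
        · simp [E, ed, hij]
      have h3 : E.toLinearMap ((1 : F) ⊗ₜ[A0] (Pi.single i (1 : A0))) =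
        d i • (Pi.single i 1 : Fin k → F) := this
      have h4 : f (d i • (Pi.single i 1 : Fin k → F)) = d i • f (Pi.single i 1) := by
        exact LinearMap.map_smul_of_tower f _ _
      simp only [LinearMap.comp_apply, LinearMap.restrictScalars_apply, TensorProduct.mk_apply,
        LinearMap.single_apply, h3, h4, hm]
      simp [f0, Fintype.linearCombination_apply]
    have hker : FFR F n (F ⊗[A0] LinearMap.ker f0) := by
      refine FFR.equiv (LinearEquiv.trans (LinearEquiv.symm (LinearEquiv.ofSubmodules E
        (LinearMap.ker (AlgebraTensorModule.lTensor F F f0)) (LinearMap.ker f) ?_))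
        (LinearMap.tensorKerEquiv F F f0).symm) h
      rw [hE]
      ext x
      simp [Submodule.mem_map_equiv]
    have hK : HasFFR A (LinearMap.ker f0) := ih _ hker
    have hR : HasFFR A (LinearMap.range f0) := by
      refine HasFFR.quot ((LinearMap.ker f0).subtype.restrictScalars A)
        (f0.rangeRestrict.restrictScalars A) (LinearMap.ker f0).injective_subtype
        f0.surjective_rangeRestrict ?_ hK (h1 k)
      intro x
      constructor
      · intro hx
        exact ⟨⟨x, congrArg Subtype.val hx⟩, rfl⟩
      · rintro ⟨y, rfl⟩
        exact Subtype.ext y.2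
    have hQ : HasFFR A (M ⧸ LinearMap.range f0) := by
      refine h2 _ (fin_kill S0 fun x => ?_)
      obtain ⟨x, rfl⟩ := Submodule.mkQ_surjective _ x
      obtain ⟨y, hy⟩ := hf ((1 : F) ⊗ₜ[A0] x)
      obtain ⟨d1, hd1, z, hz⟩ := loc_surj S0 (E.symm y)
      have h5 : AlgebraTensorModule.lTensor F F f0 (E.symm y) = (1 : F) ⊗ₜ[A0] x := by
        rw [hE, ← hy]; simp
      have h6 := congrArg (AlgebraTensorModule.lTensor F F f0) hz
      rw [LinearMap.map_smul_of_tower, h5] at h6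
      have h7 : (1 : F) ⊗ₜ[A0] (d1 • x - f0 z) = 0 := by
        rw [TensorProduct.tmul_sub, TensorProduct.tmul_smul, h6]
        simp
      obtain ⟨d2, hd2, h8⟩ := loc_zero S0 h7
      refine ⟨d2 * d1, S0.mul_mem hd2 hd1, ?_⟩
      rw [← map_smul]
      simp only [Submodule.mkQ_apply, Submodule.Quotient.mk_eq_zero]
      rw [smul_sub, sub_eq_zero, ← mul_smul] at h8
      rw [h8]
      exact ⟨d2 • z, f0.map_smul _ _⟩
    let i1 : LinearMap.range f0 →ₗ[A] M := (LinearMap.range f0).subtype.restrictScalars A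
    let p1 : M →ₗ[A] (M ⧸ LinearMap.range f0) := (LinearMap.range f0).mkQ.restrictScalars A
    have hi1 : Function.Injective i1 := Submodule.injective_subtype (LinearMap.range f0)
    have hp1 : Function.Surjective p1 := Submodule.mkQ_surjective (LinearMap.range f0)
    have hip : Function.Exact i1 p1 := by
      intro x
      have : p1 x = 0 ↔ x ∈ LinearMap.range f0 := Submodule.Quotient.mk_eq_zero _
      rw [this]
      exact ⟨fun h => ⟨⟨x, h⟩, rfl⟩, by rintro ⟨y, rfl⟩; exact y.2⟩
    exact HasFFR.ext i1 p1 hi1 hp1 hip hR hQ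

end FFRsec

namespace FFRsec
universe u v w

/-- elements vanishing in the fibre -/
theorem fib_zero {R : Type*} [CommRing R] (P : Ideal R) [P.IsPrime] {M : Type*} [AddCommGroup M]
    [Module R M] {m : M} (h : (1 : P.ResidueField) ⊗ₜ[R] m = 0) :
    ∃ d ∉ P, d • m ∈ P • (⊤ : Submodule R M) := by
  let Q := M ⧸ (P • (⊤ : Submodule R M))
  let N := LocalizedModule P.primeCompl Q
  have hQ : ∀ p ∈ P, ∀ q : Q, p • q = 0 := by
    intro p hp q
    obtain ⟨m, rfl⟩ := Submodule.mkQ_surjective _ q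
    rw [← map_smul, Submodule.mkQ_apply, Submodule.Quotient.mk_eq_zero]
    exact Submodule.smul_mem_smul hp trivial
  have hN : ∀ p ∈ P, ∀ x : N, p • x = 0 := by
    intro p hp x
    induction x using LocalizedModule.induction_on with
    | h m s => rw [LocalizedModule.smul'_mk, hQ p hp, LocalizedModule.zero_mk]
  have hT : Module.IsTorsionBySet (Localization.AtPrime P) N
      (IsLocalRing.maximalIdeal (Localization.AtPrime P) : Set (Localization.AtPrime P)) := by
    rintro x ⟨y, hy⟩
    obtain ⟨⟨a, s⟩, ha⟩ := IsLocalization.surj P.primeCompl y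
    have haP : a ∈ P := by
      have : algebraMap R (Localization.AtPrime P) a ∈ IsLocalRing.maximalIdeal _ := by
        simp only at ha
        rw [← ha]; exact Ideal.mul_mem_right _ _ hy
      exact (IsLocalization.AtPrime.to_map_mem_maximal_iff _ P a).1 this
    have h1 : (y * algebraMap R (Localization.AtPrime P) s) • x = 0 := by
      rw [ha, algebraMap_smul, hN a haP]
    obtain ⟨t, ht⟩ := IsLocalization.map_units (Localization.AtPrime P) s
    rw [mul_comm, mul_smul, ← ht, ← Units.smul_def, smul_eq_zero_iff_eq] at h1
    exact h1
  let _ : Module P.ResidueField N := hT.module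
  have hst : IsScalarTower R P.ResidueField N := by
    constructor
    intro x y z
    obtain ⟨y, rfl⟩ := IsLocalRing.residue_surjective y
    have hsm : ∀ (y : Localization.AtPrime P) (z : N),
      (IsLocalRing.residue _ y : P.ResidueField) • z = y • z :=
      fun y z => Module.IsTorsionBySet.mk_smul hT y z
    have : x • (IsLocalRing.residue _ y : P.ResidueField) = IsLocalRing.residue _ (x • y) := rfl
    rw [this, hsm, hsm, smul_assoc]
  let l : M →ₗ[R] N := LocalizedModule.mkLinearMap P.primeCompl Q ∘ₗ Submodule.mkQ _
  have h2 := congrArg (LinearMap.liftBaseChange P.ResidueField l) h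
  rw [LinearMap.liftBaseChange_tmul, one_smul, map_zero] at h2
  obtain ⟨c, hc⟩ := (IsLocalizedModule.eq_zero_iff P.primeCompl
    (LocalizedModule.mkLinearMap P.primeCompl Q)).1 h2
  refine ⟨c, c.2, ?_⟩
  rw [Submonoid.smul_def, ← map_smul, Submodule.mkQ_apply, Submodule.Quotient.mk_eq_zero] at hc
  exact hc

theorem fib_surj {R : Type*} [CommRing R] (P : Ideal R) [P.IsPrime] {A : Type*} [CommRing A]
    [Algebra R A] (x : P.ResidueField ⊗[R] A) : ∃ r ∉ P, ∃ s : A, r • x = 1 ⊗ₜ[R] s :=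
  Ideal.Fiber.exists_smul_eq_one_tmul P x

theorem fib_eq_zero {R : Type*} [CommRing R] (P : Ideal R) [P.IsPrime] {M : Type*} [AddCommGroup M]
    [Module R M] {m : M} (h : m ∈ P • (⊤ : Submodule R M)) : (1 : P.ResidueField) ⊗ₜ[R] m = 0 := by
  refine Submodule.smul_induction_on h ?_ ?_
  · intro r hr n _
    rw [← TensorProduct.smul_tmul, Algebra.smul_def, mul_one,
      Ideal.algebraMap_residueField_eq_zero.2 hr, TensorProduct.zero_tmul]
  · intro x y hx hy
    rw [TensorProduct.tmul_add, hx, hy, add_zero]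

theorem smul_top_eq {R A : Type*} [CommRing R] [CommRing A] [Algebra R A] (P : Ideal R) (a : A) :
    a ∈ P • (⊤ : Submodule R A) ↔ a ∈ P.map (algebraMap R A) := by
  rw [Ideal.smul_top_eq_map]; rfl

/-- the natural `A/PA`-algebra structure on the fibre. -/
noncomputable abbrev fibAlg (R A : Type*) [CommRing R] [CommRing A] [Algebra R A] (P : Ideal R)
    [P.IsPrime] : (A ⧸ P.map (algebraMap R A)) →+* (P.ResidueField ⊗[R] A) :=
  Ideal.Quotient.lift _ (Algebra.TensorProduct.includeRight : A →ₐ[R] P.ResidueField ⊗[R] A).toRingHom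
    (fun a ha => fib_eq_zero P ((smul_top_eq P a).2 ha))

theorem fib_isLoc (R A : Type*) [CommRing R] [CommRing A] [Algebra R A] (P : Ideal R)
    [P.IsPrime] : letI := (fibAlg R A P).toAlgebra
    IsLocalization (P.primeCompl.map (algebraMap R (A ⧸ P.map (algebraMap R A))))
      (P.ResidueField ⊗[R] A) := by
  let _ := (fibAlg R A P).toAlgebra
  have hmk : ∀ a : A, algebraMap (A ⧸ P.map (algebraMap R A)) (P.ResidueField ⊗[R] A)
    (Ideal.Quotient.mk _ a) = 1 ⊗ₜ a := fun a => rfl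
  have hr : ∀ r : R, algebraMap (A ⧸ P.map (algebraMap R A)) (P.ResidueField ⊗[R] A)
    (algebraMap R _ r) = algebraMap R _ r := fun r => by
      change (1 : P.ResidueField) ⊗ₜ[R] (algebraMap R A r) = _
      exact Algebra.TensorProduct.includeRight.commutes r
  refine ⟨⟨?_, ?_, ?_⟩⟩
  · rintro ⟨_, ⟨r, hrP, rfl⟩⟩
    simp only [MonoidHom.coe_coe, RingHom.coe_coe]
    rw [hr, IsScalarTower.algebraMap_apply R P.ResidueField]
    apply IsUnit.map
    rw [isUnit_iff_ne_zero, Ne, Ideal.algebraMap_residueField_eq_zero]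
    exact hrP
  · intro z
    obtain ⟨r, hrP, s, hs⟩ := fib_surj P z
    refine ⟨(Ideal.Quotient.mk _ s, ⟨_, ⟨r, hrP, rfl⟩⟩), ?_⟩
    simp only [MonoidHom.coe_coe]
    change z * algebraMap _ _ (algebraMap R _ r) = _
    rw [hr, hmk, ← hs, mul_comm, Algebra.smul_def]
  · intro x y hxy
    obtain ⟨x, rfl⟩ := Ideal.Quotient.mk_surjective x
    obtain ⟨y, rfl⟩ := Ideal.Quotient.mk_surjective y
    rw [hmk, hmk, ← sub_eq_zero, ← TensorProduct.tmul_sub] at hxy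
    obtain ⟨d, hd, h⟩ := fib_zero P hxy
    refine ⟨⟨_, ⟨d, hd, rfl⟩⟩, ?_⟩
    change algebraMap R _ d * _ = algebraMap R _ d * _
    rw [← sub_eq_zero, ← mul_sub, ← map_sub]
    change Ideal.Quotient.mk _ (algebraMap R A d * (x - y)) = 0
    rw [Ideal.Quotient.eq_zero_iff_mem, ← Algebra.smul_def]
    exact (smul_top_eq P _).1 h

end FFRsec

namespace FFRsec
universe u v w

theorem ffr_fib_aux {R : Type v} {A : Type u} [CommRing R] [CommRing A] [Algebra R A]
    [IsNoetherianRing R] [IsNoetherianRing A] [Module.Flat R A] (hR : FFRRing R)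
    (hF : ∀ (P : Ideal R) [P.IsPrime], FFRRing (P.ResidueField ⊗[R] A)) (J : Ideal R) :
    ∀ (M : Type u) [AddCommGroup M] [Module A M] [Module.Finite A M]
      (_ : ∀ j ∈ J, ∀ m : M, algebraMap R A j • m = 0), HasFFR A M := by
  induction J using WellFoundedGT.induction with
  | ind J IH =>
  intro M _ _ _ hM
  have hsup : ∀ (x : R) (_ : x ∉ J) (N : Type u) [AddCommGroup N] [Module A N] [Module.Finite A N]
      (_ : ∀ j ∈ J, ∀ m : N, algebraMap R A j • m = 0) (_ : ∀ m : N, algebraMap R A x • m = 0),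
      HasFFR A N := by
    intro x hx N _ _ _ h1 h2
    refine IH (J ⊔ Ideal.span {x}) ?_ N ?_
    · refine lt_of_le_of_ne le_sup_left ?_
      intro h
      exact hx (h ▸ (le_sup_right : _ ≤ J ⊔ Ideal.span {x}) (Ideal.mem_span_singleton_self x))
    · intro j hj m
      obtain ⟨a, ha, b, hb, rfl⟩ := Submodule.mem_sup.1 hj
      obtain ⟨c, rfl⟩ := Ideal.mem_span_singleton'.1 hb
      rw [map_add, add_smul, h1 a ha, map_mul, mul_smul, h2, smul_zero, add_zero]
  by_cases hJ : J = ⊤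
  · refine ⟨0, ?_⟩
    rw [FFR_zero]
    refine ⟨fun x y => ?_⟩
    have h1 := hM 1 (by rw [hJ]; trivial)
    have := (h1 x).trans (h1 y).symm
    simpa using this
  by_cases hP : J.IsPrime
  · let A0 := A ⧸ J.map (algebraMap R A)
    let F := J.ResidueField ⊗[R] A
    let _ : Algebra A0 F := (fibAlg R A J).toAlgebra
    let S0 := J.primeCompl.map (algebraMap R A0)
    have hloc : IsLocalization S0 F := fib_isLoc R A J
    have hNA : IsNoetherianRing A0 := inferInstance
    have htors : Module.IsTorsionBySet A M (J.map (algebraMap R A) : Set A) := by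
      rw [Module.isTorsionBySet_iff_subset_annihilator]
      change J.map (algebraMap R A) ≤ Module.annihilator A M
      rw [Ideal.map_le_iff_le_comap]
      intro j hj
      rw [Ideal.mem_comap, Module.mem_annihilator]
      exact hM j hj
    let _ : Module A0 M := htors.module
    have _ : IsScalarTower A A0 M := htors.isScalarTower
    have : Module.Finite A0 M := Module.Finite.of_restrictScalars_finite A A0 M
    obtain ⟨n, hn⟩ := (hF J).hasFFR (F ⊗[A0] M)
    refine loc_dev (F := F) S0 ?_ ?_ n M hn
    · intro k
      obtain ⟨n, hn⟩ := hR.hasFFR (Fin k → R ⧸ J)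
      have e1 : (A ⊗[R] (Fin k → R ⧸ J)) ≃ₗ[A] (Fin k → A ⊗[R] (R ⧸ J)) :=
        TensorProduct.piRight R A A (fun _ : Fin k => R ⧸ J)
      have e2 : (Fin k → A ⊗[R] (R ⧸ J)) ≃ₗ[A] (Fin k → A0) :=
        LinearEquiv.piCongrRight fun _ =>
          (Algebra.TensorProduct.quotIdealMapEquivTensorQuot A J).symm.toLinearEquiv
      exact ⟨n, ((hn.baseChange A).equiv e1).equiv e2⟩
    · intro N _ _ _ _ _ hd
      obtain ⟨_, ⟨d, hd, rfl⟩, h⟩ := hd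
      have h0 : ∀ (r : R) (m : N), algebraMap R A r • m = algebraMap R A0 r • m := by
        intro r m
        rw [← algebraMap_smul A0 (algebraMap R A r) m]
        rfl
      have : Module.Finite A N := Module.Finite.trans A0 N
      refine hsup d hd N ?_ ?_
      · intro j hj m
        rw [h0]
        have : algebraMap R A0 j = 0 := by
          change Ideal.Quotient.mk _ (algebraMap R A j) = 0
          rw [Ideal.Quotient.eq_zero_iff_mem]
          exact Ideal.mem_map_of_mem _ hj
        rw [this, zero_smul]
      · intro m
        rw [h0]; exact h m
  · obtain ⟨a, ha, b, hb, hab⟩ := (Ideal.not_isPrime_iff.mp hP).resolve_left hJ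
    let N := LinearMap.range (LinearMap.lsmul A M (algebraMap R A a))
    refine HasFFR.sub_ext N ?_ ?_
    · refine hsup b hb _ ?_ ?_
      · rintro j hj ⟨m, hm⟩
        exact Subtype.ext (hM j hj m)
      · rintro ⟨_, ⟨m, rfl⟩⟩
        refine Subtype.ext ?_
        simp only [LinearMap.lsmul_apply, SetLike.mk_smul_mk, ZeroMemClass.coe_zero]
        rw [← mul_smul, ← map_mul, mul_comm]
        exact hM _ hab m
    · refine hsup a ha _ ?_ ?_
      · intro j hj m
        obtain ⟨m, rfl⟩ := Submodule.mkQ_surjective _ m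
        rw [← map_smul, hM j hj, map_zero]
      · intro m
        obtain ⟨m, rfl⟩ := Submodule.mkQ_surjective _ m
        rw [← map_smul, Submodule.mkQ_apply, Submodule.Quotient.mk_eq_zero]
        exact ⟨m, rfl⟩

theorem ffr_fib {R : Type v} {A : Type u} [CommRing R] [CommRing A] [Algebra R A]
    [IsNoetherianRing R] [IsNoetherianRing A] [Module.Flat R A] (hR : FFRRing R)
    (hF : ∀ (P : Ideal R) [P.IsPrime], FFRRing (P.ResidueField ⊗[R] A)) : FFRRing A :=
  FFRRing.of_finite fun M _ _ _ => ffr_fib_aux hR hF ⊥ M (by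
    intro j hj m
    rw [Ideal.mem_bot.1 hj, map_zero, zero_smul])

theorem ffr_poly {R : Type*} [CommRing R] [IsNoetherianRing R] (hR : FFRRing R) :
    FFRRing (Polynomial R) := by
  refine ffr_fib hR ?_
  intro P _
  exact FFRRing.of_ringEquiv (polyEquivTensor R P.ResidueField).toRingEquiv FFRRing.of_pid

theorem ffr_mvPoly {R : Type*} [CommRing R] [IsNoetherianRing R] (hR : FFRRing R) (n : ℕ) :
    FFRRing (MvPolynomial (Fin n) R) := by
  induction n with
  | zero => exact FFRRing.of_ringEquiv (MvPolynomial.isEmptyRingEquiv R (Fin 0)).symm hR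
  | succ n ih =>
    exact FFRRing.of_ringEquiv (MvPolynomial.finSuccEquiv R n).symm.toRingEquiv (ffr_poly ih)

end FFRsec

namespace FFRsec
open MvPolynomial

theorem noeth_inj_gen {B P : Type*} [CommRing B] [CommRing P] [Algebra B P] [IsNoetherianRing P]
    (π : B) (hπ : ∀ x : P, π • x = 0 → x = 0) (φ : P →ₐ[B] P)
    (h : ∀ s, ∃ N : ℕ, ∃ p, π ^ N • s = φ p) (p : P) (hp : φ p = 0) : p = 0 := by
  have hπ' : ∀ N : ℕ, ∀ x : P, π ^ N • x = 0 → x = 0 := by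
    intro N
    induction N with
    | zero => intro x hx; simpa using hx
    | succ N ih => intro x hx; rw [pow_succ, mul_smul] at hx; exact hπ _ (ih _ hx)
  have hn : ∀ n : ℕ, ∀ s, ∃ N : ℕ, ∃ p, π ^ N • s = (φ ^ n) p := by
    intro n
    induction n with
    | zero => intro s; exact ⟨0, s, by simp⟩
    | succ n ih =>
      intro s
      obtain ⟨N, p, hp⟩ := h s
      obtain ⟨M, q, hq⟩ := ih p
      refine ⟨M + N, q, ?_⟩
      rw [pow_add, mul_smul, hp, ← map_smul, hq, pow_succ', AlgHom.mul_apply]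
  let K : ℕ →o Ideal P :=
    ⟨fun n => RingHom.ker (φ ^ n), monotone_nat_of_le_succ fun n x hx => by
      rw [RingHom.mem_ker] at *
      rw [pow_succ', AlgHom.mul_apply, hx, map_zero]⟩
  obtain ⟨n, hK⟩ := monotone_stabilizes_iff_noetherian.2 ‹IsNoetherianRing P› K
  obtain ⟨N, q, hq⟩ := hn n p
  have h1 : (φ ^ (n + 1)) q = 0 := by
    rw [pow_succ', AlgHom.mul_apply, ← hq, map_smul, hp, smul_zero]
  have h2 : q ∈ K n := by
    rw [hK (n + 1) (Nat.le_succ _)]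
    exact h1
  have h3 : (φ ^ n) q = 0 := h2
  rw [h3] at hq
  exact hπ' N p hq

theorem noeth_inj_mod {B P : Type*} [CommRing B] [CommRing P] [Algebra B P] [IsNoetherianRing P]
    (π : B) (φ : P →ₐ[B] P)
    (h : ∀ s, ∃ p s', s = φ p + π • s') (p p' : P) (hp : φ p = π • p') : ∃ q, p = π • q := by
  have hn : ∀ n : ℕ, ∀ s, ∃ p s', s = (φ ^ n) p + π • s' := by
    intro n
    induction n with
    | zero => intro s; exact ⟨s, 0, by simp⟩
    | succ n ih =>
      intro s
      obtain ⟨p, s', hp⟩ := h s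
      obtain ⟨q, p', hq⟩ := ih p
      refine ⟨q, φ p' + s', ?_⟩
      rw [hp, hq, map_add, map_smul, pow_succ', AlgHom.mul_apply, smul_add, add_assoc]
  let K : ℕ →o Ideal P :=
    ⟨fun n => (Ideal.span {algebraMap B P π}).comap (φ ^ n),
      monotone_nat_of_le_succ fun n x hx => by
      rw [Ideal.mem_comap, Ideal.mem_span_singleton'] at *
      obtain ⟨a, ha⟩ := hx
      exact ⟨φ a, by rw [pow_succ', AlgHom.mul_apply, ← ha, map_mul, AlgHom.commutes]⟩⟩
  obtain ⟨n, hK⟩ := monotone_stabilizes_iff_noetherian.2 ‹IsNoetherianRing P› K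
  obtain ⟨q, s', hq⟩ := hn n p
  have h1 : q ∈ K (n + 1) := by
    change (φ ^ (n + 1)) q ∈ Ideal.span _
    rw [Ideal.mem_span_singleton']
    refine ⟨p' - φ s', ?_⟩
    have := congrArg φ hq
    rw [hp, map_add, map_smul] at this
    rw [pow_succ', AlgHom.mul_apply, mul_comm, ← Algebra.smul_def, smul_sub, this]
    ring
  rw [← hK (n + 1) (Nat.le_succ _)] at h1
  have h3 : (φ ^ n) q ∈ Ideal.span {algebraMap B P π} := h1
  obtain ⟨a, ha⟩ := Ideal.mem_span_singleton'.1 h3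
  exact ⟨a + s', by rw [hq, ← ha, smul_add, Algebra.smul_def π a, mul_comm]⟩

theorem pow_nzd {B M : Type*} [CommRing B] [AddCommGroup M] [Module B M] {π : B}
    (hπ : ∀ x : M, π • x = 0 → x = 0) (N : ℕ) : ∀ x : M, π ^ N • x = 0 → x = 0 := by
  induction N with
  | zero => intro x hx; simpa using hx
  | succ N ih => intro x hx; rw [pow_succ, mul_smul] at hx; exact hπ _ (ih _ hx)

theorem pow_nzd_inj {B M : Type*} [CommRing B] [AddCommGroup M] [Module B M] {π : B}
    (hπ : ∀ x : M, π • x = 0 → x = 0) (N : ℕ) {x y : M} (h : π ^ N • x = π ^ N • y) : x = y := by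
  rw [← sub_eq_zero]
  apply pow_nzd hπ N
  rw [smul_sub, h, sub_self]

theorem mvPoly_nzd {B σ : Type*} [CommRing B] {π : B}
    (hπ : ∀ x : B, π • x = 0 → x = 0) (x : MvPolynomial σ B) (h : π • x = 0) : x = 0 := by
  ext m
  apply hπ
  rw [← MvPolynomial.coeff_smul, h]
  rfl

theorem mvPoly_nzd' {B A σ : Type*} [CommRing B] [CommRing A] [Algebra B A] {π : B}
    (hπ : ∀ x : A, π • x = 0 → x = 0) (x : MvPolynomial σ A) (h : π • x = 0) : x = 0 := by
  ext m
  apply hπ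
  rw [← MvPolynomial.coeff_smul, h]
  rfl

theorem Zgen_pow {B A : Type*} [CommRing B] [CommRing A] [Algebra B A] {σ : Type*} (Z : σ → A)
    {π : B} (hZ : ∀ a : A, ∃ (p : MvPolynomial σ B) (a' : A), a = aeval Z p + π • a') (e : ℕ) :
    ∀ a : A, ∃ (p : MvPolynomial σ B) (a' : A), a = aeval Z p + π ^ e • a' := by
  induction e with
  | zero => intro a; exact ⟨0, a, by simp⟩
  | succ e ih =>
    intro a
    obtain ⟨p, a', h⟩ := ih a
    obtain ⟨q, a'', h'⟩ := hZ a'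
    refine ⟨p + π ^ e • q, a'', ?_⟩
    rw [map_add, map_smul, pow_succ, mul_smul, add_assoc, ← smul_add, ← h', h]

theorem Zinj_pow {B A : Type*} [CommRing B] [CommRing A] [Algebra B A] {σ : Type*} (Z : σ → A)
    {π : B} (hA : ∀ x : A, π • x = 0 → x = 0)
    (hZ : ∀ (p : MvPolynomial σ B) (a' : A), aeval Z p = π • a' → ∃ q, p = π • q) (e : ℕ) :
    ∀ (p : MvPolynomial σ B) (a' : A), aeval Z p = π ^ e • a' → ∃ q, p = π ^ e • q := by
  induction e with
  | zero => intro p a' _; exact ⟨p, by simp⟩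
  | succ e ih =>
    intro p a' h
    obtain ⟨q, rfl⟩ := hZ p (π ^ e • a') (by rw [h, pow_succ', mul_smul])
    obtain ⟨r, rfl⟩ := ih q a' (by
      rw [map_smul, pow_succ', mul_smul] at h
      exact pow_nzd_inj (π := π) hA 1 (by simpa using h))
    exact ⟨r, by rw [pow_succ', mul_smul]⟩

/-- second order Taylor expansion -/
theorem taylor2 {B S : Type*} [CommRing B] [CommRing S] [Algebra B S] {l : ℕ}
    (g : MvPolynomial (Fin l) B) (x u : Fin l → S) (t : B) :
    ∃ w, aeval (fun i => x i + t • u i) g =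
      aeval x g + t • ∑ i, aeval x (pderiv i g) * u i + (t ^ 2) • w := by
  induction g using MvPolynomial.induction_on with
  | C b => exact ⟨0, by simp⟩
  | add p q hp hq =>
    obtain ⟨w, hw⟩ := hp
    obtain ⟨w', hw'⟩ := hq
    refine ⟨w + w', ?_⟩
    simp only [map_add, hw, hw', add_mul, Finset.sum_add_distrib, smul_add]
    ring
  | mul_X p j hp =>
    obtain ⟨w, hw⟩ := hp
    refine ⟨w * (x j + t • u j) + (∑ i, aeval x (pderiv i p) * u i) * u j, ?_⟩
    have h1 : ∑ i, aeval x (pderiv i (p * X j)) * u i =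
        (∑ i, aeval x (pderiv i p) * u i) * x j + aeval x p * u j := by
      simp only [Derivation.leibniz, smul_eq_mul, map_add, map_mul, aeval_X, pderiv_X, add_mul,
        Finset.sum_add_distrib]
      rw [add_comm, Finset.sum_mul]
      congr 1
      · exact Finset.sum_congr rfl fun i _ => by ring
      · rw [Finset.sum_eq_single j]
        · simp
        · intro i _ hij; simp [hij.symm]
        · simp
    rw [h1, map_mul, aeval_X, hw, map_mul, aeval_X]
    simp only [Algebra.smul_def, map_pow]
    ring

/-- first order Taylor congruence -/
theorem taylor1 {B S : Type*} [CommRing B] [CommRing S] [Algebra B S] {σ : Type*}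
    (g : MvPolynomial σ B) (x u : σ → S) (t : B) :
    ∃ w, aeval (fun i => x i + t • u i) g = aeval x g + t • w := by
  induction g using MvPolynomial.induction_on with
  | C b => exact ⟨0, by simp⟩
  | add p q hp hq =>
    obtain ⟨w, hw⟩ := hp
    obtain ⟨w', hw'⟩ := hq
    refine ⟨w + w', ?_⟩
    simp only [map_add, hw, hw', smul_add]
    ring
  | mul_X p j hp =>
    obtain ⟨w, hw⟩ := hp
    refine ⟨w * (x j + t • u j) + aeval x p * u j, ?_⟩
    rw [map_mul, aeval_X, hw, map_mul, aeval_X]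
    simp only [Algebra.smul_def]
    ring

/-- extension of a homomorphism along the almost isomorphism `B[Y] → A`. -/
theorem graph_ext {B A S : Type*} [CommRing B] [CommRing A] [CommRing S] [Algebra B A] [Algebra B S]
    {σ : Type*} (Y : σ → A) {π : B}
    (hS : ∀ x : S, π • x = 0 → x = 0)
    (hY : Function.Injective (aeval Y : MvPolynomial σ B →ₐ[B] A))
    (τ : MvPolynomial σ B →ₐ[B] S) (G : Set A) (hG : Algebra.adjoin B G = ⊤)
    (h : ∀ a ∈ G, ∃ (N : ℕ) (P : MvPolynomial σ B) (c : S), π ^ N • a = aeval Y P ∧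
      π ^ N • c = τ P) :
    ∃ ι : A →ₐ[B] S, ∀ P, ι (aeval Y P) = τ P := by
  let Γ : Subalgebra B (A × S) :=
    { carrier := {x | ∃ (N : ℕ) (P : MvPolynomial σ B), π ^ N • x.1 = aeval Y P ∧ π ^ N • x.2 = τ P}
      mul_mem' := by
        rintro x y ⟨N, P, h1, h2⟩ ⟨M, Q, h3, h4⟩
        refine ⟨N + M, P * Q, ?_, ?_⟩
        · rw [map_mul, ← h1, ← h3, pow_add, Prod.fst_mul, smul_mul_smul_comm]
        · rw [map_mul, ← h2, ← h4, pow_add, Prod.snd_mul, smul_mul_smul_comm]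
      add_mem' := by
        rintro x y ⟨N, P, h1, h2⟩ ⟨M, Q, h3, h4⟩
        refine ⟨N + M, π ^ M • P + π ^ N • Q, ?_, ?_⟩
        · rw [map_add, map_smul, map_smul, ← h1, ← h3, Prod.fst_add, smul_add, ← mul_smul,
            ← mul_smul, ← pow_add, ← pow_add, add_comm M N]
        · rw [map_add, map_smul, map_smul, ← h2, ← h4, Prod.snd_add, smul_add, ← mul_smul,
            ← mul_smul, ← pow_add, ← pow_add, add_comm M N]
      algebraMap_mem' := fun b => ⟨0, C b, by simp, by
        simp [← MvPolynomial.algebraMap_eq]⟩ }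
  let f : Γ →ₐ[B] A := (AlgHom.fst B A S).comp Γ.val
  have hinj : Function.Injective f := by
    rw [injective_iff_map_eq_zero]
    rintro ⟨⟨a, c⟩, N, P, h1, h2⟩ h0
    have h0' : a = 0 := h0
    subst h0'
    simp only [smul_zero] at h1 h2
    have : P = 0 := hY (by rw [← h1, map_zero])
    rw [this, map_zero] at h2
    have := pow_nzd hS N c h2
    subst this
    rfl
  have hsurj : Function.Surjective f := by
    rw [← AlgHom.range_eq_top, eq_top_iff, ← hG, Algebra.adjoin_le_iff]
    intro a ha
    obtain ⟨N, P, c, h1, h2⟩ := h a ha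
    exact ⟨⟨(a, c), N, P, h1, h2⟩, rfl⟩
  let E : Γ ≃ₐ[B] A := AlgEquiv.ofBijective f ⟨hinj, hsurj⟩
  refine ⟨((AlgHom.snd B A S).comp Γ.val).comp E.symm.toAlgHom, fun P => ?_⟩
  have : E.symm (aeval Y P) = ⟨(aeval Y P, τ P), 0, P, by simp, by simp⟩ := by
    rw [AlgEquiv.symm_apply_eq]; rfl
  simp only [AlgHom.comp_apply]
  change Prod.snd (Subtype.val (E.symm (aeval Y P))) = _
  rw [this]

end FFRsec

namespace FFRsec
open MvPolynomial

theorem patch_data {B A : Type*} [CommRing B] [CommRing A] [Algebra B A] [Algebra.FiniteType B A]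
    {π : B} (hB : ∀ x : B, π • x = 0 → x = 0) (hA : ∀ x : A, π • x = 0 → x = 0)
    {l : ℕ} (Y Z : Fin l → A)
    (hYinj : Function.Injective (aeval Y : MvPolynomial (Fin l) B →ₐ[B] A))
    (hYgen : ∀ a : A, ∃ (N : ℕ) (p : MvPolynomial (Fin l) B), π ^ N • a = aeval Y p)
    (hZgen : ∀ a : A, ∃ (p : MvPolynomial (Fin l) B) (a' : A), a = aeval Z p + π • a')
    (hZinj : ∀ (p : MvPolynomial (Fin l) B) (a' : A), aeval Z p = π • a' → ∃ q, p = π • q) :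
    ∃ (e : ℕ) (g : Fin l → MvPolynomial (Fin l) B) (c : Fin l → A)
      (ι : A →ₐ[B] MvPolynomial (Fin l ⊕ Fin l) B) (w : Fin l → MvPolynomial (Fin l ⊕ Fin l) B),
      (∀ j, Y j = aeval Z (g j) + π ^ e • c j) ∧
      (∀ j, ι (Y j) = aeval (fun i => X (Sum.inl i)) (g j) + π ^ e • X (Sum.inr j)) ∧
      (∀ j, π ^ e • (ι (c j) - X (Sum.inr j) - π • w j) =
        ∑ i, ι (aeval Z (pderiv i (g j))) * (X (Sum.inl i) - ι (Z i))) := by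
  classical
  set S := MvPolynomial (Fin l ⊕ Fin l) B
  have hS : ∀ x : S, π • x = 0 → x = 0 := fun x => mvPoly_nzd hB x
  obtain ⟨gens, hgens⟩ := (Algebra.FiniteType.out : (⊤ : Subalgebra B A).FG)
  -- a common exponent
  choose N0 p0 hp0 using hYgen
  obtain ⟨e', he'⟩ : ∃ e', ∀ a ∈ gens ∪ Finset.univ.image Z, N0 a ≤ e' :=
    ⟨(gens ∪ Finset.univ.image Z).sup N0, fun a ha => Finset.le_sup ha⟩
  have hexp : ∀ a ∈ gens ∪ Finset.univ.image Z, ∃ p : MvPolynomial (Fin l) B, π ^ e' • a = aeval Y p := by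
    intro a ha
    refine ⟨π ^ (e' - N0 a) • p0 a, ?_⟩
    rw [map_smul, ← hp0, ← mul_smul, ← pow_add, Nat.sub_add_cancel (he' a ha)]
  let e := 2 * e' + 1
  choose g c hgc using fun j => Zgen_pow Z hZgen e (Y j)
  let x1 : Fin l → S := fun i => X (Sum.inl i)
  let V : Fin l → S := fun j => X (Sum.inr j)
  let τ : MvPolynomial (Fin l) B →ₐ[B] S := aeval fun j => aeval x1 (g j) + π ^ e • V j
  -- key computation
  have key : ∀ (a : A) (P q : MvPolynomial (Fin l) B) (k : ℕ), k ≤ e →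
      (∃ a', aeval Y P = aeval Z q + π ^ k • a') → ∃ c, τ P = aeval x1 q + π ^ k • c := by
    rintro a P q k hk ⟨a', ha⟩
    obtain ⟨w1, hw1⟩ := taylor1 P (fun j => aeval Z (g j)) c (π ^ e)
    have h1 : (fun j => aeval Z (g j) + π ^ e • c j) = Y := by ext j; exact (hgc j).symm
    rw [h1] at hw1
    have h2 : aeval Z (aeval g P) = aeval (fun j => aeval Z (g j)) P := by
      rw [← AlgHom.comp_apply, MvPolynomial.comp_aeval]
    have h3 : aeval Z (aeval g P - q) = π ^ k • (a' - π ^ (e - k) • w1) := by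
      rw [map_sub, h2, smul_sub, ← mul_smul, ← pow_add, Nat.add_sub_cancel' hk]
      rw [ha] at hw1
      rw [sub_eq_sub_iff_add_eq_add, ← hw1]; ring
    obtain ⟨r, hr⟩ := Zinj_pow Z hA hZinj k _ _ h3
    obtain ⟨w2, hw2⟩ := taylor1 P (fun j => aeval x1 (g j)) V (π ^ e)
    have h4 : aeval x1 (aeval g P) = aeval (fun j => aeval x1 (g j)) P := by
      rw [← AlgHom.comp_apply, MvPolynomial.comp_aeval]
    refine ⟨aeval x1 r + π ^ (e - k) • w2, ?_⟩
    change aeval (fun j => aeval x1 (g j) + π ^ e • V j) P = _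
    rw [hw2, ← h4, eq_add_of_sub_eq hr, map_add, map_smul, smul_add, ← mul_smul (π ^ k),
      ← pow_add, Nat.add_sub_cancel' hk]
    ring
  have hle : e' ≤ e := by omega
  obtain ⟨ι, hι⟩ := graph_ext Y hS hYinj τ (gens : Set A) hgens (by
    intro a ha
    obtain ⟨P, hP⟩ := hexp a (Finset.mem_union_left _ ha)
    obtain ⟨c, hc⟩ := key a P 0 e' hle ⟨a, by rw [← hP]; simp⟩
    exact ⟨e', P, c, hP, by rw [hc]; simp⟩)
  have hιY : ∀ j, ι (Y j) = aeval x1 (g j) + π ^ e • V j := by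
    intro j
    have := hι (X j)
    rwa [aeval_X, aeval_X] at this
  have hιZ : ∀ i, ∃ u, x1 i = ι (Z i) + π ^ (e' + 1) • u := by
    intro i
    obtain ⟨P, hP⟩ := hexp (Z i) (Finset.mem_union_right _ (by simp))
    obtain ⟨d, hd⟩ := key (Z i) P (π ^ e' • X i) e le_rfl ⟨0, by rw [← hP]; simp⟩
    rw [← hι, ← hP, map_smul, map_smul, aeval_X] at hd
    refine ⟨-d, ?_⟩
    apply pow_nzd_inj hS e'
    rw [smul_add, ← mul_smul, ← pow_add, hd, show e' + (e' + 1) = e by omega]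
    simp
  choose u hu using hιZ
  choose w hw using fun j => taylor2 (g j) (fun i => ι (Z i)) u (π ^ (e' + 1))
  refine ⟨e, g, c, ι, w, hgc, hιY, ?_⟩
  intro j
  have h1 : (fun i => ι (Z i) + π ^ (e' + 1) • u i) = x1 := by ext1 i; exact (hu i).symm
  have h2 := hw j
  rw [h1] at h2
  have h3 := hιY j
  rw [hgc j, map_add, map_smul] at h3
  have h4 : ∀ p : MvPolynomial (Fin l) B, ι (aeval Z p) = aeval (fun i => ι (Z i)) p := by
    intro p
    rw [← AlgHom.comp_apply, MvPolynomial.comp_aeval]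
  have h5 : ∑ i, ι (aeval Z (pderiv i (g j))) * (X (Sum.inl i) - ι (Z i)) =
      π ^ (e' + 1) • ∑ i, aeval (fun i => ι (Z i)) (pderiv i (g j)) * u i := by
    rw [Finset.smul_sum]
    refine Finset.sum_congr rfl fun i _ => ?_
    have : (X (Sum.inl i) : S) = x1 i := rfl
    rw [this, hu i, h4, add_sub_cancel_left, mul_smul_comm]
  rw [h5]
  rw [h2, h4] at h3
  have h6 : π ^ e • (π • w j) = (π ^ (e' + 1)) ^ 2 • w j := by
    rw [← mul_smul, ← pow_succ, ← pow_mul]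
    congr 2; omega
  rw [smul_sub, smul_sub, h6]
  change _ - π ^ e • V j - _ = _
  linear_combination h3

end FFRsec

namespace FFRsec
open MvPolynomial

theorem der_chain {B A M σ : Type*} [CommRing B] [CommRing A] [Algebra B A] [AddCommGroup M]
    [Module A M] [Module B M] [IsScalarTower B A M] [Fintype σ]
    (D : Derivation B A M) (z : σ → A) (p : MvPolynomial σ B) :
    D (aeval z p) = ∑ x, aeval z (pderiv x p) • D (z x) := by
  classical
  induction p using MvPolynomial.induction_on with
  | C b => simp
  | add p q hp hq => simp only [map_add, hp, hq, add_smul, Finset.sum_add_distrib]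
  | mul_X p j hp =>
    simp only [Derivation.leibniz, smul_eq_mul, map_add, map_mul, aeval_X, pderiv_X, add_smul,
        Finset.sum_add_distrib, hp]
    congr 1
    · rw [Finset.sum_eq_single j]
      · simp
      · intro i _ hij; simp [hij.symm]
      · simp
    · rw [Finset.smul_sum]
      exact Finset.sum_congr rfl fun i _ => by rw [mul_smul]

theorem patch_split {B A : Type*} [CommRing B] [CommRing A] [Algebra B A]
    {π : B} (hB : ∀ x : B, π • x = 0 → x = 0) (hA : ∀ x : A, π • x = 0 → x = 0)
    {l : ℕ} (Y Z : Fin l → A)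
    (hYgen : ∀ a : A, ∃ (N : ℕ) (p : MvPolynomial (Fin l) B), π ^ N • a = aeval Y p)
    (e : ℕ) (g : Fin l → MvPolynomial (Fin l) B) (c : Fin l → A)
    (ι : A →ₐ[B] MvPolynomial (Fin l ⊕ Fin l) B) (w : Fin l → MvPolynomial (Fin l ⊕ Fin l) B)
    (h1 : ∀ j, Y j = aeval Z (g j) + π ^ e • c j)
    (h2 : ∀ j, ι (Y j) = aeval (fun i => X (Sum.inl i)) (g j) + π ^ e • X (Sum.inr j))
    (h3 : ∀ j, π ^ e • (ι (c j) - X (Sum.inr j) - π • w j) =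
        ∑ i, ι (aeval Z (pderiv i (g j))) * (X (Sum.inl i) - ι (Z i))) :
    ∃ (q : (Fin l ⊕ Fin l → A) →ₗ[A] Ω[A⁄B]) (σ : Ω[A⁄B] →ₗ[A] (Fin l ⊕ Fin l → A)),
      (∀ ω, q (σ ω) = ω) ∧
      ∀ ω, ∑ x, ι (σ ω x) * (Sum.elim (fun i => X (Sum.inl i) - ι (Z i))
        (fun j => -(ι (c j) - X (Sum.inr j) - π • w j)) x) = 0 := by
  classical
  let S := MvPolynomial (Fin l ⊕ Fin l) B
  have hS : ∀ x : S, π • x = 0 → x = 0 := fun x => mvPoly_nzd hB x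
  let ρ : MvPolynomial (Fin l ⊕ Fin l) B →ₐ[B] A := aeval (Sum.elim Z c)
  have hρX : ∀ x, ρ (X x) = Sum.elim Z c x := fun x => aeval_X _ x
  have hρx : ∀ p : MvPolynomial (Fin l) B, ρ (aeval (fun i => X (Sum.inl i)) p) = aeval Z p := by
    intro p
    rw [← AlgHom.comp_apply, MvPolynomial.comp_aeval]
    congr 2
    ext i
    exact hρX _
  have hρY : ∀ p : MvPolynomial (Fin l) B, ρ (ι (aeval Y p)) = aeval Y p := by
    intro p
    rw [← AlgHom.comp_apply, ← AlgHom.comp_apply, MvPolynomial.comp_aeval]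
    congr 2
    ext j
    rw [AlgHom.comp_apply, h2, map_add, hρx, map_smul, h1 j, hρX]
    rfl
  have hρι : ∀ a, ρ (ι a) = a := by
    intro a
    obtain ⟨N, p, hp⟩ := hYgen a
    apply pow_nzd_inj (B := B) (π := π) hA N
    rw [← map_smul, ← map_smul, hp, hρY]
  let d : Derivation B A (Fin l ⊕ Fin l → A) :=
    Derivation.mk' (LinearMap.pi fun x =>
      ρ.toLinearMap ∘ₗ (pderiv (R := B) x).toLinearMap ∘ₗ ι.toLinearMap) (by
      intro a b
      ext x
      simp [hρι])
  have hd : ∀ a x, d a x = ρ (pderiv x (ι a)) := fun a x => rfl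
  refine ⟨Fintype.linearCombination A (fun x => KaehlerDifferential.D B A (ρ (X x))),
    d.liftKaehlerDifferential, ?_, ?_⟩
  · intro ω
    refine LinearMap.congr_fun (f := (Fintype.linearCombination A
      (fun x => KaehlerDifferential.D B A (ρ (X x)))) ∘ₗ d.liftKaehlerDifferential)
      (g := LinearMap.id) ?_ ω
    apply Derivation.liftKaehlerDifferential_unique
    ext1 a
    change (Fintype.linearCombination A (fun x => KaehlerDifferential.D B A (ρ (X x))))
      (d.liftKaehlerDifferential (KaehlerDifferential.D B A a)) = KaehlerDifferential.D B A a
    simp only [Derivation.liftKaehlerDifferential_comp_D, Fintype.linearCombination_apply, hd, hρX]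
    have := der_chain (KaehlerDifferential.D B A) (Sum.elim Z c) (ι a)
    rw [← show ρ (ι a) = _ from rfl, hρι] at this
    exact this.symm
  · let _ : Algebra A S := ι.toRingHom.toAlgebra
    have hsm : ∀ (a : A) (s : S), a • s = ι a * s := fun a s => rfl
    have _ : IsScalarTower B A S := IsScalarTower.of_algebraMap_eq (fun b => (ι.commutes b).symm)
    let v : Fin l ⊕ Fin l → S := Sum.elim (fun i => X (Sum.inl i) - ι (Z i))
        (fun j => -(ι (c j) - X (Sum.inr j) - π • w j))
    let pm : (Fin l ⊕ Fin l → A) →ₗ[A] S := Fintype.linearCombination A v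
    have hpm : ∀ f, pm f = ∑ x, ι (f x) * v x := fun f => by
      simp [pm, Fintype.linearCombination_apply, hsm]
    let δ : Derivation B A S := pm.compDer d
    have hδY : ∀ k, δ (Y k) = 0 := by
      intro k
      change pm (d (Y k)) = 0
      rw [hpm, Fintype.sum_sum_type]
      have e1 : ∀ i, d (Y k) (Sum.inl i) = aeval Z (pderiv i (g k)) := by
        intro i
        rw [hd, h2, map_add, Derivation.map_smul, pderiv_X]
        have : pderiv (Sum.inl i) (aeval (fun i => (X (Sum.inl i)   : MvPolynomial (Fin l ⊕ Fin l) B)) (g k)) =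
            aeval (fun i => (X (Sum.inl i)   : MvPolynomial (Fin l ⊕ Fin l) B)) (pderiv i (g k)) := by
          rw [der_chain]
          rw [Finset.sum_eq_single i]
          · simp
          · intro j _ hij
            rw [pderiv_X_of_ne (by simpa using hij)]; simp
          · simp
        rw [this, map_add, hρx]
        simp
      have e2 : ∀ j, d (Y k) (Sum.inr j) = if j = k then algebraMap B A (π ^ e) else 0 := by
        intro j
        rw [hd, h2, map_add, Derivation.map_smul, pderiv_X]
        have : pderiv (Sum.inr j) (aeval (fun i => (X (Sum.inl i)   : MvPolynomial (Fin l ⊕ Fin l) B)) (g k)) = 0 := by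
          rw [der_chain]
          refine Finset.sum_eq_zero fun i _ => ?_
          rw [pderiv_X_of_ne (by simp)]; simp
        rw [this, zero_add, map_smul]
        by_cases hjk : j = k
        · subst hjk; simp [Algebra.smul_def]
        · rw [Pi.single_eq_of_ne (by simpa using Ne.symm hjk)]; simp [hjk]
      simp only [e1, e2]
      rw [Finset.sum_eq_single (s := Finset.univ) (f := fun x => ι (if x = k then
        (algebraMap B A) (π ^ e) else 0) * v (Sum.inr x)) k]
      · have := h3 k
        simp only [v, Sum.elim_inl, Sum.elim_inr, if_true]
        rw [← this, AlgHom.commutes, ← Algebra.smul_def, smul_neg, add_neg_cancel]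
      · intro j _ hj; simp [hj]
      · simp
    have hδ : ∀ a, δ a = 0 := by
      intro a
      obtain ⟨N, p, hp⟩ := hYgen a
      apply pow_nzd hS N
      rw [← Derivation.map_smul, hp, der_chain]
      exact Finset.sum_eq_zero fun i _ => by rw [hδY, smul_zero]
    intro ω
    rw [← hpm]
    refine LinearMap.congr_fun (f := pm ∘ₗ d.liftKaehlerDifferential) (g := 0) ?_ ω
    apply Derivation.liftKaehlerDifferential_unique
    ext1 a
    change pm (d.liftKaehlerDifferential (KaehlerDifferential.D B A a)) = 0
    rw [Derivation.liftKaehlerDifferential_comp_D]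
    exact hδ a

end FFRsec

namespace FFRsec
open MvPolynomial

/-- elements which are in the range modulo `π` -/
def modRange {B P Q : Type*} [CommRing B] [CommRing P] [CommRing Q] [Algebra B P] [Algebra B Q]
    (φ : P →ₐ[B] Q) (π : B) : Subalgebra B Q where
  carrier := {s | ∃ p s', s = φ p + π • s'}
  mul_mem' := by
    rintro x y ⟨p, s, rfl⟩ ⟨q, t, rfl⟩
    refine ⟨p * q, φ p * t + φ q * s + π • (s * t), ?_⟩
    simp only [map_mul, Algebra.smul_def]
    ring
  add_mem' := by
    rintro x y ⟨p, s, rfl⟩ ⟨q, t, rfl⟩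
    refine ⟨p + q, s + t, ?_⟩
    simp only [map_add, Algebra.smul_def]
    ring
  algebraMap_mem' := fun b => ⟨algebraMap B P b, 0, by simp⟩

/-- elements some `π`-power multiple of which is in the range -/
def almRange {B P Q : Type*} [CommRing B] [CommRing P] [CommRing Q] [Algebra B P] [Algebra B Q]
    (φ : P →ₐ[B] Q) (π : B) : Subalgebra B Q where
  carrier := {s | ∃ (N : ℕ) (p : P), π ^ N • s = φ p}
  mul_mem' := by
    rintro x y ⟨N, p, h1⟩ ⟨M, q, h2⟩
    refine ⟨N + M, p * q, ?_⟩
    rw [map_mul, ← h1, ← h2, pow_add, smul_mul_smul_comm]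
  add_mem' := by
    rintro x y ⟨N, p, h1⟩ ⟨M, q, h2⟩
    refine ⟨N + M, π ^ M • p + π ^ N • q, ?_⟩
    rw [map_add, map_smul, map_smul, ← h1, ← h2, smul_add, ← mul_smul,
            ← mul_smul, ← pow_add, ← pow_add, add_comm M N]
  algebraMap_mem' := fun b => ⟨0, algebraMap B P b, by simp⟩

theorem range_le_mod {B P Q : Type*} [CommRing B] [CommRing P] [CommRing Q] [Algebra B P]
    [Algebra B Q] (φ : P →ₐ[B] Q) (π : B) : φ.range ≤ modRange φ π := by
  rintro _ ⟨p, rfl⟩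
  exact ⟨p, 0, by simp⟩

theorem range_le_alm {B P Q : Type*} [CommRing B] [CommRing P] [CommRing Q] [Algebra B P]
    [Algebra B Q] (φ : P →ₐ[B] Q) (π : B) : φ.range ≤ almRange φ π := by
  rintro _ ⟨p, rfl⟩
  exact ⟨0, p, by simp⟩

theorem sub_top {B A τ : Type*} [CommRing B] [CommRing A] [Algebra B A]
    (U : Subalgebra B (MvPolynomial τ A)) (hC : ∀ a, C a ∈ U) (hX : ∀ t, X t ∈ U) (s) : s ∈ U := by
  induction s using MvPolynomial.induction_on with
  | C a => exact hC a
  | add p q hp hq => exact U.add_mem hp hq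
  | mul_X p t hp => exact U.mul_mem hp (hX t)

theorem sub_topC {B τ ν : Type*} [CommRing B]
    (U : Subalgebra B (MvPolynomial τ (MvPolynomial ν B))) (hC : ∀ a, C (X a) ∈ U) (s) :
    C s ∈ U := by
  induction s using MvPolynomial.induction_on with
  | C a => exact U.algebraMap_mem a
  | add p q hp hq => rw [C.map_add]; exact U.add_mem hp hq
  | mul_X p t hp => rw [C.map_mul]; exact U.mul_mem hp (hC t)

theorem smul_C' {B A τ : Type*} [CommRing B] [CommRing A] [Algebra B A] (b : B) (a : A) :
    b • (C a : MvPolynomial τ A) = C (b • a) := by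
  rw [Algebra.smul_def b a, C.map_mul, Algebra.smul_def b (C a : MvPolynomial τ A)]; rfl

theorem psi_range {A T I J : Type*} [CommRing A] [CommRing T] [Algebra A T] [Fintype I] [Fintype J]
    [DecidableEq I] [DecidableEq J] (Ψ : ((I → A) × (J → A)) →ₗ[A] T) (x y) :
    ∃ p, (aeval (Sum.elim (fun i => Ψ (Pi.single i 1, 0)) (fun j => Ψ (0, Pi.single j 1))) :
      MvPolynomial (I ⊕ J) A →ₐ[A] T) p = Ψ (x, y) := by
  have h1 : Ψ (x, y) = ∑ i, x i • Ψ (Pi.single i 1, 0) + ∑ j, y j • Ψ (0, Pi.single j 1) := by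
    have h0 : Ψ (x, y) = (Ψ ∘ₗ LinearMap.inl A _ _) x + (Ψ ∘ₗ LinearMap.inr A _ _) y := by
      simp [← map_add]
    rw [h0]
    have e1 : x = ∑ i, x i • Pi.single i (1 : A) := by
      ext j; simp [Pi.single_apply, Finset.sum_apply]
    have e2 : y = ∑ i, y i • Pi.single i (1 : A) := by
      ext j; simp [Pi.single_apply, Finset.sum_apply]
    conv_lhs => rw [e1, e2]
    simp only [map_sum, map_smul]
    rfl
  refine ⟨∑ i, x i • X (Sum.inl i) + ∑ j, y j • X (Sum.inr j), ?_⟩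
  rw [h1]
  simp

set_option maxHeartbeats 2000000 in
theorem patch_final {B A M : Type*} [CommRing B] [IsNoetherianRing B] [CommRing A] [Algebra B A]
    [AddCommGroup M] [Module A M]
    {π : B} (hB : ∀ x : B, π • x = 0 → x = 0) (hA : ∀ x : A, π • x = 0 → x = 0)
    {l s : ℕ} (Y Z : Fin l → A)
    (hYgen : ∀ a : A, ∃ (N : ℕ) (p : MvPolynomial (Fin l) B), π ^ N • a = aeval Y p)
    (hZgen : ∀ a : A, ∃ (p : MvPolynomial (Fin l) B) (a' : A), a = aeval Z p + π • a')
    (e : ℕ) (g : Fin l → MvPolynomial (Fin l) B) (c : Fin l → A)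
    (ι : A →ₐ[B] MvPolynomial (Fin l ⊕ Fin l) B) (w : Fin l → MvPolynomial (Fin l ⊕ Fin l) B)
    (h2 : ∀ j, ι (Y j) = aeval (fun i => X (Sum.inl i)) (g j) + π ^ e • X (Sum.inr j))
    (q : (Fin l ⊕ Fin l → A) →ₗ[A] M) (σ : M →ₗ[A] (Fin l ⊕ Fin l → A))
    (hσ : ∀ ω, q (σ ω) = ω)
    (hσ' : ∀ ω, ∑ x, ι (σ ω x) * (Sum.elim (fun i => X (Sum.inl i) - ι (Z i))
        (fun j => -(ι (c j) - X (Sum.inr j) - π • w j)) x) = 0)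
    (E : (M × (Fin s → A)) ≃ₗ[A] (Fin (l + s) → A)) :
    Nonempty (MvPolynomial ((Fin l ⊕ Fin l) ⊕ Fin s) A ≃ₐ[B]
      MvPolynomial (Fin (l + s) ⊕ (Fin l ⊕ Fin l)) B) := by
  classical
  let S := MvPolynomial (Fin l ⊕ Fin l) B
  let T := MvPolynomial (Fin (l + s)) S
  let K := (Fin l ⊕ Fin l) ⊕ Fin s
  let _ : Algebra A S := ι.toRingHom.toAlgebra
  have hsm : ∀ (a : A) (s : S), a • s = ι a * s := fun a s => rfl
  have : IsScalarTower B A S := IsScalarTower.of_algebraMap_eq (fun b => (ι.commutes b).symm)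
  have : IsScalarTower B A T := inferInstance
  let v : Fin l ⊕ Fin l → S := Sum.elim (fun i => X (Sum.inl i) - ι (Z i))
        (fun j => -(ι (c j) - X (Sum.inr j) - π • w j))
  let pm : (Fin l ⊕ Fin l → A) →ₗ[A] S := Fintype.linearCombination A v
  have hpm : ∀ f, pm f = ∑ x, ι (f x) * v x := fun f => by
    simp [pm, Fintype.linearCombination_apply, hsm]
  have hpσ : ∀ ω, pm (σ ω) = 0 := fun ω => by rw [hpm]; exact hσ' ω
  let CT : S →ₐ[A] T := IsScalarTower.toAlgHom A S T
  let Xm : (Fin (l + s) → A) →ₗ[A] T := Fintype.linearCombination A (fun t => (X t : T))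
  let Ψ : ((Fin l ⊕ Fin l → A) × (Fin s → A)) →ₗ[A] T :=
    CT.toLinearMap ∘ₗ pm ∘ₗ LinearMap.fst A _ _ +
      Xm ∘ₗ E.toLinearMap ∘ₗ (LinearMap.prodMap q LinearMap.id)
  have hΨ : ∀ x y, Ψ (x, y) = C (pm x) + Xm (E (q x, y)) := fun x y => rfl
  let f : K → T := Sum.elim (fun i => Ψ (Pi.single i 1, 0)) (fun j => Ψ (0, Pi.single j 1))
  let F0 : MvPolynomial K A →ₐ[A] T := aeval f
  let F : MvPolynomial K A →ₐ[B] T := F0.restrictScalars B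
  have hFX : ∀ k, F (X k) = f k := fun k => aeval_X _ _
  have hFC : ∀ a, F (C a) = C (ι a) := fun a => F0.commutes a
  have hr : ∀ x y, Ψ (x, y) ∈ F.range := by
    intro x y
    exact psi_range Ψ x y
  have hrC : ∀ i, C (v i) ∈ F.range := by
    intro i
    have h := hr (Pi.single i 1 - σ (q (Pi.single i 1))) 0
    rw [hΨ, map_sub q, hσ, sub_self, map_sub pm, hpσ, sub_zero] at h
    have h0 : E ((0 : M), (0 : Fin s → A)) = 0 := map_zero E
    rw [h0, map_zero, add_zero] at h
    have h1 : pm (Pi.single i 1) = v i := by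
      simp [pm]
    rwa [h1] at h
  have hrX : ∀ t, X t ∈ F.range := by
    intro t
    have h := hr (σ (E.symm (Pi.single t 1)).1) (E.symm (Pi.single t 1)).2
    rw [hΨ, hpσ, hσ] at h
    have h1 : E ((E.symm (Pi.single t 1)).1, (E.symm (Pi.single t 1)).2) = Pi.single t 1 :=
      E.apply_symm_apply _
    rw [h1] at h
    have h2 : Xm (Pi.single t 1) = X t := by simp [Xm]
    rwa [h2, C.map_zero, zero_add] at h
  have hrι : ∀ a, C (ι a) ∈ F.range := fun a => ⟨C a, hFC a⟩
  have hrl : ∀ i, C (X (Sum.inl i)) ∈ F.range := by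
    intro i
    have := F.range.add_mem (hrC (Sum.inl i)) (hrι (Z i))
    rw [← C.map_add] at this
    simpa [v] using this
  have hmod : ∀ t : T, ∃ p t', t = F p + π • t' := by
    refine sub_top (modRange F π) (sub_topC _ ?_) (fun t => range_le_mod _ _ (hrX t))
    rintro (i | j)
    · exact range_le_mod _ _ (hrl i)
    · obtain ⟨p, hp⟩ := F.range.add_mem (hrC (Sum.inr j)) (hrι (c j))
      refine ⟨p, C (-(w j)), ?_⟩
      rw [smul_C', show F p = _ from hp, ← C.map_add, ← C.map_add]
      congr 1
      simp only [v, Sum.elim_inr, smul_neg]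
      ring
  have halm : ∀ t : T, ∃ (N : ℕ) (p : _), π ^ N • t = F p := by
    refine sub_top (almRange F π) (sub_topC _ ?_) (fun t => range_le_alm _ _ (hrX t))
    rintro (i | j)
    · exact range_le_alm _ _ (hrl i)
    · have hg : (C (aeval (fun i => X (Sum.inl i)) (g j) : S) : T) ∈ F.range := by
        have : ∀ p : MvPolynomial (Fin l) B,
            (C (aeval (fun i => X (Sum.inl i)) p : S) : T) ∈ F.range := by
          intro p
          induction p using MvPolynomial.induction_on with
          | C a => rw [aeval_C]; exact F.range.algebraMap_mem a
          | add p q hp hq => rw [map_add, C.map_add]; exact F.range.add_mem hp hq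
          | mul_X p t hp => rw [map_mul, C.map_mul, aeval_X]; exact F.range.mul_mem hp (hrl t)
        exact this _
      obtain ⟨p, hp⟩ := F.range.sub_mem (hrι (Y j)) hg
      refine ⟨e, p, ?_⟩
      rw [smul_C', show F p = _ from hp, h2, C.map_add, add_sub_cancel_left]
  have hT : ∀ x : T, π • x = 0 → x = 0 := fun x => mvPoly_nzd' (mvPoly_nzd hB) x
  have hAK : ∀ x : MvPolynomial K A, π • x = 0 → x = 0 := fun x => mvPoly_nzd' hA x
  let P := MvPolynomial (Fin l ⊕ K) B
  let eqv : Fin (l + s) ⊕ (Fin l ⊕ Fin l) ≃ Fin l ⊕ K :=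
    Fintype.equivOfCardEq (by simp [K]; omega)
  let ET : P ≃ₐ[B] T := (renameEquiv B eqv.symm).trans (sumAlgEquiv B _ _)
  let G (Z : Fin l → A) : P →ₐ[B] MvPolynomial K A := aeval (Sum.elim (fun i => C (Z i)) X)
  have hGl : ∀ Z i, G Z (X (Sum.inl i)) = C (Z i) := fun Z i => aeval_X _ _
  have hGC : ∀ Z p, G Z (rename Sum.inl p) = C (aeval Z p) := by
    intro Z p
    induction p using MvPolynomial.induction_on with
    | C a => rw [rename_C, aeval_C, aeval_C]; rfl
    | add p q hp hq => simp only [map_add, hp, hq]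
    | mul_X p t hp => simp only [map_mul, hp, rename_X, aeval_X, C.map_mul, hGl]
  have hGX : ∀ Z k, G Z (X (Sum.inr k)) = X k := fun Z k => aeval_X _ _
  have hCs : ∀ (b : B) (a : A), b • (C a : MvPolynomial K A) = C (b • a) := by
    intro b a
    rw [Algebra.smul_def b a, C.map_mul, Algebra.smul_def b (C a : MvPolynomial K A)]; rfl
  have hGmod : ∀ a, ∃ p a', a = G Z p + π • a' := by
    refine sub_top (modRange (G Z) π) ?_ (fun k => range_le_mod _ _ ⟨X (Sum.inr k), hGX _ k⟩)
    intro a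
    obtain ⟨p, a', h⟩ := hZgen a
    refine ⟨rename Sum.inl p, C a', ?_⟩
    rw [hGC, hCs, ← C.map_add, ← h]
  have hGalm : ∀ a, ∃ (N : ℕ) (p : _), π ^ N • a = G Y p := by
    refine sub_top (almRange (G Y) π) ?_ (fun k => range_le_alm _ _ ⟨X (Sum.inr k), hGX _ k⟩)
    intro a
    obtain ⟨N, p, h⟩ := hYgen a
    refine ⟨N, rename Sum.inl p, ?_⟩
    rw [hGC, hCs, h]
  have hinj : ∀ a, F a = 0 → a = 0 := by
    intro a ha
    obtain ⟨N, p, hp⟩ := hGalm a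
    have h := noeth_inj_gen π (mvPoly_nzd hB) (ET.symm.toAlgHom.comp (F.comp (G Y))) (by
      intro x
      obtain ⟨N, a, h⟩ := halm (ET x)
      obtain ⟨M, p, h'⟩ := hGalm a
      refine ⟨M + N, p, ?_⟩
      change _ = ET.symm (F (G Y p))
      rw [← h', map_smul, ← h, AlgEquiv.eq_symm_apply, map_smul, ← mul_smul, pow_add]) p (by
      change ET.symm (F (G Y p)) = 0
      rw [← hp, map_smul, ha, smul_zero, map_zero])
    rw [h, map_zero] at hp
    exact pow_nzd hAK N a hp
  have hmodinj : ∀ a t, F a = π • t → ∃ a', a = π • a' := by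
    intro a t h
    obtain ⟨p, a', hp⟩ := hGmod a
    obtain ⟨x, hx⟩ := noeth_inj_mod π (ET.symm.toAlgHom.comp (F.comp (G Z))) (by
      intro x
      obtain ⟨a, t', h⟩ := hmod (ET x)
      obtain ⟨p, a', h'⟩ := hGmod a
      refine ⟨p, ET.symm (F a' + t'), ?_⟩
      change _ = ET.symm (F (G Z p)) + _
      rw [← map_smul, ← map_add, AlgEquiv.eq_symm_apply, h, h', map_add, map_smul, smul_add,
        add_assoc]) p (ET.symm (t - F a')) (by
      change ET.symm (F (G Z p)) = _
      rw [← map_smul, smul_sub, ← h, hp, map_add, map_smul, add_sub_cancel_right])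
    exact ⟨G Z x + a', by rw [hp, hx, map_smul, smul_add]⟩
  have hsurj : ∀ (N : ℕ) (t : T), (∃ p, π ^ N • t = F p) → ∃ p, t = F p := by
    intro N
    induction N with
    | zero => rintro t ⟨p, h⟩; exact ⟨p, by simpa using h⟩
    | succ N ih =>
      rintro t ⟨p, h⟩
      obtain ⟨a', rfl⟩ := hmodinj p (π ^ N • t) (by rw [← h, pow_succ', mul_smul])
      refine ih t ⟨a', ?_⟩
      rw [map_smul, pow_succ', mul_smul] at h
      exact pow_nzd_inj (B := B) (π := π) hT 1 (by simpa using h)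
  refine ⟨(AlgEquiv.ofBijective F ⟨(injective_iff_map_eq_zero F).2 hinj, ?_⟩).trans
    (sumAlgEquiv B _ _).symm⟩
  intro t
  obtain ⟨N, h⟩ := halm t
  obtain ⟨p, h⟩ := hsurj N t h
  exact ⟨p, h.symm⟩

/-- The patching theorem. -/
theorem patch {B A : Type*} [CommRing B] [IsNoetherianRing B] [CommRing A] [Algebra B A]
    [Algebra.FiniteType B A]
    {π : B} (hB : ∀ x : B, π • x = 0 → x = 0) (hA : ∀ x : A, π • x = 0 → x = 0)
    {l s : ℕ} (Y Z : Fin l → A)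
    (hYinj : Function.Injective (aeval Y : MvPolynomial (Fin l) B →ₐ[B] A))
    (hYgen : ∀ a : A, ∃ (N : ℕ) (p : MvPolynomial (Fin l) B), π ^ N • a = aeval Y p)
    (hZgen : ∀ a : A, ∃ (p : MvPolynomial (Fin l) B) (a' : A), a = aeval Z p + π • a')
    (hZinj : ∀ (p : MvPolynomial (Fin l) B) (a' : A), aeval Z p = π • a' → ∃ q, p = π • q)
    (E : (Ω[A⁄B] × (Fin s → A)) ≃ₗ[A] (Fin (l + s) → A)) :
    ∃ r, Nonempty (MvPolynomial (Fin r) A ≃ₐ[B] MvPolynomial (Fin (l + r)) B) := by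
  obtain ⟨e, g, c, ι, w, h1, h2, h3⟩ := patch_data hB hA Y Z hYinj hYgen hZgen hZinj
  obtain ⟨q, σ, hσ, hσ'⟩ := patch_split hB hA Y Z hYgen e g c ι w h1 h2 h3
  obtain ⟨F⟩ := patch_final hB hA Y Z hYgen hZgen e g c ι w h2 q σ hσ hσ' E
  refine ⟨l + l + s, ⟨((renameEquiv A (Fintype.equivOfCardEq (by simp))).restrictScalars B).trans
    (F.trans (renameEquiv B (Fintype.equivOfCardEq (by simp; omega))))⟩⟩

end FFRsec

namespace FFRsec
open MvPolynomial

theorem common_d {R ι : Type*} [CommRing R] (M : Submonoid R) (s : Finset ι) (Q : ι → R → Prop)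
    (hQ : ∀ i d c, Q i d → Q i (c * d)) (h : ∀ i ∈ s, ∃ d ∈ M, Q i d) :
    ∃ d ∈ M, ∀ i ∈ s, Q i d := by
  classical
  induction s using Finset.induction_on with
  | empty => exact ⟨1, M.one_mem, by simp⟩
  | insert a s ha ih =>
    obtain ⟨d, hd, h1⟩ := ih fun i hi => h i (Finset.mem_insert_of_mem hi)
    obtain ⟨c, hc, h2⟩ := h a (Finset.mem_insert_self _ _)
    refine ⟨c * d, M.mul_mem hc hd, fun i hi => ?_⟩
    rcases Finset.mem_insert.1 hi with rfl | hi
    · rw [mul_comm]; exact hQ _ _ _ h2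
    · exact hQ _ _ _ (h1 i hi)

theorem mem_map_mv {R A τ : Type*} [CommRing R] [CommRing A] [Algebra R A] (I : Ideal R)
    (f : MvPolynomial τ A) : f ∈ I.map (algebraMap R (MvPolynomial τ A)) ↔
      ∀ m, coeff m f ∈ I.map (algebraMap R A) := by
  rw [← mem_map_C_iff, Ideal.map_map]
  rfl

theorem mem_map_equiv {R P Q : Type*} [CommRing R] [CommRing P] [CommRing Q] [Algebra R P]
    [Algebra R Q] (I : Ideal R) (e : P ≃ₐ[R] Q) (x : P) :
    e x ∈ I.map (algebraMap R Q) ↔ x ∈ I.map (algebraMap R P) := by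
  have h1 : I.map (algebraMap R Q) = (I.map (algebraMap R P)).map e.toRingEquiv.toRingHom := by
    rw [Ideal.map_map]; congr 1; ext r; exact (e.commutes r).symm
  have h2 : I.map (algebraMap R P) = (I.map (algebraMap R Q)).map e.symm.toRingEquiv.toRingHom := by
    rw [Ideal.map_map]; congr 1; ext r; exact (e.symm.commutes r).symm
  constructor
  · intro h
    rw [h2]
    simpa using Ideal.mem_map_of_mem e.symm.toRingEquiv.toRingHom h
  · intro h
    rw [h1]
    exact Ideal.mem_map_of_mem e.toRingEquiv.toRingHom h

theorem map_mem_map {R P Q : Type*} [CommRing R] [CommRing P] [CommRing Q] [Algebra R P]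
    [Algebra R Q] (I : Ideal R) (e : P →ₐ[R] Q) (x : P) (h : x ∈ I.map (algebraMap R P)) :
    e x ∈ I.map (algebraMap R Q) := by
  have h1 : I.map (algebraMap R Q) = (I.map (algebraMap R P)).map e.toRingHom := by
    rw [Ideal.map_map]; congr 1; ext r; exact (e.commutes r).symm
  rw [h1]
  exact Ideal.mem_map_of_mem e.toRingHom h

theorem smul_mem_map {R P : Type*} [CommRing R] [CommRing P] [Algebra R P] (J : Ideal P) (d : R)
    {x : P} (h : x ∈ J) : d • x ∈ J := by
  rw [Algebra.smul_def]; exact J.mul_mem_left _ h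

/-- elements which are in the range up to `M`, modulo `I` -/
def almMod {R B P Q : Type*} [CommRing R] [CommRing B] [CommRing P] [CommRing Q]
    [Algebra R B] [Algebra R P] [Algebra R Q] [Algebra B P] [Algebra B Q]
    [IsScalarTower R B P] [IsScalarTower R B Q]
    (φ : P →ₐ[B] Q) (M : Submonoid R) (I : Ideal R) : Subalgebra B Q where
  carrier := {s | ∃ d ∈ M, ∃ p, d • s - φ p ∈ I.map (algebraMap R Q)}
  mul_mem' := by
    rintro x y ⟨d, hd, p, h1⟩ ⟨c, hc, q, h2⟩
    refine ⟨d * c, M.mul_mem hd hc, p * q, ?_⟩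
    have : (d * c) • (x * y) - φ (p * q) = (d • x - φ p) * (c • y) + φ p * (c • y - φ q) := by
      rw [map_mul]; simp only [Algebra.smul_def, map_mul]; ring
    rw [this]
    exact Ideal.add_mem _ (Ideal.mul_mem_right _ _ h1) (Ideal.mul_mem_left _ _ h2)
  add_mem' := by
    rintro x y ⟨d, hd, p, h1⟩ ⟨c, hc, q, h2⟩
    refine ⟨d * c, M.mul_mem hd hc, algebraMap R B c • p + algebraMap R B d • q, ?_⟩
    have : (d * c) • (x + y) - φ (algebraMap R B c • p + algebraMap R B d • q) =
      c • (d • x - φ p) + d • (c • y - φ q) := by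
      rw [map_add, map_smul, map_smul, algebraMap_smul, algebraMap_smul]
      simp only [Algebra.smul_def, map_mul]; ring
    rw [this]
    exact Ideal.add_mem _ (smul_mem_map _ _ h1) (smul_mem_map _ _ h2)
  algebraMap_mem' := fun b => ⟨1, M.one_mem, algebraMap B P b, by simp⟩

section
variable (R B : Type*) {A : Type*} [CommRing R] [CommRing B] [CommRing A]
    [Algebra R B] [Algebra R A] [Algebra B A] [IsScalarTower R B A]

/-- `Y` is a system of coordinates up to `M`, modulo `I`. -/
def PMY (M : Submonoid R) (I : Ideal R) {σ : Type*} (Y : σ → A) : Prop :=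
  (∀ a, ∃ d ∈ M, ∃ p : MvPolynomial σ B, d • a - aeval Y p ∈ I.map (algebraMap R A)) ∧
  ∀ p : MvPolynomial σ B, aeval Y p ∈ I.map (algebraMap R A) →
    ∃ d ∈ M, d • p ∈ I.map (algebraMap R (MvPolynomial σ B))

variable {R B}

theorem PMY.reindex {M : Submonoid R} {I : Ideal R} {σ τ : Type*} {Y : σ → A} (h : PMY R B M I Y)
    (e : σ ≃ τ) : PMY R B M I (Y ∘ e.symm) := by
  have key : ∀ p : MvPolynomial τ B, aeval (Y ∘ e.symm) p = aeval Y (rename e.symm p) := by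
    intro p; rw [aeval_rename]
  constructor
  · intro a
    obtain ⟨d, hd, p, hp⟩ := h.1 a
    refine ⟨d, hd, rename e p, ?_⟩
    rw [key, rename_rename]
    simpa using hp
  · intro p hp
    rw [key] at hp
    obtain ⟨d, hd, h2⟩ := h.2 _ hp
    refine ⟨d, hd, ?_⟩
    have := mem_map_equiv I ((renameEquiv B e.symm).restrictScalars R) (d • p)
    rw [← this, map_smul]
    exact h2

theorem PMY.ext {M : Submonoid R} {I : Ideal R} {σ τ : Type*} {Y : σ → A} (h : PMY R B M I Y) :
    PMY R B M I (Sum.elim X (fun i => C (Y i)) : τ ⊕ σ → MvPolynomial τ A) := by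
  have hCa : ∀ p : MvPolynomial σ B, aeval (Sum.elim X (fun i => C (Y i)) : τ ⊕ σ → MvPolynomial τ A)
      (rename Sum.inr p) = C (aeval Y p) := by
    intro p
    rw [aeval_rename]
    have : (Sum.elim X (fun i => C (Y i)) : τ ⊕ σ → MvPolynomial τ A) ∘ Sum.inr =
      algebraMap A (MvPolynomial τ A) ∘ Y := rfl
    rw [this, aeval_algebraMap_apply]
    rfl
  constructor
  · refine sub_top (almMod (aeval _) M I) ?_ ?_
    · intro a
      obtain ⟨d, hd, p, hp⟩ := h.1 a
      refine ⟨d, hd, rename Sum.inr p, ?_⟩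
      rw [hCa, smul_C', ← map_sub]
      exact map_mem_map I (IsScalarTower.toAlgHom R A (MvPolynomial τ A)) _ hp
    · intro t
      exact ⟨1, M.one_mem, X (Sum.inl t), by simp⟩
  · intro p hp
    have key : ∀ p, aeval (Sum.elim X (fun i => C (Y i)) : τ ⊕ σ → MvPolynomial τ A) p =
        map (aeval Y : MvPolynomial σ B →ₐ[B] A).toRingHom (sumAlgEquiv B τ σ p) := by
      intro p
      induction p using MvPolynomial.induction_on with
      | C a => simp
      | add p q hp' hq' => simp only [map_add]; rw [hp', hq']
      | mul_X p t hp' =>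
        simp only [map_mul]
        rw [hp']
        rcases t with t | t <;> simp
    rw [key, mem_map_mv] at hp
    obtain ⟨d, hd, h2⟩ := common_d M (sumAlgEquiv B τ σ p).support
      (fun m d => d • coeff m (sumAlgEquiv B τ σ p) ∈ I.map (algebraMap R (MvPolynomial σ B)))
      (fun i d c h => by rw [mul_smul]; exact smul_mem_map _ _ h)
      (fun m _ => h.2 _ (by have := hp m; rwa [coeff_map] at this))
    refine ⟨d, hd, ?_⟩
    rw [← mem_map_equiv I ((sumAlgEquiv B τ σ).restrictScalars R), map_smul, mem_map_mv]
    intro m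
    rw [coeff_smul]
    by_cases hm : m ∈ (sumAlgEquiv B τ σ p).support
    · exact h2 m hm
    · rw [notMem_support_iff] at hm
      rw [show ((sumAlgEquiv B τ σ).restrictScalars R) p = sumAlgEquiv B τ σ p from rfl, hm,
        smul_zero]
      exact zero_mem _

end

end FFRsec

namespace FFRsec
open MvPolynomial

theorem mem_smul_top_sum {R A : Type*} [CommRing R] [AddCommGroup A] [Module R A] {I : Ideal R}
    {x : A} (h : x ∈ (I • ⊤ : Submodule R A)) :
    ∃ (n : ℕ) (f : Fin n → R) (a : Fin n → A), (∀ i, f i ∈ I) ∧ x = ∑ i, f i • a i := by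
  induction h using Submodule.smul_induction_on' with
  | smul r hr n _ => exact ⟨1, fun _ => r, fun _ => n, fun _ => hr, by simp⟩
  | add x _ y _ hx hy =>
    obtain ⟨n, f, a, h1, h2⟩ := hx
    obtain ⟨m, g, b, h3, h4⟩ := hy
    refine ⟨n + m, Fin.append f g, Fin.append a b, ?_, ?_⟩
    · intro i
      refine Fin.addCases (fun i => ?_) (fun i => ?_) i
      · simpa using h1 i
      · simpa using h3 i
    · rw [Fin.sum_univ_add, h2, h4]; simp

theorem flat_tuple {R A : Type*} [CommRing R] [AddCommGroup A] [Module R A] [Module.Flat R A]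
    {I : Ideal R} {ι : Type*} [Fintype ι] (j : ι → R) (a : ι → A)
    (h : ∑ i, j i • a i ∈ (I • ⊤ : Submodule R A)) :
    ∃ (k : ℕ) (r : ι → Fin k → R) (b : Fin k → A), (∀ i, a i = ∑ n, r i n • b n) ∧
      ∀ n, ∑ i, j i * r i n ∈ I := by
  obtain ⟨m, f, c, hf, hc⟩ := mem_smul_top_sum h
  have h0 : ∑ x : ι ⊕ Fin m, (Sum.elim j (fun i => - f i) x) • (Sum.elim a c x) = 0 := by
    rw [Fintype.sum_sum_type]
    simp [hc]
  obtain ⟨k, r, b, h1, h2⟩ := Module.Flat.isTrivialRelation_of_sum_smul_eq_zero h0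
  refine ⟨k, fun i => r (Sum.inl i), b, fun i => h1 (Sum.inl i), fun n => ?_⟩
  have := h2 n
  rw [Fintype.sum_sum_type] at this
  simp only [Sum.elim_inl, Sum.elim_inr] at this
  rw [eq_neg_of_add_eq_zero_left this]
  refine I.neg_mem (I.sum_mem fun i _ => I.mul_mem_right _ (I.neg_mem (hf i)))

theorem flat_colon {R A : Type*} [CommRing R] [AddCommGroup A] [Module R A] [Module.Flat R A]
    {I : Ideal R} {d : R} (hd : ∀ r, d * r ∈ I → r ∈ I) {x : A}
    (h : d • x ∈ (I • ⊤ : Submodule R A)) : x ∈ (I • ⊤ : Submodule R A) := by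
  obtain ⟨k, r, b, h1, h2⟩ := flat_tuple (ι := Unit) (fun _ => d) (fun _ => x) (I := I) (by simpa)
  rw [h1 ()]
  refine Submodule.sum_mem _ fun n _ => Submodule.smul_mem_smul (hd _ ?_) trivial
  simpa using h2 n

theorem iter_smul {R A : Type*} [CommRing R] [AddCommGroup A] [Module R A] (J : Ideal R)
    (N K : Submodule R A) (h : K ≤ N ⊔ J • K) (n : ℕ) : K ≤ N ⊔ J ^ n • K := by
  induction n with
  | zero => simp
  | succ n ih =>
    refine ih.trans (sup_le le_sup_left ?_)
    refine (Submodule.smul_mono le_rfl h).trans ?_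
    rw [Submodule.smul_sup, ← mul_smul, ← pow_succ]
    exact sup_le_sup_right Submodule.smul_le_right _

theorem nilp_lift {R C A : Type*} [CommRing R] [AddCommGroup A] [Module R A] [Module.Flat R A]
    [AddCommGroup C] [Module R C] (φ : C →ₗ[R] A) (I J : Ideal R) (k : ℕ) (hk : J ^ k ≤ I)
    (hIJ : I ≤ J) (hgen : ∀ a, ∃ c, a - φ c ∈ (J • ⊤ : Submodule R A))
    (hinj : ∀ c, φ c ∈ (J • ⊤ : Submodule R A) → c ∈ (J • ⊤ : Submodule R C)) :
    (∀ a, ∃ c, a - φ c ∈ (I • ⊤ : Submodule R A)) ∧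
    (∀ c, φ c ∈ (I • ⊤ : Submodule R A) → c ∈ (I • ⊤ : Submodule R C)) := by
  have gen : ∀ a, ∃ c, a - φ c ∈ (I • ⊤ : Submodule R A) := by
    have h0 : (⊤ : Submodule R A) ≤ LinearMap.range φ ⊔ J • ⊤ := by
      intro a _
      obtain ⟨c, hc⟩ := hgen a
      exact Submodule.mem_sup.2 ⟨φ c, ⟨c, rfl⟩, _, hc, by abel⟩
    intro a
    have := iter_smul J _ _ h0 k (Submodule.mem_top (x := a))
    obtain ⟨_, ⟨c, rfl⟩, y, hy, h⟩ := Submodule.mem_sup.1 this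
    refine ⟨c, Submodule.smul_mono_left hk ?_⟩
    rw [← h, add_sub_cancel_left]; exact hy
  refine ⟨gen, ?_⟩
  let K : Submodule R C := Submodule.comap φ (I • ⊤)
  have h0 : K ≤ (I • ⊤ : Submodule R C) ⊔ J • K := by
    intro p hp
    have hp' : φ p ∈ (I • ⊤ : Submodule R A) := hp
    obtain ⟨n, j, c, hj, rfl⟩ := mem_smul_top_sum (hinj p (Submodule.smul_mono_left hIJ hp'))
    rw [map_sum] at hp'
    simp only [map_smul] at hp'
    obtain ⟨k, r, b, h1, h2⟩ := flat_tuple j (fun i => φ (c i)) hp'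
    choose c' hc' using fun n => gen (b n)
    have e : ∑ i, j i • c i = ∑ m, (∑ i, j i * r i m) • c' m + ∑ i, j i • (c i - ∑ m, r i m • c' m) := by
      simp only [smul_sub, Finset.sum_sub_distrib, Finset.sum_smul, Finset.smul_sum, mul_smul]
      rw [Finset.sum_comm]
      abel
    rw [e]
    refine Submodule.add_mem_sup (Submodule.sum_mem _ fun m _ =>
      Submodule.smul_mem_smul (h2 m) trivial) (Submodule.sum_mem _ fun i _ =>
      Submodule.smul_mem_smul (hj i) ?_)
    change φ _ ∈ (I • ⊤ : Submodule R A)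
    rw [map_sub, h1, map_sum, ← Finset.sum_sub_distrib]
    refine Submodule.sum_mem _ fun m _ => ?_
    rw [map_smul, ← smul_sub]
    exact Submodule.smul_mem _ _ (hc' m)
  intro c hc
  have := iter_smul J _ _ h0 k (show c ∈ K from hc)
  have h1 : (I • ⊤ : Submodule R C) ⊔ J ^ k • K ≤ I • ⊤ :=
    sup_le le_rfl (Submodule.smul_mono hk le_top)
  exact h1 this

section
variable {R B A : Type*} [CommRing R] [CommRing B] [CommRing A]
    [Algebra R B] [Algebra R A] [Algebra B A] [IsScalarTower R B A]

theorem PMY.of_pow [Module.Flat R A] {I J : Ideal R} {k : ℕ} (hk : J ^ k ≤ I)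
    (hIJ : I ≤ J) {σ : Type*} {Y : σ → A} (h : PMY R B ⊥ J Y) : PMY R B ⊥ I Y := by
  have := nilp_lift ((aeval Y : MvPolynomial σ B →ₐ[B] A).restrictScalars R).toLinearMap I J k hk hIJ
    (by
      intro a
      obtain ⟨d, hd, p, hp⟩ := h.1 a
      rw [Submonoid.mem_bot] at hd
      subst hd
      exact ⟨p, (smul_top_eq J _).2 (by simpa using hp)⟩)
    (by
      intro p hp
      obtain ⟨d, hd, hp⟩ := h.2 p ((smul_top_eq J _).1 hp)
      rw [Submonoid.mem_bot] at hd
      subst hd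
      exact (smul_top_eq J _).2 (by simpa using hp))
  constructor
  · intro a
    obtain ⟨p, hp⟩ := this.1 a
    exact ⟨1, Submonoid.mem_bot.2 rfl, p, by simpa using (smul_top_eq I _).1 hp⟩
  · intro p hp
    exact ⟨1, Submonoid.mem_bot.2 rfl,
      by simpa using (smul_top_eq I _).1 (this.2 p ((smul_top_eq I _).2 hp))⟩

end

end FFRsec

namespace FFRsec
open MvPolynomial

theorem smulI {R A : Type*} [CommRing R] [CommRing A] [Algebra R A] {I : Ideal R} {r : R}
    (hr : r ∈ I) (x : A) : r • x ∈ I.map (algebraMap R A) := by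
  rw [Algebra.smul_def]
  exact Ideal.mul_mem_right _ _ (Ideal.mem_map_of_mem _ hr)

theorem smul_mem_map_of {R A : Type*} [CommRing R] [CommRing A] [Algebra R A] {I P : Ideal R} {d : R}
    (hd : ∀ r ∈ P, d * r ∈ I) {x : A} (hx : x ∈ P.map (algebraMap R A)) :
    d • x ∈ I.map (algebraMap R A) := by
  rw [← smul_top_eq] at hx
  obtain ⟨n, f, a, hf, rfl⟩ := mem_smul_top_sum hx
  rw [Finset.smul_sum]
  refine Ideal.sum_mem _ fun i _ => ?_
  rw [← mul_smul]
  exact smulI (hd _ (hf i)) _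

theorem coeff_scale {R B σ : Type*} [CommRing R] [CommRing B] [Algebra R B] (d : R)
    (p : MvPolynomial σ B) (m : σ →₀ ℕ) :
    coeff m (aeval (fun i => d • (X i : MvPolynomial σ B)) p) = d ^ m.degree • coeff m p := by
  classical
  induction p using MvPolynomial.induction_on generalizing m with
  | C a =>
    rw [aeval_C, algebraMap_eq, coeff_C]
    split_ifs with h
    · subst h; simp
    · simp
  | add p q hp hq => rw [map_add, coeff_add, coeff_add, hp, hq, smul_add]
  | mul_X p i hp =>
    rw [map_mul, aeval_X, mul_smul_comm, coeff_smul, coeff_mul_X', coeff_mul_X']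
    split_ifs with h
    · rw [hp, ← mul_smul, ← pow_succ']
      congr 2
      have : m - Finsupp.single i 1 + Finsupp.single i 1 = m := by
        apply tsub_add_cancel_of_le
        rw [Finsupp.single_le_iff]
        exact Nat.one_le_iff_ne_zero.2 (Finsupp.mem_support_iff.1 h)
      conv_rhs => rw [← this]
      simp
    · simp

theorem aeval_sub_mem {B A σ : Type*} [CommRing B] [CommRing A] [Algebra B A] (J : Ideal A)
    (y z : σ → A) (h : ∀ i, y i - z i ∈ J) (p : MvPolynomial σ B) : aeval y p - aeval z p ∈ J := by
  rw [← Ideal.Quotient.eq]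
  have := fun (w : σ → A) => aeval_algebraMap_apply (R := B) (A ⧸ J) w p
  have e : (algebraMap A (A ⧸ J)) ∘ y = (algebraMap A (A ⧸ J)) ∘ z := by
    ext i; exact Ideal.Quotient.eq.2 (h i)
  exact (this y).symm.trans ((congrArg (fun w => aeval w p) e).trans (this z))

section
variable {R B A : Type*} [CommRing R] [CommRing B] [CommRing A]
    [Algebra R B] [Algebra R A] [Algebra B A] [IsScalarTower R B A]

theorem aeval_smulR {σ : Type*} (Y : σ → A) (r : R) (p : MvPolynomial σ B) :
    aeval Y (r • p) = r • aeval Y p := by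
  rw [← algebraMap_smul B r p, map_smul, algebraMap_smul]

theorem PMY.scale {I : Ideal R} {d : R} {σ : Type*} {Y : σ → A}
    (h : PMY R B (Submonoid.powers d) I Y) :
    PMY R B (Submonoid.powers d) I (fun i => d • Y i) := by
  constructor
  · intro a
    obtain ⟨c, hc, p, hp⟩ := h.1 a
    have h1 : ∀ p : MvPolynomial σ B, aeval Y p ∈
        almMod (aeval (fun i => d • Y i) : MvPolynomial σ B →ₐ[B] A) (Submonoid.powers d) I := by
      intro p
      induction p using MvPolynomial.induction_on with
      | C b => rw [aeval_C]; exact Subalgebra.algebraMap_mem _ b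
      | add p q hp hq => rw [map_add]; exact Subalgebra.add_mem _ hp hq
      | mul_X p i hp =>
        rw [map_mul]
        refine Subalgebra.mul_mem _ hp ⟨d, Submonoid.mem_powers d, X i, ?_⟩
        simp
    obtain ⟨c', hc', q, hq⟩ := h1 p
    refine ⟨c' * c, Submonoid.mul_mem _ hc' hc, q, ?_⟩
    have : (c' * c) • a - aeval (fun i => d • Y i) q =
      c' • (c • a - aeval Y p) + (c' • aeval Y p - aeval (fun i => d • Y i) q) := by
      rw [smul_sub, mul_smul]; ring
    rw [this]
    exact Ideal.add_mem _ (smul_mem_map _ _ hp) hq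
  · intro p hp
    have e : aeval (fun i => d • Y i) p = aeval Y (aeval (fun i => d • (X i : MvPolynomial σ B)) p) := by
      rw [← AlgHom.comp_apply, comp_aeval]
      simp only [aeval_smulR, aeval_X]
    rw [e] at hp
    obtain ⟨_, ⟨N, rfl⟩, h2⟩ := h.2 _ hp
    rw [mem_map_mv] at h2
    refine ⟨d ^ (N + p.totalDegree), ⟨_, rfl⟩, ?_⟩
    rw [mem_map_mv]
    intro m
    have h3 := h2 m
    rw [coeff_smul, coeff_scale, ← mul_smul] at h3
    rw [coeff_smul]
    by_cases hm : m ∈ p.support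
    · have hle := le_totalDegree hm
      have hle' : m.degree ≤ p.totalDegree := hle
      obtain ⟨t, ht⟩ := Nat.exists_eq_add_of_le hle'
      have : d ^ (N + p.totalDegree) = d ^ t * (d ^ N * d ^ m.degree) := by
        rw [ht]; ring
      rw [this, mul_smul]
      exact smul_mem_map _ _ h3
    · rw [notMem_support_iff.1 hm, smul_zero]; exact zero_mem _

theorem PMY.sum {I : Ideal R} {ι : Type*} [Fintype ι] [DecidableEq ι] {d : ι → R} {σ : Type*}
    {Y : ι → σ → A} (hd : ∀ i j, i ≠ j → d i * d j ∈ I)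
    (h : ∀ i, PMY R B (Submonoid.powers (d i)) I (Y i)) :
    PMY R B (Submonoid.powers (∑ i, d i)) I (fun x => ∑ i, d i • Y i x) := by
  have h' := fun i => (h i).scale
  set π := ∑ i, d i with hπ
  have hdπ : ∀ i, d i * π - d i * d i ∈ I := by
    intro i
    rw [hπ, Finset.mul_sum, ← Finset.add_sum_erase _ _ (Finset.mem_univ i), add_sub_cancel_left]
    exact I.sum_mem fun j hj => hd i j (Finset.ne_of_mem_erase hj).symm
  have hpow : ∀ i N, d i * π ^ N - d i ^ (N + 1) ∈ I := by
    intro i N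
    induction N with
    | zero => simp
    | succ N ih =>
      have : d i * π ^ (N + 1) - d i ^ (N + 1 + 1) =
        (d i * π - d i * d i) * π ^ N + d i * (d i * π ^ N - d i ^ (N + 1)) := by ring
      rw [this]
      exact I.add_mem (I.mul_mem_right _ (hdπ i)) (I.mul_mem_left _ ih)
  have hY : ∀ (i : ι) (p : MvPolynomial σ B), d i • (aeval (fun x => ∑ i, d i • Y i x) p - aeval (fun x => d i • Y i x) p) ∈
      I.map (algebraMap R A) := by
    intro i p
    rw [Algebra.smul_def]
    refine aeval_sub_mem (B := B) (Submodule.comap (LinearMap.mulLeft A (algebraMap R A (d i)))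
      (I.map (algebraMap R A))) _ _ ?_ p
    intro x
    change algebraMap R A (d i) * _ ∈ I.map (algebraMap R A)
    rw [← Algebra.smul_def, ← Finset.add_sum_erase _ _ (Finset.mem_univ i), add_sub_cancel_left,
      Finset.smul_sum]
    refine Ideal.sum_mem _ fun j hj => ?_
    rw [← mul_smul]
    exact smulI (hd i j (Finset.ne_of_mem_erase hj).symm) _
  constructor
  · intro a
    choose c hc p hp using fun i => (h' i).1 a
    choose N hN using hc
    obtain ⟨K, hK⟩ : ∃ K, ∀ i, N i ≤ K := ⟨Finset.univ.sup N, fun i => Finset.le_sup (Finset.mem_univ i)⟩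
    refine ⟨π ^ (K + 1), ⟨_, rfl⟩, ∑ i, (π ^ (K - N i) * d i) • p i, ?_⟩
    rw [pow_succ, hπ, Finset.mul_sum, Finset.sum_smul, ← hπ, map_sum, ← Finset.sum_sub_distrib]
    refine Ideal.sum_mem _ fun i _ => ?_
    have e : (π ^ K * d i) • a - aeval (fun x => ∑ i, d i • Y i x) ((π ^ (K - N i) * d i) • p i) =
      π ^ (K - N i) • ((d i * π ^ N i - d i ^ (N i + 1)) • a +
        d i • (c i • a - aeval (fun x => d i • Y i x) (p i)) -
        d i • (aeval (fun x => ∑ i, d i • Y i x) (p i) - aeval (fun x => d i • Y i x) (p i))) := by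
      have hc : c i = d i ^ N i := (hN i).symm
      have hKi : π ^ K = π ^ (K - N i) * π ^ N i := by rw [← pow_add, Nat.sub_add_cancel (hK i)]
      rw [aeval_smulR, hc, hKi]
      simp only [Algebra.smul_def, map_mul, map_pow, map_sub]
      ring
    rw [e]
    exact smul_mem_map _ _ (Ideal.sub_mem _ (Ideal.add_mem _ (smulI (hpow i _) _)
      (smul_mem_map _ _ (hp i))) (hY i _))
  · intro p hp
    have h1 : ∀ i, aeval (fun x => d i • Y i x) (d i • p) ∈ I.map (algebraMap R A) := by
      intro i
      have := Ideal.sub_mem _ (smul_mem_map _ (d i) hp) (hY i p)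
      rw [aeval_smulR]
      rwa [smul_sub, sub_sub_cancel] at this
    choose c hc h2 using fun i => (h' i).2 _ (h1 i)
    choose N hN using hc
    obtain ⟨K, hK⟩ : ∃ K, ∀ i, N i ≤ K := ⟨Finset.univ.sup N, fun i => Finset.le_sup (Finset.mem_univ i)⟩
    refine ⟨π ^ (K + 1), ⟨_, rfl⟩, ?_⟩
    rw [pow_succ, hπ, Finset.mul_sum, Finset.sum_smul, ← hπ]
    refine Ideal.sum_mem _ fun i _ => ?_
    have e : (π ^ K * d i) • p = π ^ (K - N i) • ((d i * π ^ N i - d i ^ (N i + 1)) • p +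
        c i • d i • p) := by
      have hc : c i = d i ^ N i := (hN i).symm
      have hKi : π ^ K = π ^ (K - N i) * π ^ N i := by rw [← pow_add, Nat.sub_add_cancel (hK i)]
      rw [hc, hKi, ← mul_smul, ← add_smul, ← mul_smul]
      congr 1
      ring
    rw [e]
    exact smul_mem_map _ _ (Ideal.add_mem _ (smulI (hpow i _) _) (h2 i))

end

end FFRsec

namespace FFRsec
open MvPolynomial

theorem mem_of_minimal {R : Type*} [CommRing R] {I : Ideal R} (hI : I.IsRadical) {r : R}
    (h : ∀ P ∈ I.minimalPrimes, r ∈ P) : r ∈ I := by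
  have : sInf I.minimalPrimes = I := by rw [Ideal.sInf_minimalPrimes, hI.radical]
  rw [← this]
  exact Ideal.mem_sInf.2 fun {P} hP => h P hP

section
variable {R B A : Type*} [CommRing R] [CommRing B] [CommRing A]
    [Algebra R B] [Algebra R A] [Algebra B A] [IsScalarTower R B A]

theorem local_G [IsNoetherianRing R] [Module.Flat R B] [Algebra.FiniteType B A] {I : Ideal R}
    (hI : I.IsRadical) (P : Ideal R) [hPp : P.IsPrime] (hP : P ∈ I.minimalPrimes) {σ : Type*}
    {Y : σ → A} (h : PMY R B P.primeCompl P Y) :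
    ∃ d ∉ P, (∀ Q ∈ I.minimalPrimes, Q ≠ P → d ∈ Q) ∧ PMY R B (Submonoid.powers d) I Y := by
  classical
  have hfin := Ideal.finite_minimalPrimes_of_isNoetherianRing R I
  obtain ⟨d0, hd0, h0⟩ := common_d P.primeCompl hfin.toFinset (fun Q d => Q ≠ P → d ∈ Q)
    (fun Q d c h hQ => Q.mul_mem_left _ (h hQ)) (by
      intro Q hQ
      rw [Set.Finite.mem_toFinset] at hQ
      by_cases hQP : Q = P
      · exact ⟨1, Submonoid.one_mem _, fun h => absurd hQP h⟩
      · have : ¬ Q ≤ P := fun hle => hQP (le_antisymm hle (hP.2 hQ.1 hle))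
        obtain ⟨d, hd, hd'⟩ := SetLike.not_le_iff_exists.1 this
        exact ⟨d, hd', fun _ => hd⟩)
  have h0' : ∀ Q ∈ I.minimalPrimes, Q ≠ P → d0 ∈ Q := fun Q hQ => h0 Q (by simpa using hQ)
  have hd0P : ∀ r ∈ P, d0 * r ∈ I := by
    intro r hr
    refine mem_of_minimal hI fun Q hQ => ?_
    by_cases hQP : Q = P
    · subst hQP; exact Q.mul_mem_left _ hr
    · exact Q.mul_mem_right _ (h0' Q hQ hQP)
  obtain ⟨S, hS⟩ := (Algebra.FiniteType.out : (⊤ : Subalgebra B A).FG)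
  obtain ⟨d1, hd1, h1⟩ := common_d P.primeCompl S
    (fun a d => ∃ p : MvPolynomial σ B, d • a - aeval Y p ∈ P.map (algebraMap R A))
    (by
      rintro a d c ⟨p, hp⟩
      refine ⟨c • p, ?_⟩
      rw [aeval_smulR, mul_smul, ← smul_sub]
      exact smul_mem_map _ _ hp) (fun a _ => h.1 a)
  have hd : d0 * d1 ∉ P := P.primeCompl.mul_mem hd0 hd1
  refine ⟨d0 * d1, hd, fun Q hQ hQP => Q.mul_mem_right _ (h0' Q hQ hQP), ?_, ?_⟩
  · have htop : almMod (aeval Y : MvPolynomial σ B →ₐ[B] A) (Submonoid.powers (d0 * d1)) I = ⊤ := by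
      rw [eq_top_iff, ← hS, Algebra.adjoin_le_iff]
      intro a ha
      obtain ⟨p, hp⟩ := h1 a ha
      refine ⟨_, Submonoid.mem_powers _, d0 • p, ?_⟩
      rw [aeval_smulR, mul_smul, ← smul_sub]
      exact smul_mem_map_of hd0P hp
    intro a
    exact htop.ge (Algebra.mem_top (x := a))
  · intro p hp
    have hIP : I ≤ P := hP.1.2
    obtain ⟨c, hc, h2⟩ := h.2 p (Ideal.map_mono hIP hp)
    have : Module.Flat R (MvPolynomial σ B) := Module.Flat.trans R B _
    rw [← smul_top_eq] at h2
    have h3 := flat_colon (fun r hr => (hPp.mem_or_mem hr).resolve_left hc) h2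
    rw [smul_top_eq] at h3
    refine ⟨_, Submonoid.mem_powers _, ?_⟩
    rw [mul_comm, mul_smul]
    exact smul_mem_map _ _ (smul_mem_map_of hd0P h3)

theorem exists_pi [IsNoetherianRing R] [Module.Flat R B] [Algebra.FiniteType B A] {I : Ideal R}
    (hI : I.IsRadical) {σ : Type*}
    (hfib : ∀ (P : Ideal R) [P.IsPrime], ∃ Y : σ → A, PMY R B P.primeCompl P Y) :
    ∃ π, (∀ r, π * r ∈ I → r ∈ I) ∧ ∃ Y : σ → A, PMY R B (Submonoid.powers π) I Y := by
  classical
  have hfin := Ideal.finite_minimalPrimes_of_isNoetherianRing R I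
  let _ : Fintype I.minimalPrimes := hfin.fintype
  have key : ∀ P : I.minimalPrimes, ∃ (Y : σ → A) (d : R), d ∉ P.1 ∧
      (∀ Q ∈ I.minimalPrimes, Q ≠ P.1 → d ∈ Q) ∧ PMY R B (Submonoid.powers d) I Y := by
    rintro ⟨P, hP⟩
    have : P.IsPrime := hP.1.1
    obtain ⟨Y, hY⟩ := hfib P
    obtain ⟨d, h1, h2, h3⟩ := local_G hI P hP hY
    exact ⟨Y, d, h1, h2, h3⟩
  choose Y d h1 h2 h3 using key
  refine ⟨∑ P, d P, ?_, _, PMY.sum (d := d) ?_ h3⟩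
  · intro r hr
    refine mem_of_minimal hI fun P hP => ?_
    have hPp : P.IsPrime := hP.1.1
    refine (hPp.mem_or_mem (hP.1.2 hr)).resolve_left fun hmem => h1 ⟨P, hP⟩ ?_
    rw [← Finset.add_sum_erase _ _ (Finset.mem_univ (⟨P, hP⟩ : I.minimalPrimes))] at hmem
    refine (Ideal.add_mem_iff_left _ (P.sum_mem fun Q hQ => ?_)).1 hmem
    refine h2 Q P hP fun h => ?_
    exact Finset.ne_of_mem_erase hQ (Subtype.ext h.symm)
  · intro P Q hPQ
    refine mem_of_minimal hI fun K hK => ?_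
    by_cases hKP : K = P.1
    · refine K.mul_mem_left _ (h2 Q K hK fun h => hPQ (Subtype.ext (hKP.symm.trans h)))
    · exact K.mul_mem_right _ (h2 P K hK hKP)

end

end FFRsec

namespace FFRsec
open MvPolynomial

section omega
variable {R B A : Type*} [CommRing R] [CommRing B] [CommRing A]
    [Algebra R B] [Algebra R A] [Algebra B A] [IsScalarTower R B A]

open KaehlerDifferential in
theorem omega_span [Algebra.FiniteType B A] {l : ℕ} (q : Ideal A) [hq : q.IsMaximal] (Y : Fin l → A)
    (h : ∀ a, ∃ d ∈ (q.comap (algebraMap R A)).primeCompl, ∃ p : MvPolynomial (Fin l) B,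
      d • a - aeval Y p ∈ (q.comap (algebraMap R A)).map (algebraMap R A)) :
    ∃ r, r ∉ q ∧ ∀ x : Ω[A⁄B], r • x ∈ Submodule.span A (Set.range fun i => D B A (Y i)) := by
  set N := Submodule.span A (Set.range fun i => D B A (Y i)) with hN
  have h1 : ∀ a, D B A a ∈ N ⊔ q • ⊤ := by
    intro a
    obtain ⟨d, hd, p, hp⟩ := h a
    have h2 : D B A (aeval Y p) ∈ N := by
      rw [der_chain]
      exact Submodule.sum_mem _ fun i _ => Submodule.smul_mem _ _ (Submodule.subset_span ⟨i, rfl⟩)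
    have h3 : ∀ z ∈ (q.comap (algebraMap R A)).map (algebraMap R A),
        D B A z ∈ (q • ⊤ : Submodule A Ω[A⁄B]) := by
      intro z hz
      refine Submodule.span_induction ?_ ?_ ?_ ?_ hz
      · rintro _ ⟨x, hx, rfl⟩
        rw [IsScalarTower.algebraMap_apply R B A, Derivation.map_algebraMap]
        exact zero_mem _
      · rw [map_zero]; exact zero_mem _
      · intro x y _ _ hx hy; rw [map_add]; exact add_mem hx hy
      · intro b x hx hx'
        rw [smul_eq_mul, Derivation.leibniz]
        refine add_mem (Submodule.smul_mem _ _ hx') ?_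
        exact Submodule.smul_mem_smul (Ideal.map_comap_le hx) trivial
    have h4 := h3 _ hp
    rw [map_sub] at h4
    have h5 : (algebraMap R A d) • D B A a ∈ N ⊔ q • ⊤ := by
      have : D B A (d • a) = (algebraMap R A d) • D B A a := by
        rw [← algebraMap_smul B d a, Derivation.map_smul, IsScalarTower.algebraMap_apply R B A]
        exact (algebraMap_smul A (algebraMap R B d) (D B A a)).symm
      rw [← this, ← sub_add_cancel (D B A (d • a)) (D B A (aeval Y p))]
      exact add_mem (Submodule.mem_sup_right h4) (Submodule.mem_sup_left h2)
    obtain ⟨e, i, hi, he⟩ := hq.exists_inv (x := algebraMap R A d) hd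
    have h6 : D B A a = e • (algebraMap R A d) • D B A a + i • D B A a := by
      rw [smul_smul, ← add_smul, he, one_smul]
    rw [h6]
    exact add_mem (Submodule.smul_mem _ _ h5)
      (Submodule.mem_sup_right (Submodule.smul_mem_smul hi trivial))
  have h2 : (⊤ : Submodule A Ω[A⁄B]) ≤ N ⊔ q • ⊤ := by
    refine (span_range_derivation B A).ge.trans ?_
    rw [Submodule.span_le]
    rintro _ ⟨a, rfl⟩
    exact h1 a
  have h3 : (⊤ : Submodule A (Ω[A⁄B] ⧸ N)) ≤ q • ⊤ := by
    have := Submodule.map_mono (f := N.mkQ) h2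
    rw [Submodule.map_sup, Submodule.map_smul''] at this
    simpa [Submodule.range_mkQ] using this
  obtain ⟨r, hr, hr'⟩ := Submodule.exists_sub_one_mem_and_smul_eq_zero_of_fg_of_le_smul q
    (⊤ : Submodule A (Ω[A⁄B] ⧸ N)) Module.Finite.fg_top h3
  refine ⟨r, fun hrq => hq.ne_top ((Ideal.eq_top_iff_one q).2 ?_), fun x => ?_⟩
  · have := q.sub_mem hrq hr
    simpa using this
  · have := hr' (N.mkQ x) trivial
    rw [← map_smul] at this
    exact (Submodule.Quotient.mk_eq_zero N).1 this

open KaehlerDifferential in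
theorem omega_finrank [IsDomain R] [IsDomain A] [IsDomain B] (hRA : Function.Injective (algebraMap R A))
    {l : ℕ} (Y : Fin l → A)
    (hgen : ∀ a, ∃ d : R, d ≠ 0 ∧ ∃ p : MvPolynomial (Fin l) B, d • a = aeval Y p)
    (hinj : Function.Injective (aeval Y : MvPolynomial (Fin l) B →ₐ[B] A)) :
    Module.finrank (FractionRing A) Ω[FractionRing A⁄B] = l := by
  let S := MvPolynomial (Fin l) B
  let L := FractionRing A
  let f : S →ₐ[B] L := (IsScalarTower.toAlgHom B A L).comp (aeval Y)
  let : Algebra S L := f.toRingHom.toAlgebra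
  have : IsScalarTower B S L := IsScalarTower.of_algebraMap_eq fun b => (f.commutes b).symm
  have hf : ∀ s : S, algebraMap S L s = algebraMap A L (aeval Y s) := fun s => rfl
  have hinjL : Function.Injective (algebraMap S L) :=
    (IsFractionRing.injective A L).comp hinj
  have : FaithfulSMul S L := (faithfulSMul_iff_algebraMap_injective S L).2 hinjL
  have : IsFractionRing S L := by
    refine IsFractionRing.of_field S L fun z => ?_
    obtain ⟨a, b, hb, rfl⟩ := IsFractionRing.div_surjective (A := A) z
    obtain ⟨d, hd, p, hp⟩ := hgen a
    obtain ⟨e, he, q, hq⟩ := hgen b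
    refine ⟨e • p, d • q, ?_⟩
    have key : ∀ (c : R) (s : S), aeval Y (c • s) = c • aeval Y s := by
      intro c s
      rw [← algebraMap_smul B c s, map_smul, algebraMap_smul]
    rw [hf, hf, key, key, ← hp, ← hq, smul_smul, smul_smul, mul_comm e d,
      Algebra.smul_def, Algebra.smul_def, map_mul (algebraMap A L), map_mul (algebraMap A L),
      mul_div_mul_left]
    rw [ne_eq, IsFractionRing.to_map_eq_zero_iff, map_eq_zero_iff _ hRA]
    exact mul_ne_zero hd he
  let b := (mvPolynomialBasis B (Fin l)).ofIsLocalizedModule L (nonZeroDivisors S) (map B B S L)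
  rw [Module.finrank_eq_card_basis b, Fintype.card_fin]

open KaehlerDifferential in
theorem omega_stablyFree [IsDomain R] [IsDomain A] [IsDomain B] [IsNoetherianRing A]
    [Algebra.FiniteType B A] (hRA : Function.Injective (algebraMap R A))
    (hRB : Function.Injective (algebraMap R B))
    (hF : FFRRing A) {l : ℕ}
    (hfib : ∀ (P : Ideal R) [P.IsPrime], ∃ Y : Fin l → A, PMY R B P.primeCompl P Y) :
    ∃ s, Nonempty ((Ω[A⁄B] × (Fin s → A)) ≃ₗ[A] (Fin (l + s) → A)) := by
  have hrank : Module.finrank (FractionRing A) Ω[FractionRing A⁄B] = l := by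
    obtain ⟨Y, hg, hi⟩ := hfib ⊥
    refine omega_finrank hRA Y (fun a => ?_) ?_
    · obtain ⟨d, hd, p, hp⟩ := hg a
      refine ⟨d, hd, p, ?_⟩
      rwa [Ideal.map_bot, Ideal.mem_bot, sub_eq_zero] at hp
    · rw [injective_iff_map_eq_zero]
      intro p hp
      obtain ⟨d, hd, h⟩ := hi p (by rw [hp]; exact zero_mem _)
      rw [Ideal.map_bot, Ideal.mem_bot] at h
      ext m
      have := congrArg (coeff m) h
      rw [coeff_smul, coeff_zero, Algebra.smul_def] at this
      rcases mul_eq_zero.1 this with h | h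
      · exact absurd ((map_eq_zero_iff _ hRB).1 h) hd
      · rw [h, coeff_zero]
  have key : ∀ (q : Ideal A) [q.IsMaximal], ∃ Y : Fin l → A, ∃ r, r ∉ q ∧
      (∀ x : Ω[A⁄B], r • x ∈ Submodule.span A (Set.range fun i => D B A (Y i))) ∧
      LinearIndependent A fun i => D B A (Y i) := by
    intro q _
    obtain ⟨Y, hg, -⟩ := hfib (q.comap (algebraMap R A))
    obtain ⟨r, hr, hsp⟩ := omega_span q Y hg
    refine ⟨Y, r, hr, hsp, ?_⟩
    have hr0 : r ≠ 0 := fun h => hr (h ▸ q.zero_mem)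
    let L := FractionRing A
    let φ := map B B A L
    have hli : LinearIndependent L fun i => φ (D B A (Y i)) := by
      refine linearIndependent_of_top_le_span_of_card_eq_finrank ?_ (by rw [hrank, Fintype.card_fin])
      rw [← span_range_map_derivation_of_isLocalization B A L (nonZeroDivisors A), Submodule.span_le]
      rintro _ ⟨a, rfl⟩
      have h1 := Submodule.mem_map_of_mem (f := φ) (hsp (D B A a))
      rw [Submodule.map_span, ← Set.range_comp] at h1
      have h2 := Submodule.span_subset_span A L _ h1
      rw [map_smul, ← algebraMap_smul L r] at h2
      have h3 : algebraMap A L r ≠ 0 := by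
        rw [ne_eq, IsFractionRing.to_map_eq_zero_iff]; exact hr0
      exact (Submodule.smul_mem_iff _ h3).1 h2
    have hli2 := hli.restrict_scalars (R := A) (by
      have := IsFractionRing.injective A L
      simpa [Algebra.smul_def] using this)
    exact LinearIndependent.of_comp φ hli2
  have : Module.Projective A Ω[A⁄B] := by
    have : Module.FinitePresentation A Ω[A⁄B] := Module.finitePresentation_of_finite A _
    refine Module.projective_of_localization_maximal fun q hq => ?_
    obtain ⟨Y, r, hr, hsp, hli⟩ := key q
    let Aq := Localization.AtPrime q
    let f := LocalizedModule.mkLinearMap q.primeCompl Ω[A⁄B]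
    have hl := hli.of_isLocalizedModule Aq q.primeCompl f
    refine Module.Projective.of_basis (Module.Basis.mk hl ?_)
    have htop := span_eq_top_of_isLocalizedModule Aq q.primeCompl f (v := Set.univ) (by simp)
    rw [← htop, Submodule.span_le]
    rintro _ ⟨x, -, rfl⟩
    have h1 := Submodule.mem_map_of_mem (f := f) (hsp x)
    rw [Submodule.map_span, ← Set.range_comp] at h1
    have h2 := Submodule.span_subset_span A Aq _ h1
    rw [map_smul, ← algebraMap_smul Aq r] at h2
    have h3 : IsUnit (algebraMap A Aq r) := IsLocalization.map_units Aq (⟨r, hr⟩ : q.primeCompl)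
    exact (Submodule.smul_mem_iff_of_isUnit _ h3).1 h2
  obtain ⟨n, hn⟩ := hF.hasFFR Ω[A⁄B]
  obtain ⟨s, t, ⟨e⟩⟩ := FFR.projective n hn
  obtain ⟨q, hq⟩ := Ideal.exists_maximal A
  obtain ⟨Y, r, hr, hsp, hli⟩ := key q
  have hr0 : r ≠ 0 := fun h => hr (h ▸ q.zero_mem)
  have hrk : Module.finrank A (Ω[A⁄B] × (Fin s → A)) = t := by
    rw [e.finrank_eq, Module.finrank_fin_fun]
  have hN : Module.finrank A Ω[A⁄B] = l := by
    apply le_antisymm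
    · have hfl : Module.IsTorsionFree A Ω[A⁄B] := inferInstance
      let g : Ω[A⁄B] →ₗ[A] Submodule.span A (Set.range fun i => D B A (Y i)) :=
        LinearMap.codRestrict _ (r • LinearMap.id) (fun x => hsp x)
      have hg : Function.Injective g := by
        intro x y hxy
        have : r • x = r • y := congrArg Subtype.val hxy
        exact smul_right_injective _ hr0 this
      have := LinearMap.finrank_le_finrank_of_injective hg
      rw [finrank_span_eq_card hli, Fintype.card_fin] at this
      exact this
    · have := hli.fintype_card_le_finrank
      rwa [Fintype.card_fin] at this
  have : l + s = t := by
    have h1 := Submodule.finrank_quotient_add_finrank (LinearMap.ker (LinearMap.snd A Ω[A⁄B] (Fin s → A)))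
    rw [((LinearMap.snd A Ω[A⁄B] (Fin s → A)).quotKerEquivOfSurjective
      Prod.snd_surjective).finrank_eq, Module.finrank_fin_fun, LinearMap.ker_snd,
      LinearMap.finrank_range_of_inj LinearMap.inl_injective, hN, hrk] at h1
    omega
  subst this
  exact ⟨s, ⟨e⟩⟩

end omega
end FFRsec

namespace FFRsec
open MvPolynomial

theorem hom_aeval {B Bb T Tb σ : Type*} [CommRing B] [CommRing Bb] [CommRing T] [CommRing Tb]
    [Algebra B T] [Algebra Bb Tb] (ψ : B →+* Bb) (μ : T →+* Tb)
    (h : ∀ b, μ (algebraMap B T b) = algebraMap Bb Tb (ψ b)) (Y : σ → T) (p : MvPolynomial σ B) :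
    μ (aeval Y p) = aeval (fun i => μ (Y i)) (MvPolynomial.map ψ p) := by
  induction p using MvPolynomial.induction_on with
  | C b => simp [h]
  | add p q hp hq => simp only [map_add, hp, hq]
  | mul_X p j hp => simp only [map_mul, hp, aeval_X, MvPolynomial.map_X]

theorem colon_map {R A : Type*} [CommRing R] [CommRing A] [Algebra R A] [Module.Flat R A]
    {I : Ideal R} {d : R} (hd : ∀ r, d * r ∈ I → r ∈ I) {x : A}
    (h : d • x ∈ I.map (algebraMap R A)) : x ∈ I.map (algebraMap R A) := by
  rw [← smul_top_eq] at h ⊢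
  exact flat_colon hd h

theorem colon_pow {R : Type*} [CommRing R] {I : Ideal R} {d : R} (hd : ∀ r, d * r ∈ I → r ∈ I)
    (N : ℕ) : ∀ r, d ^ N * r ∈ I → r ∈ I := by
  induction N with
  | zero => simp
  | succ N ih =>
    intro r h
    rw [pow_succ, mul_assoc] at h
    exact hd _ (ih _ h)

theorem mem_map_sup {R A : Type*} [CommRing R] [CommRing A] [Algebra R A]
    {I : Ideal R} {d : R} {x : A} : x ∈ (I ⊔ Ideal.span {d}).map (algebraMap R A) ↔
      ∃ i ∈ I.map (algebraMap R A), ∃ q : A, x = i + d • q := by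
  rw [Ideal.map_sup, Ideal.map_span, Set.image_singleton, Submodule.mem_sup]
  constructor
  · rintro ⟨i, hi, z, hz, rfl⟩
    obtain ⟨q, rfl⟩ := Ideal.mem_span_singleton'.1 hz
    exact ⟨i, hi, q, by rw [Algebra.smul_def, mul_comm]⟩
  · rintro ⟨i, hi, q, rfl⟩
    exact ⟨i, hi, d • q, Ideal.mem_span_singleton'.2 ⟨q, by rw [Algebra.smul_def, mul_comm]⟩, rfl⟩

theorem map_eq_zero_mv {R A Ab σ : Type*} [CommRing R] [CommRing A] [CommRing Ab] [Algebra R A]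
    {I : Ideal R} (φ : A →+* Ab) (hφ : ∀ a, φ a = 0 ↔ a ∈ I.map (algebraMap R A))
    (f : MvPolynomial σ A) :
    MvPolynomial.map φ f = 0 ↔ f ∈ I.map (algebraMap R (MvPolynomial σ A)) := by
  rw [mem_map_mv, MvPolynomial.ext_iff]
  simp only [coeff_map, coeff_zero, hφ]

section
variable {R B A Bb Ab : Type*} [CommRing R] [CommRing B] [CommRing A] [CommRing Bb] [CommRing Ab]
    [Algebra R B] [Algebra R A] [Algebra B A] [IsScalarTower R B A]
    [Algebra B Bb] [Algebra A Ab] [Algebra B Ab] [Algebra Bb Ab] [IsScalarTower B Bb Ab]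
    [IsScalarTower B A Ab] 

theorem omega_base [Algebra.IsPushout B Bb A Ab] {l s : ℕ}
    (E : (Ω[A⁄B] × (Fin s → A)) ≃ₗ[A] (Fin (l + s) → A)) :
    Nonempty ((Ω[Ab⁄Bb] × (Fin s → Ab)) ≃ₗ[Ab] (Fin (l + s) → Ab)) := by
  let e1 := LinearEquiv.baseChange A Ab _ _ E
  let e2 := (TensorProduct.prodRight A Ab Ab Ω[A⁄B] (Fin s → A))
  let e3 := TensorProduct.piScalarRight A Ab Ab (Fin s)
  let e4 := TensorProduct.piScalarRight A Ab Ab (Fin (l + s))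
  let e5 := KaehlerDifferential.tensorKaehlerEquiv B Bb A Ab
  exact ⟨(LinearEquiv.prodCongr e5.symm e3.symm).trans (e2.symm.trans (e1.trans e4))⟩

theorem lift_PMY {I : Ideal R} (hB : ∀ b, algebraMap B Bb b = 0 ↔ b ∈ I.map (algebraMap R B))
    (hA : ∀ a, algebraMap A Ab a = 0 ↔ a ∈ I.map (algebraMap R A))
    (hBs : Function.Surjective (algebraMap B Bb)) (hAs : Function.Surjective (algebraMap A Ab))
    {r k : ℕ} (e : MvPolynomial (Fin r) Ab ≃ₐ[Bb] MvPolynomial (Fin k) Bb) :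
    ∃ Y : Fin k → MvPolynomial (Fin r) A, PMY R B ⊥ I Y := by
  let ψ := algebraMap B Bb
  let μ : MvPolynomial (Fin r) A →+* MvPolynomial (Fin r) Ab := MvPolynomial.map (algebraMap A Ab)
  have hμs : Function.Surjective μ := MvPolynomial.map_surjective _ hAs
  have hψs : Function.Surjective (MvPolynomial.map ψ : MvPolynomial (Fin k) B →+* _) :=
    MvPolynomial.map_surjective _ hBs
  choose Y hY using fun i => hμs (e.symm (X i))
  have hcomm : ∀ b, μ (algebraMap B (MvPolynomial (Fin r) A) b) =
      algebraMap Bb (MvPolynomial (Fin r) Ab) (ψ b) := by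
    intro b
    simp only [μ, ψ, MvPolynomial.algebraMap_apply, MvPolynomial.map_C,
      ← IsScalarTower.algebraMap_apply]
  have key : ∀ p : MvPolynomial (Fin k) B, μ (aeval Y p) = e.symm (MvPolynomial.map ψ p) := by
    intro p
    rw [hom_aeval ψ μ hcomm]
    simp only [hY]
    have : (aeval fun i => e.symm (X i)) = (e.symm : MvPolynomial (Fin k) Bb →ₐ[Bb] _) := by
      ext i; simp
    rw [this]; rfl
  refine ⟨Y, fun a => ?_, fun p hp => ?_⟩
  · obtain ⟨p, hp⟩ := hψs (e (μ a))
    refine ⟨1, Submonoid.one_mem _, p, ?_⟩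
    rw [← map_eq_zero_mv (algebraMap A Ab) hA, one_smul, map_sub]
    rw [show MvPolynomial.map (algebraMap A Ab) (aeval Y p) = _ from key p, hp]
    simp [μ]
  · refine ⟨1, Submonoid.one_mem _, ?_⟩
    rw [← map_eq_zero_mv (algebraMap A Ab) hA] at hp
    rw [← map_eq_zero_mv (algebraMap B Bb) hB, one_smul]
    have := key p
    rw [show μ (aeval Y p) = 0 from hp] at this
    exact (map_eq_zero_iff _ e.symm.injective).1 this.symm

theorem patch_step [IsNoetherianRing B] [Algebra.FiniteType B A] [Module.Flat R B] [Module.Flat R A]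
    [Algebra.IsPushout B Bb A Ab] {I : Ideal R} {π : R} (hπ : ∀ r, π * r ∈ I → r ∈ I)
    (hB : ∀ b, algebraMap B Bb b = 0 ↔ b ∈ I.map (algebraMap R B))
    (hA : ∀ a, algebraMap A Ab a = 0 ↔ a ∈ I.map (algebraMap R A))
    (hBs : Function.Surjective (algebraMap B Bb)) (hAs : Function.Surjective (algebraMap A Ab))
    {l s : ℕ} (Y Z : Fin l → A) (hY : PMY R B (Submonoid.powers π) I Y)
    (hZ : PMY R B ⊥ (I ⊔ Ideal.span {π}) Z)
    (E : (Ω[A⁄B] × (Fin s → A)) ≃ₗ[A] (Fin (l + s) → A)) :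
    ∃ r, ∃ Y : Fin (l + r) → MvPolynomial (Fin r) A, PMY R B ⊥ I Y := by
  obtain ⟨E'⟩ := omega_base (Bb := Bb) (Ab := Ab) E
  have : IsNoetherianRing Bb := isNoetherianRing_of_surjective B Bb _ hBs
  have : Algebra.FiniteType B Ab := Algebra.FiniteType.of_surjective (IsScalarTower.toAlgHom B A Ab) hAs
  have : Algebra.FiniteType Bb Ab := Algebra.FiniteType.of_restrictScalars_finiteType B Bb Ab
  let ψ := algebraMap B Bb
  let φ := algebraMap A Ab
  let ϖ : Bb := ψ (algebraMap R B π)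
  have hψs : Function.Surjective (MvPolynomial.map ψ : MvPolynomial (Fin l) B →+* _) :=
    MvPolynomial.map_surjective _ hBs
  have hcomm : ∀ b, φ (algebraMap B A b) = algebraMap Bb Ab (ψ b) := by
    intro b
    simp only [φ, ψ, ← IsScalarTower.algebraMap_apply]
  have hev : ∀ (V : Fin l → A) p, φ (aeval V p) = aeval (fun i => φ (V i)) (MvPolynomial.map ψ p) :=
    hom_aeval ψ φ hcomm
  have hϖB : ∀ (N : ℕ) (b : B), ψ (π ^ N • b) = ϖ ^ N • ψ b := by
    intro N b; simp [ϖ, Algebra.smul_def]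
  have hϖA : ∀ (N : ℕ) (a : A), φ (π ^ N • a) = ϖ ^ N • φ a := by
    intro N a
    simp [ϖ, Algebra.smul_def, ← hcomm, ← IsScalarTower.algebraMap_apply R B A]
  have hϖp : ∀ (q : MvPolynomial (Fin l) B), MvPolynomial.map ψ (π • q) = ϖ • MvPolynomial.map ψ q := by
    intro q
    ext m
    have := hϖB 1 (coeff m q)
    rw [pow_one, pow_one] at this
    rw [coeff_map, coeff_smul, coeff_smul, coeff_map]
    exact this
  have hϖB1 := hϖB 1
  have hϖA1 := hϖA 1
  rw [pow_one, pow_one] at hϖB1 hϖA1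
  have main := patch (B := Bb) (A := Ab) (π := ϖ) (l := l) (s := s) ?_ ?_ (fun i => φ (Y i))
    (fun i => φ (Z i)) ?_ ?_ ?_ ?_ E'
  · obtain ⟨r, ⟨e⟩⟩ := main
    exact ⟨r, lift_PMY hB hA hBs hAs e⟩
  · intro x hx
    obtain ⟨b, rfl⟩ := hBs x
    rw [← hϖB1] at hx
    exact (hB _).2 (colon_map hπ ((hB _).1 hx))
  · intro x hx
    obtain ⟨b, rfl⟩ := hAs x
    rw [← hϖA1] at hx
    exact (hA _).2 (colon_map hπ ((hA _).1 hx))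
  · rw [injective_iff_map_eq_zero]
    intro x hx
    obtain ⟨p, rfl⟩ := hψs x
    rw [← hev] at hx
    obtain ⟨_, ⟨N, rfl⟩, h⟩ := hY.2 p ((hA _).1 hx)
    rw [map_eq_zero_mv (algebraMap B Bb) hB]
    rw [mem_map_mv] at h ⊢
    intro m
    exact colon_map (colon_pow hπ N) (by simpa [coeff_smul] using h m)
  · intro x
    obtain ⟨a, rfl⟩ := hAs x
    obtain ⟨_, ⟨N, rfl⟩, p, h⟩ := hY.1 a
    refine ⟨N, MvPolynomial.map ψ p, ?_⟩
    rw [← hev, ← sub_eq_zero, ← hϖA, ← map_sub]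
    exact (hA _).2 h
  · intro x
    obtain ⟨a, rfl⟩ := hAs x
    obtain ⟨d, hd, p, h⟩ := hZ.1 a
    rw [Submonoid.mem_bot] at hd
    subst hd
    obtain ⟨i, hi, q, hq⟩ := mem_map_sup.1 h
    refine ⟨MvPolynomial.map ψ p, φ q, ?_⟩
    rw [one_smul, sub_eq_iff_eq_add] at hq
    rw [← hev, ← hϖA1, hq, map_add, map_add, (hA i).2 hi, zero_add, add_comm]
  · intro x x' h
    obtain ⟨p, rfl⟩ := hψs x
    obtain ⟨a, rfl⟩ := hAs x'
    rw [← hev, ← hϖA1, ← sub_eq_zero, ← map_sub] at h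
    have h1 := (hA _).1 h
    have h2 : aeval Z p ∈ (I ⊔ Ideal.span {π}).map (algebraMap R A) :=
      mem_map_sup.2 ⟨_, h1, a, by ring⟩
    obtain ⟨d, hd, h3⟩ := hZ.2 p h2
    rw [Submonoid.mem_bot] at hd
    subst hd
    obtain ⟨i, hi, q, hq⟩ := mem_map_sup.1 h3
    refine ⟨MvPolynomial.map ψ q, ?_⟩
    rw [one_smul] at hq
    rw [hq, map_add, hϖp, (map_eq_zero_mv (algebraMap B Bb) hB i).2 hi, zero_add]
end

section
variable {R B A : Type*} [CommRing R] [CommRing B] [CommRing A] 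
    [Algebra R B] [Algebra R A] [Algebra B A] [IsScalarTower R B A]

theorem patch_step' [IsNoetherianRing B] [Algebra.FiniteType B A] [Module.Flat R B] [Module.Flat R A]
    {I : Ideal R} {π : R} (hπ : ∀ r, π * r ∈ I → r ∈ I)
    {l s : ℕ} (Y Z : Fin l → A) (hY : PMY R B (Submonoid.powers π) I Y)
    (hZ : PMY R B ⊥ (I ⊔ Ideal.span {π}) Z)
    (E : (Ω[A⁄B] × (Fin s → A)) ≃ₗ[A] (Fin (l + s) → A)) :
    ∃ r, ∃ Y : Fin (l + r) → MvPolynomial (Fin r) A, PMY R B ⊥ I Y := by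
  let J := I.map (algebraMap R B)
  let _ : Algebra A ((B ⧸ J) ⊗[B] A) := Algebra.TensorProduct.rightAlgebra
  have hmk : ∀ a : A, algebraMap A ((B ⧸ J) ⊗[B] A) a = 1 ⊗ₜ a := fun a => rfl
  refine patch_step (Bb := B ⧸ J) (Ab := (B ⧸ J) ⊗[B] A) hπ ?_ ?_ Ideal.Quotient.mk_surjective ?_
    Y Z hY hZ E
  · intro b; exact Ideal.Quotient.eq_zero_iff_mem
  · intro a
    rw [hmk, ← map_eq_zero_iff _ (TensorProduct.quotTensorEquivQuotSMul A J).injective,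
      ← map_one (Ideal.Quotient.mk J), TensorProduct.quotTensorEquivQuotSMul_mk_tmul, one_smul,
      Submodule.Quotient.mk_eq_zero, smul_top_eq, Ideal.map_map, ← IsScalarTower.algebraMap_eq]
  · intro x
    induction x using TensorProduct.induction_on with
    | zero => exact ⟨0, map_zero _⟩
    | add x y hx hy =>
      obtain ⟨a, rfl⟩ := hx
      obtain ⟨b, rfl⟩ := hy
      exact ⟨a + b, map_add _ _ _⟩
    | tmul x a =>
      obtain ⟨b, rfl⟩ := Ideal.Quotient.mk_surjective x
      refine ⟨b • a, ?_⟩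
      rw [hmk, ← TensorProduct.smul_tmul]
      congr 1
      rw [Algebra.smul_def, mul_one]; rfl
end
end FFRsec

namespace FFRsec
open MvPolynomial

theorem PMY.equiv {R B A A' : Type*} [CommRing R] [CommRing B] [CommRing A] [CommRing A']
    [Algebra R B] [Algebra R A] [Algebra B A] [IsScalarTower R B A]
    [Algebra R A'] [Algebra B A'] [IsScalarTower R B A']
    {M : Submonoid R} {I : Ideal R} {σ : Type*} {Y : σ → A} (h : PMY R B M I Y)
    (e : A ≃ₐ[B] A') : PMY R B M I (fun i => e (Y i)) := by
  have key : ∀ p : MvPolynomial σ B, aeval (fun i => e (Y i)) p = e (aeval Y p) := by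
    intro p
    exact (MvPolynomial.comp_aeval_apply Y (e : A →ₐ[B] A') p).symm
  let eR := e.restrictScalars R
  have heR : ∀ x, eR x = e x := fun _ => rfl
  refine ⟨fun a => ?_, fun p hp => ?_⟩
  · obtain ⟨d, hd, p, hp⟩ := h.1 (e.symm a)
    refine ⟨d, hd, p, ?_⟩
    have := map_mem_map I (eR : A →ₐ[R] A') _ hp
    rw [map_sub, map_smul] at this
    simpa [key, heR] using this
  · refine h.2 p ?_
    have := map_mem_map I (eR.symm : A' →ₐ[R] A) _ hp
    rw [key, ← heR] at this
    simpa using this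

section
variable {R B A : Type*} [CommRing R] [CommRing B] [CommRing A] 
    [Algebra R B] [Algebra R A] [Algebra B A] [IsScalarTower R B A]

theorem fib_ext {l : ℕ}
    (hfib : ∀ (P : Ideal R) [P.IsPrime], ∃ Y : Fin l → A, PMY R B P.primeCompl P Y) (r : ℕ)
    (P : Ideal R) [P.IsPrime] :
    ∃ Y : Fin (l + r) → MvPolynomial (Fin r) A, PMY R B P.primeCompl P Y := by
  obtain ⟨Y, hY⟩ := hfib P
  exact ⟨_, (hY.ext (τ := Fin r)).reindex (finSumFinEquiv.trans (finCongr (add_comm r l)))⟩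

theorem induct [IsNoetherianRing R] [IsDomain R] [IsDomain B] [IsDomain A] [IsNoetherianRing B]
    [IsNoetherianRing A] [Module.Flat R B] [Module.Flat R A] [Algebra.FiniteType B A]
    (hRA : Function.Injective (algebraMap R A))
    (hRB : Function.Injective (algebraMap R B)) (hF : FFRRing A) {l : ℕ}
    (hfib : ∀ (P : Ideal R) [P.IsPrime], ∃ Y : Fin l → A, PMY R B P.primeCompl P Y) (I : Ideal R) :
    ∃ r, ∃ Y : Fin (l + r) → MvPolynomial (Fin r) A, PMY R B ⊥ I Y := by
  have hflat : ∀ r, Module.Flat R (MvPolynomial (Fin r) A) := fun r => Module.Flat.trans R A _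
  have hft : ∀ r, Algebra.FiniteType B (MvPolynomial (Fin r) A) := fun r =>
    Algebra.FiniteType.trans (S := A) inferInstance inferInstance
  induction I using WellFoundedGT.induction with
  | ind I ih =>
  by_cases hrad : I.IsRadical
  · by_cases htop : I = ⊤
    · subst htop
      refine ⟨0, fun i => 0, fun a => ⟨1, Submonoid.one_mem _, 0, ?_⟩, fun p _ =>
        ⟨1, Submonoid.one_mem _, ?_⟩⟩
      · rw [Ideal.map_top]; trivial
      · rw [Ideal.map_top]; trivial
    obtain ⟨π, hπ, Y, hY⟩ := exists_pi hrad hfib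
    have hπI : π ∉ I := fun h => htop ((Ideal.eq_top_iff_one I).2 (hπ 1 (by simpa using h)))
    have hlt : I < I ⊔ Ideal.span {π} :=
      lt_of_le_of_ne le_sup_left fun h => hπI (h ▸ Ideal.mem_sup_right (Ideal.mem_span_singleton_self π))
    obtain ⟨r, Z, hZ⟩ := ih _ hlt
    have hY' := (hY.ext (τ := Fin r)).reindex (finSumFinEquiv.trans (finCongr (add_comm r l)))
    have hfl := hflat r
    have hft' := hft r
    obtain ⟨s, ⟨E⟩⟩ := omega_stablyFree (R := R) (B := B) (A := MvPolynomial (Fin r) A)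
      ((MvPolynomial.C_injective (Fin r) A).comp hRA) hRB (ffr_mvPoly hF r) (fun P _ => fib_ext hfib r P)
    obtain ⟨r', V, hV⟩ := patch_step' hπ _ Z hY' hZ E
    let e : MvPolynomial (Fin r') (MvPolynomial (Fin r) A) ≃ₐ[A] MvPolynomial (Fin (r' + r)) A :=
      (sumAlgEquiv A (Fin r') (Fin r)).symm.trans (renameEquiv A finSumFinEquiv)
    refine ⟨r' + r, _, (hV.equiv (e.restrictScalars B)).reindex (finCongr (by omega))⟩
  · have hlt : I < I.radical := lt_of_le_of_ne Ideal.le_radical fun h => hrad (h ▸ Ideal.radical_isRadical I)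
    obtain ⟨r, Y, hY⟩ := ih _ hlt
    obtain ⟨k, hk⟩ := Ideal.exists_radical_pow_le_of_fg I (IsNoetherian.noetherian _)
    exact ⟨r, Y, PMY.of_pow hk Ideal.le_radical hY⟩

end
end FFRsec

namespace FFRsec
open MvPolynomial

section
variable {R B A : Type*} [CommRing R] [CommRing B] [CommRing A] 
    [Algebra R B] [Algebra R A] [Algebra B A] [IsScalarTower R B A]

theorem PMY_of_fibre {l : ℕ} (P : Ideal R) [P.IsPrime]
    [Algebra (P.ResidueField ⊗[R] B) (P.ResidueField ⊗[R] A)]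
    (halg : ∀ x, algebraMap (P.ResidueField ⊗[R] B) (P.ResidueField ⊗[R] A) x =
      Algebra.TensorProduct.map (AlgHom.id R P.ResidueField) (IsScalarTower.toAlgHom R B A) x)
    (Φ : (P.ResidueField ⊗[R] A) ≃ₐ[P.ResidueField ⊗[R] B]
      MvPolynomial (Fin l) (P.ResidueField ⊗[R] B)) :
    ∃ Y : Fin l → A, PMY R B P.primeCompl P Y := by
  have h1 : ∀ b : B, algebraMap (P.ResidueField ⊗[R] B) (P.ResidueField ⊗[R] A) (1 ⊗ₜ b) =
      1 ⊗ₜ (algebraMap B A b) := by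
    intro b; rw [halg]; simp
  obtain ⟨ρ, hρ, hx⟩ := common_d P.primeCompl (Finset.univ : Finset (Fin l))
    (fun i d => ∃ s : A, d • Φ.symm (X i) = 1 ⊗ₜ[R] s) (by
      rintro i d c ⟨s, hs⟩
      exact ⟨c • s, by rw [mul_smul, hs, TensorProduct.tmul_smul]⟩)
    (fun i _ => by
      obtain ⟨r, hr, s, hs⟩ := fib_surj P (Φ.symm (X i))
      exact ⟨r, hr, s, hs⟩)
  choose Y hY using fun i => hx i (Finset.mem_univ i)
  have hsm : ∀ (d : R) (x : P.ResidueField ⊗[R] B),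
      algebraMap _ (P.ResidueField ⊗[R] A) (d • x) = d • algebraMap _ (P.ResidueField ⊗[R] A) x := by
    intro d x
    rw [halg, halg, map_smul]
  have htow : IsScalarTower R (P.ResidueField ⊗[R] B) (P.ResidueField ⊗[R] A) := by
    refine IsScalarTower.of_algebraMap_eq fun r => ?_
    rw [halg, AlgHom.commutes]
  let inc : A →+* P.ResidueField ⊗[R] A :=
    (Algebra.TensorProduct.includeRight : A →ₐ[R] P.ResidueField ⊗[R] A).toRingHom
  let incB : B →+* P.ResidueField ⊗[R] B :=
    (Algebra.TensorProduct.includeRight : B →ₐ[R] P.ResidueField ⊗[R] B).toRingHom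
  have hinc : ∀ a, inc a = 1 ⊗ₜ a := fun _ => rfl
  have hincB : ∀ b, incB b = 1 ⊗ₜ b := fun _ => rfl
  have hincs : ∀ (d : R) a, inc (d • a) = d • inc a := fun d a => by
    rw [hinc, hinc, TensorProduct.tmul_smul]
  have hmul : ∀ (d e : R) (x y : P.ResidueField ⊗[R] A), (d * e) • (x * y) = (d • x) * (e • y) := by
    intro d e x y
    rw [smul_mul_smul_comm]
  have gen : ∀ w : MvPolynomial (Fin l) (P.ResidueField ⊗[R] B), ∃ d ∉ P,
      ∃ p : MvPolynomial (Fin l) B, d • Φ.symm w = inc (aeval Y p) := by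
    intro w
    induction w using MvPolynomial.induction_on with
    | C c =>
      obtain ⟨r, hr, s, hs⟩ := fib_surj P c
      refine ⟨r, hr, C s, ?_⟩
      rw [← algebraMap_eq, AlgEquiv.commutes, ← hsm, hs, h1, aeval_C, hinc]
    | add p q hp hq =>
      obtain ⟨d, hd, p', hp'⟩ := hp
      obtain ⟨e, he, q', hq'⟩ := hq
      refine ⟨d * e, P.primeCompl.mul_mem hd he, e • p' + d • q', ?_⟩
      have key : ∀ (c : R) (s : MvPolynomial (Fin l) B), aeval Y (c • s) = c • aeval Y s := by
        intro c s
        rw [← algebraMap_smul B c s, map_smul, algebraMap_smul]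
      rw [map_add, smul_add, map_add, map_add, key, key, hincs, hincs, ← hp', ← hq', smul_smul,
        smul_smul, mul_comm e d]
    | mul_X p i hp =>
      obtain ⟨d, hd, p', hp'⟩ := hp
      refine ⟨d * ρ, P.primeCompl.mul_mem hd hρ, p' * X i, ?_⟩
      rw [map_mul, hmul, hp', hY, map_mul, map_mul, aeval_X, hinc (Y i)]
  refine ⟨Y, fun a => ?_, fun p hp => ?_⟩
  · obtain ⟨d, hd, p, h⟩ := gen (Φ (inc a))
    rw [AlgEquiv.symm_apply_apply, ← hincs, ← sub_eq_zero, ← map_sub] at h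
    obtain ⟨d', hd', h'⟩ := fib_zero P h
    refine ⟨d' * d, P.primeCompl.mul_mem hd' hd, (algebraMap R B d') • p, ?_⟩
    rw [smul_top_eq] at h'
    rw [map_smul, algebraMap_smul, mul_smul, ← smul_sub]
    exact h'
  · have h0 : inc (aeval Y p) = 0 := fib_eq_zero P ((smul_top_eq P _).2 hp)
    rw [hom_aeval incB inc (fun b => (h1 b).symm)] at h0
    have h2 : Φ (aeval (fun i => inc (Y i)) (MvPolynomial.map incB p)) =
        aeval (fun i => ρ • X i) (MvPolynomial.map incB p) := by
      rw [← AlgEquiv.coe_toAlgHom, MvPolynomial.comp_aeval_apply]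
      congr 2
      funext i
      rw [hinc, ← hY]
      rw [← algebraMap_smul (P.ResidueField ⊗[R] B) ρ, AlgEquiv.coe_toAlgHom, map_smul,
        AlgEquiv.apply_symm_apply, algebraMap_smul]
    rw [h0, map_zero] at h2
    have h3 : ∀ m, ∃ d ∈ P.primeCompl, d • coeff m p ∈ P.map (algebraMap R B) := by
      intro m
      have := coeff_scale ρ (MvPolynomial.map incB p) m
      rw [← h2, coeff_zero, coeff_map, hincB, ← TensorProduct.tmul_smul] at this
      obtain ⟨d, hd, h⟩ := fib_zero P this.symm
      rw [smul_top_eq, smul_smul] at h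
      exact ⟨_, P.primeCompl.mul_mem hd (P.primeCompl.pow_mem hρ _), h⟩
    obtain ⟨d, hd, h4⟩ := common_d P.primeCompl p.support
      (fun m d => d • coeff m p ∈ P.map (algebraMap R B))
      (fun m d c h => by rw [mul_smul]; exact smul_mem_map _ _ h) (fun m _ => h3 m)
    refine ⟨d, hd, ?_⟩
    rw [mem_map_mv]
    intro m
    rw [coeff_smul]
    by_cases hm : m ∈ p.support
    · exact h4 m hm
    · rw [notMem_support_iff.1 hm, smul_zero]; exact zero_mem _

theorem final_aux [IsNoetherianRing R] [IsDomain R] [IsDomain B] [IsDomain A] [IsNoetherianRing B]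
    [IsNoetherianRing A] [Module.Flat R B] [Module.Flat R A] [Algebra.FiniteType B A]
    (hRA : Function.Injective (algebraMap R A))
    (hRB : Function.Injective (algebraMap R B)) (hF : FFRRing A) {l : ℕ}
    (hfib : FibersPolynomialOver R B A l) :
    ∃ r s : ℕ, Nonempty (MvPolynomial (Fin r) A ≃ₐ[B] MvPolynomial (Fin s) B) := by
  obtain ⟨r, Y, hY⟩ := induct (R := R) (B := B) hRA hRB hF (l := l) (by
    intro P hP
    let _ : Algebra (P.ResidueField ⊗[R] B) (P.ResidueField ⊗[R] A) :=
      (Algebra.TensorProduct.map (AlgHom.id R P.ResidueField)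
        (IsScalarTower.toAlgHom R B A)).toRingHom.toAlgebra
    obtain ⟨Φ⟩ := hfib P hP
    exact PMY_of_fibre P (fun x => rfl) Φ) ⊥
  refine ⟨r, l + r, ⟨(AlgEquiv.ofBijective (aeval Y) ⟨?_, ?_⟩).symm⟩⟩
  · rw [injective_iff_map_eq_zero]
    intro p hp
    obtain ⟨d, hd, h⟩ := hY.2 p (by rw [hp]; exact zero_mem _)
    rw [Submonoid.mem_bot] at hd
    subst hd
    rwa [Ideal.map_bot, Ideal.mem_bot, one_smul] at h
  · intro a
    obtain ⟨d, hd, p, h⟩ := hY.1 a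
    rw [Submonoid.mem_bot] at hd
    subst hd
    rw [Ideal.map_bot, Ideal.mem_bot, one_smul, sub_eq_zero] at h
    exact ⟨p, h.symm⟩
end
end FFRsec

/-- Let `D` be a PID, `R` a polynomial ring in finitely many variables over `D`,
`A` an `𝔸ⁿ`-fibration over `R` and `W` an `m`-tuple residual variable of `A` over `R`.
Then `A` is a stably polynomial algebra over `R[W]`. -/
theorem stablyPolynomial_over_adjoin_of_pid_base
    (D R A : Type*) [CommRing D] [IsDomain D] [IsPrincipalIdealRing D]
    [CommRing R] [Algebra D R] [CommRing A] [Algebra R A]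
    (hR : ∃ k : ℕ, Nonempty (R ≃ₐ[D] MvPolynomial (Fin k) D))
    (n m : ℕ) (hA : IsAffineFibration R A n)
    (W : Fin m → A) (hW : IsResidualVariable R A n m W) :
    ∃ r s : ℕ,
      Nonempty (MvPolynomial (Fin r) A ≃ₐ[↥(Algebra.adjoin R (Set.range W))]
        MvPolynomial (Fin s) ↥(Algebra.adjoin R (Set.range W))) := by
  obtain ⟨k, ⟨e⟩⟩ := hR
  obtain ⟨hft, hflat, hfibA⟩ := hA
  obtain ⟨hind, hfib⟩ := hW
  have hRdom : IsDomain R := e.toMulEquiv.isDomain _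
  have hRnoeth : IsNoetherianRing R := isNoetherianRing_of_ringEquiv _ e.symm.toRingEquiv
  have hRF : FFRsec.FFRRing R :=
    FFRsec.FFRRing.of_ringEquiv e.symm.toRingEquiv (FFRsec.ffr_mvPoly FFRsec.FFRRing.of_pid k)
  have hAnoeth : IsNoetherianRing A := Algebra.FiniteType.isNoetherianRing R A
  have hAF : FFRsec.FFRRing A := FFRsec.ffr_fib hRF (by
    intro P hP
    obtain ⟨Φ⟩ := hfibA P hP
    exact FFRsec.FFRRing.of_ringEquiv Φ.symm.toRingEquiv
      (FFRsec.ffr_mvPoly FFRsec.FFRRing.of_pid n))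
  have hAinj : Function.Injective fun a : A => (1 : (⊥ : Ideal R).ResidueField) ⊗ₜ[R] a := by
    have : Function.Injective (Algebra.TensorProduct.includeRight :
        A →ₐ[R] (⊥ : Ideal R).ResidueField ⊗[R] A) := by
      rw [injective_iff_map_eq_zero]
      intro a ha
      obtain ⟨d, hd, h⟩ := FFRsec.fib_zero (⊥ : Ideal R) ha
      rw [Submodule.bot_smul, Submodule.mem_bot] at h
      exact (smul_eq_zero.1 h).resolve_left hd
    exact this
  have hAdom : IsDomain A := by
    obtain ⟨Φ⟩ := hfibA ⊥ Ideal.isPrime_bot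
    have : IsDomain ((⊥ : Ideal R).ResidueField ⊗[R] A) := Φ.toMulEquiv.isDomain _
    exact Function.Injective.isDomain (Algebra.TensorProduct.includeRight :
        A →ₐ[R] (⊥ : Ideal R).ResidueField ⊗[R] A) hAinj
  have hRA : Function.Injective (algebraMap R A) := FaithfulSMul.algebraMap_injective R A
  let eB := hind.aevalEquiv
  have hRB : Function.Injective (algebraMap R (Algebra.adjoin R (Set.range W))) := by
    intro x y h
    exact hRA (congrArg Subtype.val h)
  have hBnoeth : IsNoetherianRing (Algebra.adjoin R (Set.range W)) :=
    isNoetherianRing_of_ringEquiv _ eB.toRingEquiv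
  have hBflat : Module.Flat R (Algebra.adjoin R (Set.range W)) :=
    Module.Flat.of_linearEquiv eB.symm.toLinearEquiv
  have hBA : Algebra.FiniteType (Algebra.adjoin R (Set.range W)) A :=
    Algebra.FiniteType.of_restrictScalars_finiteType R _ A
  exact FFRsec.final_aux hRA hRB hAF hfib
end

section
/- Let R be a Noetherian commutative ring, A an 𝔸^{m+k}-fibration over R, and W = (W₁,…,W_m) an m-tuple residual variable of A over R. Then Ω_R(A) is isomorphic as an A-module to Ω_{R[W]}(A) ⊕ A^m. In particular, Ω_R(A) is a stably free A-module if and only if Ω_{R[W]}(A) is a stably free A-module. -/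
open TensorProduct

/-- If `A` is fibrewise polynomial over `B`, derivations with values in a `κ`-algebra extend. -/
lemma aux_exists_derivation {R B A κ K : Type*} [CommRing R] [CommRing B] [CommRing A]
    [CommRing κ] [CommRing K] [Algebra R B] [Algebra R A] [Algebra B A] [IsScalarTower R B A]
    [Algebra R κ] [Algebra κ K] [Algebra A K] [Algebra R K] [IsScalarTower R κ K]
    [IsScalarTower R A K] {n : ℕ}
    (e : (κ ⊗[R] A) ≃+* MvPolynomial (Fin n) (κ ⊗[R] B))
    (he : ∀ b, e (Algebra.TensorProduct.map (AlgHom.id R κ)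
        (IsScalarTower.toAlgHom R B A) b) = MvPolynomial.C b)
    (h : B →ₐ[R] DualNumber K)
    (hh : ∀ b, TrivSqZeroExt.fst (h b) = algebraMap A K (algebraMap B A b)) :
    ∃ D : Derivation R A K, ∀ b, D (algebraMap B A b) = TrivSqZeroExt.snd (h b) := by
  let φ : κ ⊗[R] A →ₐ[R] K := Algebra.TensorProduct.lift (IsScalarTower.toAlgHom R κ K)
    (IsScalarTower.toAlgHom R A K) (fun _ _ => Commute.all _ _)
  let ιK : K →ₐ[R] DualNumber K := TrivSqZeroExt.inlAlgHom R K K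
  let g : κ ⊗[R] B →ₐ[R] DualNumber K := Algebra.TensorProduct.lift
    (ιK.comp (IsScalarTower.toAlgHom R κ K)) h (fun _ _ => Commute.all _ _)
  let ψ : MvPolynomial (Fin n) (κ ⊗[R] B) →+* DualNumber K :=
    MvPolynomial.eval₂Hom g.toRingHom (fun l => ιK (φ (e.symm (MvPolynomial.X l))))
  let F : κ ⊗[R] A →+* DualNumber K := ψ.comp e.toRingHom
  have hF1 : ∀ x, TrivSqZeroExt.fst (F x) = φ x := by
    have key : ((TrivSqZeroExt.fstHom R K K).toRingHom.comp ψ) =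
        φ.toRingHom.comp e.symm.toRingHom := by
      apply MvPolynomial.ringHom_ext
      · intro b
        have h1 : e.symm (MvPolynomial.C b) = Algebra.TensorProduct.map (AlgHom.id R κ)
            (IsScalarTower.toAlgHom R B A) b := by rw [← he, e.symm_apply_apply]
        have h2 : (TrivSqZeroExt.fstHom R K K).comp g = φ.comp
            (Algebra.TensorProduct.map (AlgHom.id R κ) (IsScalarTower.toAlgHom R B A)) := by
          apply Algebra.TensorProduct.ext
          · ext x
            simp [g, φ, ιK]
          · ext x
            simp [g, φ, hh]
        have h3 := DFunLike.congr_fun h2 b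
        simpa [ψ, h1] using h3
      · intro l
        simp [ψ, ιK]
    intro x
    have := DFunLike.congr_fun key (e x)
    simpa [F] using this
  have hF2 : ∀ b, F (Algebra.TensorProduct.map (AlgHom.id R κ)
        (IsScalarTower.toAlgHom R B A) b) = g b := by
    intro b
    simp [F, he, ψ]
  have hFA : ∀ b, F (1 ⊗ₜ algebraMap B A b) = h b := by
    intro b
    have := hF2 (1 ⊗ₜ b)
    simpa [g] using this
  let G : A →+* DualNumber K := F.comp
    (Algebra.TensorProduct.includeRight : A →ₐ[R] κ ⊗[R] A).toRingHom
  have hG1 : ∀ a, TrivSqZeroExt.fst (G a) = algebraMap A K a := by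
    intro a
    simp [G, hF1, φ]
  have hGB : ∀ b, G (algebraMap B A b) = h b := fun b => hFA b
  have hGR : ∀ r, TrivSqZeroExt.snd (G (algebraMap R A r)) = 0 := by
    intro r
    rw [IsScalarTower.algebraMap_apply R B A, hGB, AlgHom.commutes,
      TrivSqZeroExt.algebraMap_eq_inl', TrivSqZeroExt.snd_inl]
  have hmul : ∀ a b, TrivSqZeroExt.snd (G (a * b)) =
      a • TrivSqZeroExt.snd (G b) + b • TrivSqZeroExt.snd (G a) := by
    intro a b
    rw [map_mul, TrivSqZeroExt.snd_mul, hG1, hG1]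
    simp [Algebra.smul_def, mul_comm]
  refine ⟨Derivation.mk' { toFun := fun a => TrivSqZeroExt.snd (G a)
                           map_add' := fun a b => by simp
                           map_smul' := fun r a => ?_ } ?_, ?_⟩
  · rw [Algebra.smul_def, hmul, hGR, smul_zero, add_zero, algebraMap_smul]; rfl
  · exact fun a b => hmul a b
  · intro b
    exact congrArg TrivSqZeroExt.snd (hGB b)

/-- Fibrewise construction of coordinate derivations. -/
lemma aux_exists_linear {R A : Type*} [CommRing R] [CommRing A] [Algebra R A] {m n : ℕ}
    {W : Fin m → A} (hW : IsResidualVariable R A n m W)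
    (M : Ideal A) [M.IsMaximal] (i : Fin m) :
    ∃ D : Derivation R A M.ResidueField, ∀ j, D (W j) = if j = i then 1 else 0 := by
  obtain ⟨hind, hfib⟩ := hW
  let P : Ideal R := M.under R
  obtain ⟨e⟩ := hfib P inferInstance
  let B := Algebra.adjoin R (Set.range W)
  let K := M.ResidueField
  let h : B →ₐ[R] DualNumber K := (MvPolynomial.aeval (fun j =>
    (TrivSqZeroExt.inl (algebraMap A K (W j)) +
      TrivSqZeroExt.inr (if j = i then 1 else 0) : DualNumber K))).comp
        hind.aevalEquiv.symm.toAlgHom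
  have hh : ∀ b : B, TrivSqZeroExt.fst (h b) = algebraMap A K (algebraMap B A b) := by
    have : ((TrivSqZeroExt.fstHom R K K).comp (MvPolynomial.aeval (fun j =>
      (TrivSqZeroExt.inl (algebraMap A K (W j)) +
      TrivSqZeroExt.inr (if j = i then 1 else 0) : DualNumber K)))) =
        (IsScalarTower.toAlgHom R A K).comp (MvPolynomial.aeval W) := by
      ext j; simp
    intro b
    obtain ⟨p, rfl⟩ := hind.aevalEquiv.surjective b
    have h1 := DFunLike.congr_fun this p
    rw [hind.algebraMap_aevalEquiv]
    simpa [h] using h1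
  let κK := Ideal.ResidueField.mapₐ (R := R) P M (Algebra.ofId R A) rfl
  letI : Algebra P.ResidueField K := κK.toRingHom.toAlgebra
  have : IsScalarTower R P.ResidueField K := IsScalarTower.of_algebraMap_eq fun r =>
    (κK.commutes r).symm
  letI : Algebra (ResidueFieldAt R P ⊗[R] B) (ResidueFieldAt R P ⊗[R] A) :=
      (Algebra.TensorProduct.map (AlgHom.id R (ResidueFieldAt R P))
        (IsScalarTower.toAlgHom R B A)).toRingHom.toAlgebra
  obtain ⟨D, hD⟩ := aux_exists_derivation (R := R) (B := B) (A := A) (κ := P.ResidueField)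
    (K := K) e.toRingEquiv (fun b => e.commutes b) h hh
  refine ⟨D, fun j => ?_⟩
  have h1 : W j = algebraMap B A (hind.aevalEquiv (MvPolynomial.X j)) := by
    rw [hind.algebraMap_aevalEquiv]; simp
  rw [h1, hD]
  simp [h]

lemma aux_exists_retraction {R A : Type*} [CommRing R] [CommRing A] [Algebra R A] {m n : ℕ}
    [Module.Projective A (KaehlerDifferential R A)]
    {W : Fin m → A} (hW : IsResidualVariable R A n m W) :
    ∃ r : KaehlerDifferential R A →ₗ[A] (Fin m → A),
      ∀ j, r (KaehlerDifferential.D R A (W j)) = Pi.single j 1 := by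
  classical
  let g : (KaehlerDifferential R A →ₗ[A] A) →ₗ[A] (Fin m → A) :=
    LinearMap.pi (fun j => LinearMap.applyₗ (KaehlerDifferential.D R A (W j)))
  have hg : ∀ l j, g l j = l (KaehlerDifferential.D R A (W j)) := fun l j => rfl
  have hsurj : LinearMap.range g = ⊤ := by
    let Q := (Fin m → A) ⧸ LinearMap.range g
    let I : Ideal A := Module.annihilator A Q
    have hI : I = ⊤ := by
      by_contra hne
      obtain ⟨M, hM, hIM⟩ := Ideal.exists_le_maximal I hne
      have hle : (⊤ : Submodule A Q) ≤ M • ⊤ := by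
        have h1 : (⊤ : Submodule A (Fin m → A)) ≤ LinearMap.range g ⊔ M • ⊤ := by
          rw [← (Pi.basisFun A (Fin m)).span_eq, Submodule.span_le]
          rintro _ ⟨i, rfl⟩
          obtain ⟨D, hD⟩ := aux_exists_linear hW M i
          obtain ⟨l, hl⟩ := Module.projective_lifting_property
            (Algebra.linearMap A M.ResidueField) D.liftKaehlerDifferential
            M.algebraMap_residueField_surjective
          have h2 : ∀ j, (Pi.basisFun A (Fin m) i - g l) j ∈ M := by
            intro j
            have h3 := DFunLike.congr_fun hl (KaehlerDifferential.D R A (W j))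
            simp only [LinearMap.comp_apply, Algebra.linearMap_apply,
              Derivation.liftKaehlerDifferential_comp_D, hD] at h3
            rw [← Ideal.algebraMap_residueField_eq_zero, Pi.sub_apply, hg, map_sub, h3]
            by_cases hji : j = i <;> simp [hji]
          rw [SetLike.mem_coe, Submodule.mem_sup]
          refine ⟨g l, ⟨l, rfl⟩, Pi.basisFun A (Fin m) i - g l, ?_, by abel⟩
          rw [← (Pi.basisFun A (Fin m)).sum_repr (Pi.basisFun A (Fin m) i - g l)]
          refine sum_mem fun j _ => Submodule.smul_mem_smul ?_ (Submodule.subset_span ⟨j, rfl⟩)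
          rw [Pi.basisFun_repr]
          exact h2 j
        have h4 := Submodule.map_mono (f := (LinearMap.range g).mkQ) h1
        rw [Submodule.map_sup, Submodule.map_smul'', Submodule.map_top,
          Submodule.range_mkQ] at h4
        refine h4.trans (sup_le ?_ le_rfl)
        rw [Submodule.mkQ_map_self]; exact bot_le
      obtain ⟨r, hr1, hr2⟩ := Submodule.exists_sub_one_mem_and_smul_eq_zero_of_fg_of_le_smul
        M (⊤ : Submodule A Q) Module.Finite.fg_top hle
      have hrI : r ∈ I := Module.mem_annihilator.mpr fun q => hr2 q trivial
      apply hM.ne_top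
      rw [Ideal.eq_top_iff_one]
      have := M.sub_mem (hIM hrI) hr1
      simpa using this
    have : Subsingleton Q := Module.annihilator_eq_top_iff.mp hI
    exact Submodule.Quotient.subsingleton_iff.mp this
  have hl : ∀ i, ∃ l, g l = Pi.single i 1 := fun i => LinearMap.range_eq_top.mp hsurj _
  choose l hl using hl
  refine ⟨LinearMap.pi l, fun j => ?_⟩
  ext i
  rw [LinearMap.pi_apply, ← hg, hl]
  simp [Pi.single_apply, eq_comm]

lemma aux_decomposition {R A : Type*} [CommRing R] [CommRing A] [Algebra R A] {m n : ℕ}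
    [Module.Projective A (KaehlerDifferential R A)]
    {W : Fin m → A} (hW : IsResidualVariable R A n m W) :
    Nonempty ((KaehlerDifferential R A) ≃ₗ[A]
        ((KaehlerDifferential ↥(Algebra.adjoin R (Set.range W)) A) × (Fin m → A))) := by
  classical
  obtain ⟨r, hr⟩ := aux_exists_retraction hW
  let B := Algebra.adjoin R (Set.range W)
  let π : KaehlerDifferential R A →ₗ[A] KaehlerDifferential B A :=
    KaehlerDifferential.map R B A A
  have hπ : Function.Surjective π := KaehlerDifferential.map_surjective R B A
  let f : (Fin m → A) →ₗ[A] KaehlerDifferential R A :=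
    Fintype.linearCombination A (fun j => KaehlerDifferential.D R A (W j))
  have hrf : ∀ y, r (f y) = y := by
    intro y
    ext i
    simp [f, Fintype.linearCombination_apply, hr, Pi.single_apply]
  have hDB : ∀ b (hb : b ∈ Algebra.adjoin R (Set.range W)),
      KaehlerDifferential.D R A b ∈ LinearMap.range f := by
    intro b hb
    induction hb using Algebra.adjoin_induction with
    | mem x hx =>
      obtain ⟨j, rfl⟩ := hx
      exact ⟨Pi.single j 1, by simp [f, Fintype.linearCombination_apply_single]⟩
    | algebraMap r => simp
    | add x y _ _ hx hy => rw [map_add]; exact add_mem hx hy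
    | mul x y _ _ hx hy =>
      rw [Derivation.leibniz]
      exact add_mem (Submodule.smul_mem _ _ hy) (Submodule.smul_mem _ _ hx)
  have hex : ∀ x, π x = 0 → x ∈ LinearMap.range f := by
    intro x hx
    obtain ⟨t, rfl⟩ := (KaehlerDifferential.exact_mapBaseChange_map R B A x).mp hx
    clear hx
    induction t using TensorProduct.induction_on with
    | zero => simp
    | add x y hx hy =>
      rw [map_add]
      exact add_mem hx hy
    | tmul a ω =>
      rw [KaehlerDifferential.mapBaseChange_tmul]
      apply Submodule.smul_mem
      have : ω ∈ Submodule.span B (Set.range (KaehlerDifferential.D R B)) := by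
        rw [KaehlerDifferential.span_range_derivation]; trivial
      induction this using Submodule.span_induction with
      | mem x hx =>
        obtain ⟨b, rfl⟩ := hx
        rw [KaehlerDifferential.map_D]
        exact hDB _ b.2
      | zero => simp
      | add x y _ _ hx hy =>
        rw [map_add]
        exact add_mem hx hy
      | smul b x _ hx =>
        rw [map_smul, ← algebraMap_smul A b]
        exact Submodule.smul_mem _ _ hx
  have hfπ : ∀ y, π (f y) = 0 := by
    intro y
    simp only [f, Fintype.linearCombination_apply, map_sum, map_smul, π,
      KaehlerDifferential.map_D]
    refine Finset.sum_eq_zero fun j _ => ?_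
    have : KaehlerDifferential.D B A (algebraMap A A (W j)) = 0 :=
      (KaehlerDifferential.D B A).map_algebraMap
        (⟨W j, Algebra.subset_adjoin ⟨j, rfl⟩⟩ : B)
    rw [this, smul_zero]
  refine ⟨LinearEquiv.ofBijective (π.prod r) ⟨?_, ?_⟩⟩
  · rw [← LinearMap.ker_eq_bot, LinearMap.ker_eq_bot']
    intro x hx
    replace hx : π x = 0 ∧ r x = 0 := Prod.mk.inj hx
    obtain ⟨y, rfl⟩ := hex x hx.1
    rw [hrf] at hx
    rw [hx.2, map_zero]
  · rintro ⟨u, v⟩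
    obtain ⟨x, rfl⟩ := hπ u
    refine ⟨x - f (r x) + f v, ?_⟩
    simp [hrf, hfπ]

/-- Let `R` be a Noetherian ring, `A` an `𝔸^{m+k}`-fibration over `R` and `W` an
`m`-tuple residual variable of `A` over `R`.  Then `Ω_R(A) ≅ Ω_{R[W]}(A) ⊕ Aᵐ` as
`A`-modules; in particular `Ω_R(A)` is stably free over `A` if and only if
`Ω_{R[W]}(A)` is stably free over `A`. -/
theorem kaehler_decomposition_of_residualVariable
    (R A : Type*) [CommRing R] [IsNoetherianRing R] [CommRing A] [Algebra R A]
    (m k : ℕ) (hA : IsAffineFibration R A (m + k))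
    (W : Fin m → A) (hW : IsResidualVariable R A (m + k) m W) :
    Nonempty ((KaehlerDifferential R A) ≃ₗ[A]
        ((KaehlerDifferential ↥(Algebra.adjoin R (Set.range W)) A) × (Fin m → A))) ∧
      (IsStablyFree A (KaehlerDifferential R A) ↔
        IsStablyFree A (KaehlerDifferential ↥(Algebra.adjoin R (Set.range W)) A)) := by
  obtain ⟨hft, hflat, hfib⟩ := hA
  have : Algebra.FinitePresentation R A := Algebra.FinitePresentation.of_finiteType.mp hft
  have : Algebra.Smooth R A := by
    apply Algebra.Smooth.of_formallySmooth_fiber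
    intro P hP
    obtain ⟨e⟩ := hfib P hP
    exact Algebra.FormallySmooth.of_equiv e.symm
  obtain ⟨e⟩ := aux_decomposition hW
  have eadd : ∀ s t : ℕ, Nonempty (((Fin s → A) × (Fin t → A)) ≃ₗ[A] (Fin (s + t) → A)) :=
    fun s t => ⟨(LinearEquiv.sumArrowLequivProdArrow (Fin s) (Fin t) A A).symm ≪≫ₗ
      LinearEquiv.funCongrLeft A A finSumFinEquiv.symm⟩
  refine ⟨⟨e⟩, ?_, ?_⟩
  · rintro ⟨s, t, ⟨h⟩⟩
    obtain ⟨a⟩ := eadd m s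
    exact ⟨m + s, t, ⟨LinearEquiv.prodCongr (LinearEquiv.refl A _) a.symm ≪≫ₗ
      (LinearEquiv.prodAssoc A _ _ _).symm ≪≫ₗ
      LinearEquiv.prodCongr e.symm (LinearEquiv.refl A _) ≪≫ₗ h⟩⟩
  · rintro ⟨s, t, ⟨h⟩⟩
    obtain ⟨a⟩ := eadd t m
    exact ⟨s, t + m, ⟨LinearEquiv.prodCongr e (LinearEquiv.refl A _) ≪≫ₗ
      LinearEquiv.prodAssoc A _ _ _ ≪≫ₗ
      LinearEquiv.prodCongr (LinearEquiv.refl A _) (LinearEquiv.prodComm A _ _) ≪≫ₗ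
      (LinearEquiv.prodAssoc A _ _ _).symm ≪≫ₗ
      LinearEquiv.prodCongr h (LinearEquiv.refl A _) ≪≫ₗ a⟩⟩
end
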